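/- Let 0 < α < 1 and β > 0 with 1/2 < α + β < 1, and let T be the corresponding Liverani–Saussol–Vaienti map with absolutely continuous invariant probability measure m. Let f(x) = x^{−β} + c₀, where c₀ = −∫ x^{−β} dm(x) so that ∫ f dm = 0 (the function x ↦ x^{−β} is m-integrable since α + β < 1). Then there exists c > 0 such that S_n f/n^{α+β} converges in distribution under m to the stable law X_{1/(α+β), c, 1}. -/

import Mathlib

/-!
The proof induces the map on `(1/2,1]`. An orbit started in `(xs (n + 1), xs n]`, where `xs n` is
the `n`-th preimage of `1` under the left branch, enters `(1/2,1]` after `n` steps, and the right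
branch then maps it onto `(0,1]`. The resulting map `J` of `(0,1]` has countably many full branches
with inverses `Vb n`, and the estimate `xs n = O(n ^ (-1/α))` yields bounded distortion. Hence its
transfer operator contracts the cone of log-Lipschitz functions (`FullBranch.cone_renew`), and an
elementary coupling argument gives a spectral gap on Lipschitz functions
(`FullBranch.exists_contract`). A perturbation argument, valid for observables `F` that are
Lipschitz on each branch with summable constants, shows that the characteristic function of the
`N`-th Birkhoff sum of `F` over `J` at a small frequency `s` is `λ(s) ^ N + O(|s| + N s²)`, where
`λ(s)` is the characteristic function of `F` itself under the `J`-invariant probability measure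
(`FullBranch.perturb`). The density of that measure is half the density `h` on `(1/2,1]`, seen
through the right branch; being a fixed point of the transfer operator it is log-Lipschitz
(`FullBranch.invariant_cone`), so it is positive at the endpoint corresponding to `1/2`.

The passage from `J` back to the original map rests on Kac's formula (`Induced.kac`). Up to `o(1)`,
the characteristic function of `S_n f / n ^ (α + β)` is unchanged when the orbit is started at the
beginning of its current excursion (`RenewalSys.start`) and stopped after about `n M` excursions,
where `M` is the mass of the induced measure (`RenewalSys.fixed_time`). The second step holds because the
return time has a moment of some order `q > 1 / (α + β)`, so that arrival times concentrate at
scale `o(n ^ (α + β))`; this uses `α < α + β`. What remains is `λ(t / n ^ (α + β)) ^ (n M)`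
(`RenewalSys.excursion`), with `F` the sum of `f` over one excursion.

Summing `x ^ (-β)` along the excursion started at `y` gives
`F y = K y ^ (-(α + β)) + O(y ^ (-max α β))` with `K = 1 / (2 ^ α (α + β))` (`LSV.ind_asymp`). Since
`F` has mean zero, rescaling `y` by `n` gives the limit of `n (λ(t / n ^ (α + β)) - 1)` as a
compensated oscillatory integral over the half-line (`LSV.tail_limit`). This integral is evaluated
through the Laplace transform of a power and analytic continuation (`LSV.integral_ee_scaled`) and
is the exponent of the totally skewed stable law of index `1 / (α + β)`.
-/

open MeasureTheory Filter Topology Real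

/-- The Liverani–Saussol–Vaienti map `T(x) = x(1 + 2^α x^α)` on `[0, 1/2]`,
`T(x) = 2x - 1` on `(1/2, 1]`. -/
noncomputable def lsv (α : ℝ) (x : ℝ) : ℝ :=
  if x ≤ 1 / 2 then x * (1 + 2 ^ α * x ^ α) else 2 * x - 1

set_option linter.unusedSectionVars false

/-! ### Full-branch expanding systems and their transfer operators -/

section Abstract

variable {X : Type*} [MetricSpace X] [MeasurableSpace X] [BorelSpace X] [SecondCountableTopology X]

/-- The inverse branches `V n` of a full-branch uniformly expanding map of a space of diameter at
most one, together with the weights `w n` (the Jacobians of `V n` with respect to `ν`), which are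
log-Lipschitz with constant `K` uniformly in `n` and bounded by the summable sequence `wb`. The
field `dual` is the change of variables formula: the images of the `V n` partition the space up to
`ν`-null sets. -/
structure FullBranch (ν : Measure X) where
  V : ℕ → X → X
  w : ℕ → X → ℝ
  wb : ℕ → ℝ
  K : ℝ
  K_pos : 0 < K
  diam : ∀ x y : X, dist x y ≤ 1
  V_contr : ∀ n x y, dist (V n x) (V n y) ≤ dist x y / 2
  w_nonneg : ∀ n x, 0 ≤ w n x
  w_le : ∀ n x, w n x ≤ wb n
  w_dist : ∀ n x y, w n x ≤ exp (K * dist x y) * w n y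
  wb_summable : Summable wb
  dual : ∀ ψ : X → ENNReal, Measurable ψ →
    ∫⁻ x, ψ x ∂ν = ∑' n, ∫⁻ x, ENNReal.ofReal (w n x) * ψ (V n x) ∂ν

/-- `g` is bounded by `B` and Lipschitz with constant `B`. -/
def LipB {E : Type*} [NormedAddCommGroup E] (B : ℝ) (g : X → E) : Prop :=
  (∀ x, ‖g x‖ ≤ B) ∧ ∀ x y, ‖g x - g y‖ ≤ B * dist x y

lemma LipB.continuous {E : Type*} [NormedAddCommGroup E] {B : ℝ} {g : X → E} (h : LipB B g) :
    Continuous g := by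
  refine (LipschitzWith.of_dist_le_mul (K := B.toNNReal) fun x y => ?_).continuous
  rw [dist_eq_norm]
  exact (h.2 x y).trans (mul_le_mul_of_nonneg_right (Real.le_coe_toNNReal B) dist_nonneg)

lemma LipB.mono {E : Type*} [NormedAddCommGroup E] {B B' : ℝ} {g : X → E} (h : LipB B g)
    (hB : B ≤ B') : LipB B' g :=
  ⟨fun x => (h.1 x).trans hB, fun x y => (h.2 x y).trans (by gcongr)⟩

lemma LipB.add {E : Type*} [NormedAddCommGroup E] {B B' : ℝ} {g g' : X → E} (h : LipB B g)
    (h' : LipB B' g') : LipB (B + B') (fun x => g x + g' x) := by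
  refine ⟨fun x => (norm_add_le _ _).trans (add_le_add (h.1 x) (h'.1 x)), fun x y => ?_⟩
  have : g x + g' x - (g y + g' y) = (g x - g y) + (g' x - g' y) := by abel
  rw [this, add_mul]
  exact (norm_add_le _ _).trans (add_le_add (h.2 x y) (h'.2 x y))

lemma LipB.sub {E : Type*} [NormedAddCommGroup E] {B B' : ℝ} {g g' : X → E} (h : LipB B g)
    (h' : LipB B' g') : LipB (B + B') (fun x => g x - g' x) := by
  refine ⟨fun x => (norm_sub_le _ _).trans (add_le_add (h.1 x) (h'.1 x)), fun x y => ?_⟩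
  have : g x - g' x - (g y - g' y) = (g x - g y) - (g' x - g' y) := by abel
  rw [this, add_mul]
  exact (norm_sub_le _ _).trans (add_le_add (h.2 x y) (h'.2 x y))

lemma LipB.const_mul {B : ℝ} {g : X → ℂ} (h : LipB B g) (c : ℂ) :
    LipB (‖c‖ * B) (fun x => c * g x) := by
  refine ⟨fun x => ?_, fun x y => ?_⟩
  · rw [norm_mul]; gcongr; exact h.1 x
  · rw [← mul_sub, norm_mul, mul_assoc]; gcongr; exact h.2 x y

lemma exp_sub_one_le_mul_exp (z : ℝ) : exp z - 1 ≤ z * exp z := by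
  have h := Real.one_sub_le_exp_neg z
  have h2 : exp (-z) * exp z = 1 := by rw [← exp_add]; simp
  nlinarith [exp_pos z]

namespace FullBranch

variable {ν : Measure X} (S : FullBranch ν)

/-- The transfer operator. -/
noncomputable def P {E : Type*} [NormedAddCommGroup E] [NormedSpace ℝ E] (g : X → E) (x : X) : E :=
  ∑' n, S.w n x • g (S.V n x)

lemma wb_nonneg [Nonempty X] (n : ℕ) : 0 ≤ S.wb n :=
  (S.w_nonneg n (Classical.arbitrary X)).trans (S.w_le n _)

lemma V_cont (n : ℕ) : Continuous (S.V n) := by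
  refine (LipschitzWith.of_dist_le_mul (K := 1) fun x y => ?_).continuous
  have := S.V_contr n x y
  have h0 : 0 ≤ dist x y := dist_nonneg
  simp only [NNReal.coe_one, one_mul]; linarith

lemma w_lip (n : ℕ) (x y : X) : |S.w n x - S.w n y| ≤ S.K * exp S.K * S.wb n * dist x y := by
  have key : ∀ x y : X, S.w n x - S.w n y ≤ S.K * exp S.K * S.wb n * dist x y := by
    intro x y
    have h1 := S.w_dist n x y
    have h2 := exp_sub_one_le_mul_exp (S.K * dist x y)
    have hK := S.K_pos
    have hd : 0 ≤ dist x y := dist_nonneg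
    have h3 : exp (S.K * dist x y) ≤ exp S.K := by
      apply exp_le_exp.2; nlinarith [S.diam x y]
    have hw := S.w_nonneg n y
    calc S.w n x - S.w n y ≤ (exp (S.K * dist x y) - 1) * S.w n y := by linarith
      _ ≤ (S.K * dist x y * exp S.K) * S.wb n := by
          have : exp (S.K * dist x y) - 1 ≤ S.K * dist x y * exp S.K :=
            h2.trans (by gcongr)
          have h0 : 0 ≤ S.K * dist x y * exp S.K := by positivity
          exact mul_le_mul this (S.w_le n y) hw h0
      _ = _ := by ring
  rw [abs_le]
  constructor
  · have := key y x; rw [dist_comm] at this; linarith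
  · exact key x y

lemma w_cont (n : ℕ) : Continuous (S.w n) := by
  rw [Metric.continuous_iff]
  intro b ε hε
  set C := |S.K * exp S.K * S.wb n| + 1
  have hC : 0 < C := by positivity
  refine ⟨ε / C, by positivity, fun a ha => ?_⟩
  rw [Real.dist_eq]
  calc _ ≤ _ := S.w_lip n a b
    _ ≤ C * dist a b := by
        gcongr
        exact (le_abs_self _).trans (by simp [C])
    _ < ε := by rwa [lt_div_iff₀' hC] at ha

section vec
variable {E : Type*} [NormedAddCommGroup E] [NormedSpace ℝ E] [CompleteSpace E]

lemma norm_term_le {b : X → E} {bn : ℕ → ℝ} (hb : ∀ n x, ‖b (S.V n x)‖ ≤ bn n) (n : ℕ) (x : X) :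
    ‖S.w n x • b (S.V n x)‖ ≤ S.wb n * bn n := by
  rw [norm_smul, Real.norm_of_nonneg (S.w_nonneg n x)]
  exact mul_le_mul (S.w_le n x) (hb n x) (norm_nonneg _) ((S.w_nonneg n x).trans (S.w_le n x))

lemma summable_term {b : X → E} {bn : ℕ → ℝ} (hb : ∀ n x, ‖b (S.V n x)‖ ≤ bn n)
    (hs : Summable fun n => S.wb n * bn n) (x : X) :
    Summable fun n => S.w n x • b (S.V n x) :=
  Summable.of_norm_bounded hs (fun n => S.norm_term_le hb n x)

lemma summable_bdd {b : X → E} {B : ℝ} (hb : ∀ x, ‖b x‖ ≤ B) (x : X) :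
    Summable fun n => S.w n x • b (S.V n x) :=
  S.summable_term (bn := fun _ => B) (fun _ _ => hb _) (S.wb_summable.mul_right B) x

lemma measure_eq : ν = Measure.sum fun n =>
    (ν.withDensity (fun x => ENNReal.ofReal (S.w n x))).map (S.V n) := by
  refine Measure.ext_of_lintegral _ fun f hf => ?_
  rw [lintegral_sum_measure, S.dual f hf]
  congr 1; ext n
  rw [lintegral_map hf (S.V_cont n).measurable]
  exact (lintegral_withDensity_eq_lintegral_mul _ (S.w_cont n).measurable.ennreal_ofReal
      (hf.comp (S.V_cont n).measurable)).symm

lemma integrable_of_branch [IsProbabilityMeasure ν] [Nonempty X] {b : X → E}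
    (hbm : StronglyMeasurable b)
    {bn : ℕ → ℝ} (hb : ∀ n x, ‖b (S.V n x)‖ ≤ bn n)
    (hs : Summable fun n => S.wb n * bn n) : Integrable b ν := by
  refine ⟨hbm.aestronglyMeasurable, ?_⟩
  have hbn : ∀ n, 0 ≤ bn n := fun n => (norm_nonneg _).trans (hb n (Classical.arbitrary X))
  rw [HasFiniteIntegral, S.dual _ hbm.enorm]
  have : ∀ n, ∫⁻ x, ENNReal.ofReal (S.w n x) * ‖b (S.V n x)‖ₑ ∂ν
      ≤ ENNReal.ofReal (S.wb n * bn n) := by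
    intro n
    calc _ ≤ ∫⁻ x, ENNReal.ofReal (S.wb n * bn n) ∂ν := by
          refine lintegral_mono fun x => ?_
          rw [← ofReal_norm, ← ENNReal.ofReal_mul (S.w_nonneg n x)]
          exact ENNReal.ofReal_le_ofReal (mul_le_mul (S.w_le n x) (hb n x) (norm_nonneg _)
            (S.wb_nonneg n))
      _ = _ := by simp
  refine (ENNReal.tsum_le_tsum this).trans_lt ?_
  rw [← ENNReal.ofReal_tsum_of_nonneg (fun n => mul_nonneg (S.wb_nonneg n) (hbn n)) hs]
  exact ENNReal.ofReal_lt_top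

/-- The transfer operator preserves integrals, also for functions that are merely bounded on each
branch by constants summable against the weights. -/
lemma integral_P [IsProbabilityMeasure ν] [Nonempty X] {b : X → E} (hbm : StronglyMeasurable b)
    {bn : ℕ → ℝ} (hb : ∀ n x, ‖b (S.V n x)‖ ≤ bn n)
    (hs : Summable fun n => S.wb n * bn n) : ∫ x, S.P b x ∂ν = ∫ x, b x ∂ν := by
  have hintg := S.integrable_of_branch hbm hb hs
  have hm : ∀ n, StronglyMeasurable fun x => S.w n x • b (S.V n x) := fun n =>
    (S.w_cont n).stronglyMeasurable.smul (hbm.comp_measurable (S.V_cont n).measurable)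
  have hF : ∀ n, Integrable (fun x => S.w n x • b (S.V n x)) ν := fun n =>
    Integrable.of_bound (hm n).aestronglyMeasurable (S.wb n * bn n)
      (ae_of_all _ fun x => S.norm_term_le hb n x)
  have h1 := hasSum_integral_of_summable_integral_norm hF (by
    refine Summable.of_nonneg_of_le (fun n => integral_nonneg fun x => norm_nonneg _)
      (fun n => ?_) hs
    calc _ ≤ ∫ x, S.wb n * bn n ∂ν :=
          integral_mono (hF n).norm (integrable_const _) fun x => S.norm_term_le hb n x
      _ = _ := by simp)
  have h2 : HasSum (fun n => ∫ x, S.w n x • b (S.V n x) ∂ν) (∫ x, b x ∂ν) := by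
    have hintg' := hintg
    rw [S.measure_eq] at hintg'
    have h3 := hasSum_integral_measure hintg'
    rw [← S.measure_eq] at h3
    convert h3 using 2 with n
    rw [integral_map (S.V_cont n).measurable.aemeasurable hbm.aestronglyMeasurable]
    have := integral_withDensity_eq_integral_smul (μ := ν) (f := fun x => (S.w n x).toNNReal)
      (S.w_cont n).measurable.real_toNNReal (fun x => b (S.V n x))
    refine Eq.trans ?_ this.symm
    refine integral_congr_ae (ae_of_all _ fun x => ?_)
    simp only [NNReal.smul_def, Real.coe_toNNReal _ (S.w_nonneg n x)]
  exact h1.unique h2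

end vec

/-- Branchwise Lipschitz multipliers. -/
lemma P_mul {b g : X → ℂ} {bn : ℕ → ℝ} (hb : ∀ n x, ‖b (S.V n x)‖ ≤ bn n)
    (hb' : ∀ n x y, ‖b (S.V n x) - b (S.V n y)‖ ≤ bn n * dist x y)
    (hs : Summable fun n => S.wb n * bn n) {B : ℝ} (hg : LipB B g) :
    LipB ((S.K * exp S.K + 2) * (∑' n, S.wb n * bn n) * B) (S.P fun x => b x * g x) := by
  rcases isEmpty_or_nonempty X with hX | hX
  · exact ⟨fun x => hX.elim x, fun x => hX.elim x⟩
  have hK := S.K_pos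
  have hbn : ∀ n, 0 ≤ bn n := fun n => (norm_nonneg _).trans (hb n (Classical.arbitrary X))
  have hB : 0 ≤ B := (norm_nonneg _).trans (hg.1 (Classical.arbitrary X))
  have hwb := S.wb_nonneg
  have hbg : ∀ n x, ‖b (S.V n x) * g (S.V n x)‖ ≤ bn n * B := fun n x => by
    rw [norm_mul]; exact mul_le_mul (hb n x) (hg.1 _) (norm_nonneg _) (hbn n)
  have hs1 : Summable fun n => S.wb n * (bn n * B) := by
    simpa only [mul_assoc] using hs.mul_right B
  have hs2 : HasSum (fun n => S.wb n * bn n * B) ((∑' n, S.wb n * bn n) * B) := hs.hasSum.mul_right B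
  have hS0 : 0 ≤ ∑' n, S.wb n * bn n := tsum_nonneg fun n => mul_nonneg (hwb n) (hbn n)
  have hexp : 0 < S.K * exp S.K := by positivity
  refine ⟨fun x => ?_, fun x y => ?_⟩
  · calc _ ≤ (∑' n, S.wb n * bn n) * B := by
          refine tsum_of_norm_bounded hs2 fun n => ?_
          have := S.norm_term_le (b := fun x => b x * g x) hbg n x
          linarith [mul_assoc (S.wb n) (bn n) B]
      _ ≤ _ := by
          rw [mul_assoc]
          exact le_mul_of_one_le_left (by positivity) (by linarith)
  · have hsx := S.summable_term (b := fun x => b x * g x) hbg hs1 x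
    have hsy := S.summable_term (b := fun x => b x * g x) hbg hs1 y
    rw [P, P, ← hsx.tsum_sub hsy]
    have hs3 := hs2.mul_left (S.K * exp S.K + 2)
    have hs4 := hs3.mul_right (dist x y)
    have hd : 0 ≤ dist x y := dist_nonneg
    have : (S.K * exp S.K + 2) * (∑' n, S.wb n * bn n) * B * dist x y
      = (S.K * exp S.K + 2) * ((∑' n, S.wb n * bn n) * B) * dist x y := by ring
    rw [this]
    refine tsum_of_norm_bounded hs4 fun n => ?_
    set bx := b (S.V n x); set by' := b (S.V n y); set gx := g (S.V n x); set gy := g (S.V n y)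
    have e : S.w n x • (bx * gx) - S.w n y • (by' * gy)
      = (S.w n x - S.w n y) • (bx * gx) + S.w n y • ((bx - by') * gx)
        + S.w n y • (by' * (gx - gy)) := by
      simp only [Complex.real_smul]; push_cast; ring
    rw [e]
    have t1 : ‖(S.w n x - S.w n y) • (bx * gx)‖
        ≤ (S.K * exp S.K * S.wb n * dist x y) * (bn n * B) := by
      rw [norm_smul, Real.norm_eq_abs]
      exact mul_le_mul (S.w_lip n x y) (hbg n x) (norm_nonneg _)
        (by have := hwb n; positivity)
    have t2 : ‖S.w n y • ((bx - by') * gx)‖ ≤ S.wb n * (bn n * dist x y * B) := by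
      rw [norm_smul, Real.norm_of_nonneg (S.w_nonneg n y), norm_mul]
      have := hbn n
      exact mul_le_mul (S.w_le n y) (mul_le_mul (hb' n x y) (hg.1 _) (norm_nonneg _)
        (by positivity)) (by positivity) (hwb n)
    have t3 : ‖S.w n y • (by' * (gx - gy))‖ ≤ S.wb n * (bn n * (B * dist x y)) := by
      rw [norm_smul, Real.norm_of_nonneg (S.w_nonneg n y), norm_mul]
      have hh : ‖gx - gy‖ ≤ B * dist x y := (hg.2 _ _).trans (by
        gcongr; linarith [S.V_contr n x y])
      exact mul_le_mul (S.w_le n y) (mul_le_mul (hb n y) hh (norm_nonneg _) (hbn n))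
        (by positivity) (hwb n)
    calc _ ≤ _ := norm_add₃_le
      _ ≤ _ := add_le_add (add_le_add t1 t2) t3
      _ = _ := by ring

end FullBranch
end Abstract

/-! ### Contraction of log-Lipschitz cones -/

section Cone

variable {X : Type*} [MetricSpace X] [MeasurableSpace X] [BorelSpace X] [SecondCountableTopology X]

/-- The cone of non-negative functions whose logarithm is Lipschitz with constant `R`. -/
def LogCone (R : ℝ) (g : X → ℝ) : Prop :=
  (∀ x, 0 ≤ g x) ∧ ∀ x y, g x ≤ exp (R * dist x y) * g y

namespace FullBranch

variable {ν : Measure X} [IsProbabilityMeasure ν] [Nonempty X] (S : FullBranch ν)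

lemma cone_bdd (S : FullBranch ν) {R : ℝ} (hR : 0 ≤ R) {g : X → ℝ} (hg : LogCone R g) :
    ∀ x y, g x ≤ exp R * g y := by
  intro x y
  refine (hg.2 x y).trans (mul_le_mul_of_nonneg_right ?_ (hg.1 y))
  apply exp_le_exp.2; nlinarith [S.diam x y]

lemma cone_lip (S : FullBranch ν) {R M : ℝ} (hR : 0 ≤ R) {g : X → ℝ} (hg : LogCone R g) (hM : ∀ x, g x ≤ M) :
    LipB ((1 + R * exp R) * M) g := by
  have hM0 : 0 ≤ M := (hg.1 (Classical.arbitrary X)).trans (hM _)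
  refine ⟨fun x => ?_, ?_⟩
  · rw [Real.norm_of_nonneg (hg.1 x)]
    refine (hM x).trans (le_mul_of_one_le_left hM0 ?_)
    have : 0 ≤ R * exp R := by positivity
    linarith
  have key : ∀ x y, g x - g y ≤ (1 + R * exp R) * M * dist x y := by
    intro x y
    have hd : 0 ≤ dist x y := dist_nonneg
    have h1 := hg.2 x y
    have h2 := exp_sub_one_le_mul_exp (R * dist x y)
    have h3 : exp (R * dist x y) ≤ exp R := by
      apply exp_le_exp.2; nlinarith [S.diam x y]
    calc g x - g y ≤ (exp (R * dist x y) - 1) * g y := by linarith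
      _ ≤ (R * dist x y * exp R) * M := by
          have : exp (R * dist x y) - 1 ≤ R * dist x y * exp R := h2.trans (by gcongr)
          exact mul_le_mul this (hM y) (hg.1 y) (by positivity)
      _ ≤ _ := by nlinarith [mul_nonneg hM0 hd]
  intro x y
  rw [Real.norm_eq_abs, abs_le]
  constructor
  · have := key y x; rw [dist_comm] at this; linarith
  · exact key x y

lemma cone_integrable (S : FullBranch ν) {R : ℝ} (hR : 0 ≤ R) {g : X → ℝ} (hg : LogCone R g) :
    Continuous g ∧ Integrable g ν ∧ ∃ M, ∀ x, ‖g x‖ ≤ M := by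
  have hb := S.cone_bdd hR hg
  set x0 : X := Classical.arbitrary X
  have hl := S.cone_lip hR hg (fun x => hb x x0)
  exact ⟨hl.continuous, Integrable.of_bound hl.continuous.aestronglyMeasurable _
    (ae_of_all _ hl.1), _, hl.1⟩

lemma cone_le_integral (S : FullBranch ν) {R : ℝ} (hR : 0 ≤ R) {g : X → ℝ} (hg : LogCone R g) (x : X) :
    g x ≤ exp R * ∫ y, g y ∂ν ∧ ∫ y, g y ∂ν ≤ exp R * g x := by
  have hb := S.cone_bdd hR hg
  obtain ⟨-, hi, -⟩ := S.cone_integrable hR hg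
  constructor
  · rw [← integral_const_mul]
    calc g x = ∫ y, g x ∂ν := by simp
      _ ≤ _ := integral_mono (integrable_const _) (hi.const_mul _) fun y => hb x y
  · calc _ ≤ ∫ y, exp R * g x ∂ν :=
          integral_mono hi (integrable_const _) fun y => hb y x
      _ = _ := by simp

/-- The contraction of the branches halves the log-Lipschitz constant, and the distortion of the
weights adds `K` to it. -/
lemma cone_P {R : ℝ} (hR : 0 ≤ R) {g : X → ℝ} (hg : LogCone R g) :
    LogCone (R / 2 + S.K) (S.P g) := by
  obtain ⟨-, -, M, hM⟩ := S.cone_integrable hR hg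
  refine ⟨fun x => tsum_nonneg fun n => mul_nonneg (S.w_nonneg n x) (hg.1 _), fun x y => ?_⟩
  rw [P, P, ← tsum_mul_left]
  refine Summable.tsum_le_tsum (fun n => ?_) (S.summable_bdd hM x)
    ((S.summable_bdd hM y).mul_left _)
  simp only [smul_eq_mul]
  have h1 : g (S.V n x) ≤ exp (R / 2 * dist x y) * g (S.V n y) := by
    refine (hg.2 _ _).trans (mul_le_mul_of_nonneg_right ?_ (hg.1 _))
    apply exp_le_exp.2; nlinarith [S.V_contr n x y]
  calc S.w n x * g (S.V n x)
      ≤ (exp (S.K * dist x y) * S.w n y) * (exp (R / 2 * dist x y) * g (S.V n y)) :=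
        mul_le_mul (S.w_dist n x y) h1 (hg.1 _) (mul_nonneg (exp_pos _).le (S.w_nonneg n y))
    _ = _ := by rw [add_mul, exp_add]; ring

/-- The log-Lipschitz exponent of the invariant cone. -/
noncomputable def R : ℝ := 4 * S.K

/-- The fraction of mass that is renewed at each step. -/
noncomputable def δ : ℝ := exp (-S.R) / 4

lemma R_pos : 0 < S.R := by have := S.K_pos; unfold R; linarith
lemma δ_pos : 0 < S.δ := by unfold δ; positivity
lemma δ_lt : S.δ < 1 := by
  have : exp (-S.R) ≤ 1 := by rw [exp_le_one_iff]; linarith [S.R_pos]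
  unfold δ; linarith

/-- Since `P` maps the cone strictly into itself, a constant carrying a fixed fraction of the mass
can be subtracted from `P g` without leaving the cone. -/
lemma cone_renew {g : X → ℝ} (hg : LogCone S.R g) :
    LogCone S.R (fun x => S.P g x - S.δ * ∫ y, g y ∂ν) := by
  have hR := S.R_pos
  have hP : LogCone (3 * S.R / 4) (S.P g) := by
    have := S.cone_P hR.le hg
    convert this using 1
    unfold R; ring
  obtain ⟨hgc, -, M, hM⟩ := S.cone_integrable hR.le hg
  have hintg : ∫ x, S.P g x ∂ν = ∫ x, g x ∂ν :=
    S.integral_P hgc.stronglyMeasurable (bn := fun _ => M) (fun _ _ => hM _)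
      (S.wb_summable.mul_right M)
  have hlow : ∀ x, S.δ * ∫ y, g y ∂ν ≤ S.P g x / 4 := by
    intro x
    have h1 := (S.cone_le_integral (by positivity) hP x).2
    rw [hintg] at h1
    have h2 : exp (3 * S.R / 4) ≤ exp S.R := exp_le_exp.2 (by linarith)
    have h3 : ∫ y, g y ∂ν ≤ exp S.R * S.P g x :=
      h1.trans (mul_le_mul_of_nonneg_right h2 (hP.1 x))
    have h4 : exp (-S.R) * exp S.R = 1 := by rw [← exp_add]; simp
    calc S.δ * ∫ y, g y ∂ν ≤ S.δ * (exp S.R * S.P g x) := by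
          gcongr; exact S.δ_pos.le
      _ = (exp (-S.R) * exp S.R) * S.P g x / 4 := by unfold δ; ring
      _ = _ := by rw [h4]; ring
  refine ⟨fun x => by linarith [hlow x, hP.1 x], fun x y => ?_⟩
  set c := S.δ * ∫ y, g y ∂ν
  have hd : 0 ≤ dist x y := dist_nonneg
  set q := exp (S.R * dist x y / 4) with hq
  have hq1 : 1 ≤ q := by rw [hq]; exact one_le_exp (by positivity)
  have e1 : exp (S.R * dist x y) = q ^ 4 := by rw [hq, ← exp_nat_mul]; congr 1; push_cast; ring
  have e2 : exp (3 * S.R / 4 * dist x y) = q ^ 3 := by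
    rw [hq, ← exp_nat_mul]; congr 1; push_cast; ring
  have h1 := hP.2 x y
  rw [e2] at h1
  rw [e1]
  have hb := hlow y
  have hpoly : 0 ≤ 3 * q ^ 4 - 4 * q ^ 3 + 1 := by
    have : 3 * q ^ 4 - 4 * q ^ 3 + 1 = (q - 1) ^ 2 * (3 * q ^ 2 + 2 * q + 1) := by ring
    rw [this]; positivity
  have hq4 : 1 ≤ q ^ 4 := one_le_pow₀ hq1
  have hPy := hP.1 y
  -- `q⁴ P(y) - q³ P(y) ≥ (q⁴ - 1) P(y) / 4 ≥ (q⁴ - 1) c`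
  have h5 : (q ^ 4 - 1) * c ≤ (q ^ 4 - 1) * (S.P g y / 4) :=
    mul_le_mul_of_nonneg_left hb (by linarith)
  nlinarith [mul_nonneg hpoly hPy]

lemma integral_P_bdd {E : Type*} [NormedAddCommGroup E] [NormedSpace ℝ E] [CompleteSpace E]
    {g : X → E} (hg : StronglyMeasurable g) {M : ℝ} (hM : ∀ x, ‖g x‖ ≤ M) :
    ∫ x, S.P g x ∂ν = ∫ x, g x ∂ν :=
  S.integral_P hg (bn := fun _ => M) (fun _ _ => hM _) (S.wb_summable.mul_right M)

lemma P_sub {E : Type*} [NormedAddCommGroup E] [NormedSpace ℝ E] [CompleteSpace E]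
    {g g' : X → E} {M M' : ℝ} (hM : ∀ x, ‖g x‖ ≤ M) (hM' : ∀ x, ‖g' x‖ ≤ M') :
    S.P (fun x => g x - g' x) = fun x => S.P g x - S.P g' x := by
  ext x
  simp only [P, smul_sub]
  exact (S.summable_bdd hM x).tsum_sub (S.summable_bdd hM' x)

lemma P_add {E : Type*} [NormedAddCommGroup E] [NormedSpace ℝ E] [CompleteSpace E]
    {g g' : X → E} {M M' : ℝ} (hM : ∀ x, ‖g x‖ ≤ M) (hM' : ∀ x, ‖g' x‖ ≤ M') :
    S.P (fun x => g x + g' x) = fun x => S.P g x + S.P g' x := by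
  ext x
  simp only [P, smul_add]
  exact (S.summable_bdd hM x).tsum_add (S.summable_bdd hM' x)

lemma P_const_mul (c : ℂ) (g : X → ℂ) : S.P (fun x => c * g x) = fun x => c * S.P g x := by
  ext x
  simp only [P, ← tsum_mul_left, Complex.real_smul]
  congr 1; ext n; ring

/-- Coupling: for two functions in the cone with equal mass, the same constants are subtracted from
both at each step, so their difference is carried by a mass that decays geometrically. -/
lemma cone_decomp {a b : X → ℝ} (ha : LogCone S.R a) (hb : LogCone S.R b)
    (hab : ∫ x, a x ∂ν = ∫ x, b x ∂ν) (k : ℕ) :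
    ∃ a' b' : X → ℝ, LogCone S.R a' ∧ LogCone S.R b' ∧
      ∫ x, a' x ∂ν = (1 - S.δ) ^ k * ∫ x, a x ∂ν ∧ ∫ x, b' x ∂ν = (1 - S.δ) ^ k * ∫ x, a x ∂ν ∧
      (S.P)^[k] (fun x => a x - b x) = fun x => a' x - b' x := by
  induction k with
  | zero => exact ⟨a, b, ha, hb, by simp, by simp [hab], rfl⟩
  | succ k ih =>
    obtain ⟨a', b', ha', hb', hia, hib, he⟩ := ih
    have hR := S.R_pos.le
    obtain ⟨hac, hai, Ma, hMa⟩ := S.cone_integrable hR ha'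
    obtain ⟨hbc, hbi, Mb, hMb⟩ := S.cone_integrable hR hb'
    have hRK : 0 ≤ S.R / 2 + S.K := by linarith [S.K_pos]
    obtain ⟨-, hPai, -⟩ := S.cone_integrable hRK (S.cone_P hR ha')
    obtain ⟨-, hPbi, -⟩ := S.cone_integrable hRK (S.cone_P hR hb')
    refine ⟨_, _, S.cone_renew ha', S.cone_renew hb', ?_, ?_, ?_⟩
    · rw [integral_sub hPai (integrable_const _), S.integral_P_bdd hac.stronglyMeasurable hMa]
      simp only [integral_const, probReal_univ, one_smul, hia]; ring
    · rw [integral_sub hPbi (integrable_const _), S.integral_P_bdd hbc.stronglyMeasurable hMb]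
      simp only [integral_const, probReal_univ, one_smul, hib]; ring
    · rw [Function.iterate_succ_apply', he, S.P_sub hMa hMb, hia, hib]
      ext x; ring

/-- Exponential contraction of the transfer operator on mean-zero Lipschitz functions. -/
lemma exists_contract_real : ∃ C : ℝ, 0 < C ∧ ∀ (B : ℝ) (q : X → ℝ), LipB B q →
    ∫ x, q x ∂ν = 0 → ∀ k : ℕ, LipB (C * (1 - S.δ) ^ k * B) ((S.P)^[k] q) := by
  have hR := S.R_pos
  refine ⟨2 * ((1 + S.R * exp S.R) * exp S.R * (1 + S.R⁻¹)), by positivity, ?_⟩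
  intro B q hq h0 k
  have hB : 0 ≤ B := (norm_nonneg _).trans (hq.1 (Classical.arbitrary X))
  set M := (1 + S.R⁻¹) * B
  have hM : 0 ≤ M := by positivity
  have hqi : Integrable q ν := Integrable.of_bound hq.continuous.aestronglyMeasurable B
    (ae_of_all _ hq.1)
  have hb : LogCone S.R (fun _ : X => M) := by
    refine ⟨fun _ => hM, fun x y => le_mul_of_one_le_left hM (one_le_exp ?_)⟩
    positivity
  have ha : LogCone S.R (fun x => q x + M) := by
    have hlow : ∀ x, S.R⁻¹ * B ≤ q x + M := by
      intro x
      have := neg_le_of_abs_le (hq.1 x)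
      simp only [M]; linarith
    refine ⟨fun x => le_trans (by positivity) (hlow x), fun x y => ?_⟩
    have h1 := (le_abs_self _).trans (hq.2 x y)
    have h2 := add_one_le_exp (S.R * dist x y)
    have hd : 0 ≤ dist x y := dist_nonneg
    have h3 : B ≤ S.R * (q y + M) := by
      have := mul_le_mul_of_nonneg_left (hlow y) hR.le
      rwa [← mul_assoc, mul_inv_cancel₀ hR.ne', one_mul] at this
    have h4 : 0 ≤ q y + M := le_trans (by positivity) (hlow y)
    calc q x + M ≤ q y + M + B * dist x y := by linarith
      _ ≤ q y + M + S.R * (q y + M) * dist x y := by gcongr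
      _ = (S.R * dist x y + 1) * (q y + M) := by ring
      _ ≤ _ := mul_le_mul_of_nonneg_right h2 h4
  have hia : ∫ x, (q x + M) ∂ν = M := by
    rw [integral_add hqi (integrable_const _), h0]; simp
  obtain ⟨a', b', ha', hb', hia', hib', he⟩ := S.cone_decomp ha hb (by rw [hia]; simp) k
  have e : (fun x => q x + M - M) = q := by ext x; ring
  rw [e] at he
  rw [hia] at hia' hib'
  rw [he]
  have l1 := S.cone_lip hR.le ha' (M := exp S.R * ((1 - S.δ) ^ k * M))
    (fun x => by rw [← hia']; exact (S.cone_le_integral hR.le ha' x).1)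
  have l2 := S.cone_lip hR.le hb' (M := exp S.R * ((1 - S.δ) ^ k * M))
    (fun x => by rw [← hib']; exact (S.cone_le_integral hR.le hb' x).1)
  refine (l1.sub l2).mono (le_of_eq ?_)
  simp only [M]; ring

lemma re_P {g : X → ℂ} {M : ℝ} (hM : ∀ x, ‖g x‖ ≤ M) (x : X) :
    (S.P g x).re = S.P (fun x => (g x).re) x ∧ (S.P g x).im = S.P (fun x => (g x).im) x := by
  constructor
  · simp only [P]; rw [Complex.re_tsum (S.summable_bdd hM x)]; simp
  · simp only [P]; rw [Complex.im_tsum (S.summable_bdd hM x)]; simp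

lemma P_norm_le {E : Type*} [NormedAddCommGroup E] [NormedSpace ℝ E] [CompleteSpace E]
    {g : X → E} {M : ℝ} (hM : ∀ x, ‖g x‖ ≤ M) (x : X) : ‖S.P g x‖ ≤ (∑' n, S.wb n) * M :=
  tsum_of_norm_bounded (S.wb_summable.hasSum.mul_right M)
    (fun n => S.norm_term_le (bn := fun _ => M) (fun _ _ => hM _) n x)

lemma iterate_bdd {E : Type*} [NormedAddCommGroup E] [NormedSpace ℝ E] [CompleteSpace E]
    {g : X → E} {M : ℝ} (hM : ∀ x, ‖g x‖ ≤ M) (k : ℕ) : ∃ M', ∀ x, ‖(S.P)^[k] g x‖ ≤ M' := by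
  induction k with
  | zero => exact ⟨M, hM⟩
  | succ k ih =>
    obtain ⟨M', h'⟩ := ih
    exact ⟨_, fun x => by rw [Function.iterate_succ_apply']; exact S.P_norm_le h' x⟩

lemma re_iterate {g : X → ℂ} {M : ℝ} (hM : ∀ x, ‖g x‖ ≤ M) (k : ℕ) :
    (fun x => ((S.P)^[k] g x).re) = (S.P)^[k] (fun x => (g x).re) ∧
    (fun x => ((S.P)^[k] g x).im) = (S.P)^[k] (fun x => (g x).im) := by
  induction k with
  | zero => exact ⟨rfl, rfl⟩
  | succ k ih =>
    obtain ⟨M', h'⟩ := S.iterate_bdd hM k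
    simp only [Function.iterate_succ_apply']
    rw [← ih.1, ← ih.2]
    exact ⟨funext fun x => (S.re_P h' x).1, funext fun x => (S.re_P h' x).2⟩

lemma exists_contract : ∃ C : ℝ, 0 < C ∧ ∀ (B : ℝ) (q : X → ℂ), LipB B q →
    ∫ x, q x ∂ν = 0 → ∀ k : ℕ, LipB (C * (1 - S.δ) ^ k * B) ((S.P)^[k] q) := by
  obtain ⟨C, hC, h⟩ := S.exists_contract_real
  refine ⟨2 * C, by positivity, fun B q hq h0 k => ?_⟩
  have hqi : Integrable q ν := Integrable.of_bound hq.continuous.aestronglyMeasurable B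
    (ae_of_all _ hq.1)
  have hre : LipB B (fun x => (q x).re) :=
    ⟨fun x => (Complex.abs_re_le_norm _).trans (hq.1 x), fun x y => by
      have := (Complex.abs_re_le_norm (q x - q y)).trans (hq.2 x y)
      simpa using this⟩
  have him : LipB B (fun x => (q x).im) :=
    ⟨fun x => (Complex.abs_im_le_norm _).trans (hq.1 x), fun x y => by
      have := (Complex.abs_im_le_norm (q x - q y)).trans (hq.2 x y)
      simpa using this⟩
  have h1 := h B _ hre (by
    have := integral_re hqi
    simp only [RCLike.re_to_complex] at this
    rw [this, h0]; simp) k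
  have h2 := h B _ him (by
    have := integral_im hqi
    simp only [RCLike.im_to_complex] at this
    rw [this, h0]; simp) k
  rw [← (S.re_iterate hq.1 k).1] at h1
  rw [← (S.re_iterate hq.1 k).2] at h2
  refine ⟨fun x => ?_, fun x y => ?_⟩
  · have := Complex.norm_le_abs_re_add_abs_im ((S.P)^[k] q x)
    have a1 := h1.1 x
    have a2 := h2.1 x
    rw [Real.norm_eq_abs] at a1 a2
    linarith
  · have := Complex.norm_le_abs_re_add_abs_im ((S.P)^[k] q x - (S.P)^[k] q y)
    have a1 := h1.2 x y
    have a2 := h2.2 x y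
    rw [Real.norm_eq_abs] at a1 a2
    rw [Complex.sub_re, Complex.sub_im] at this
    linarith

end FullBranch
end Cone

/-! ### Perturbed transfer operators -/

section Perturbation

variable {X : Type*} [MetricSpace X] [MeasurableSpace X] [BorelSpace X] [SecondCountableTopology X]

namespace FullBranch

variable {ν : Measure X} [IsProbabilityMeasure ν] [Nonempty X] (S : FullBranch ν)

/-- `q` decays like `D (1 - δ)^k` under the iterates of the transfer operator; the least such `D`
is a norm for which the transfer operator is a one-step contraction. -/
def Adapted (D : ℝ) (q : X → ℂ) : Prop := ∀ k : ℕ, LipB (D * (1 - S.δ) ^ k) ((S.P)^[k] q)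

lemma P_iterate_add {q q' : X → ℂ} {M M' : ℝ} (hM : ∀ x, ‖q x‖ ≤ M) (hM' : ∀ x, ‖q' x‖ ≤ M')
    (k : ℕ) : (S.P)^[k] (fun x => q x + q' x) = fun x => (S.P)^[k] q x + (S.P)^[k] q' x := by
  induction k with
  | zero => rfl
  | succ k ih =>
    obtain ⟨N, hN⟩ := S.iterate_bdd hM k
    obtain ⟨N', hN'⟩ := S.iterate_bdd hM' k
    simp only [Function.iterate_succ_apply']
    rw [ih, S.P_add hN hN']

variable {S}

lemma Adapted.lipB {D : ℝ} {q : X → ℂ} (h : S.Adapted D q) : LipB D q := by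
  simpa using h 0

lemma Adapted.step {D : ℝ} {q : X → ℂ} (h : S.Adapted D q) : S.Adapted ((1 - S.δ) * D) (S.P q) := by
  intro k
  have := h (k + 1)
  rw [Function.iterate_succ_apply] at this
  convert this using 1; ring

lemma Adapted.add {D D' : ℝ} {q q' : X → ℂ} (h : S.Adapted D q) (h' : S.Adapted D' q') :
    S.Adapted (D + D') (fun x => q x + q' x) := by
  intro k
  rw [S.P_iterate_add h.lipB.1 h'.lipB.1, add_mul]
  exact (h k).add (h' k)

variable (S)

lemma exists_adapted : ∃ C : ℝ, 0 < C ∧ ∀ (B : ℝ) (q : X → ℂ), LipB B q →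
    ∫ x, q x ∂ν = 0 → S.Adapted (C * B) q := by
  obtain ⟨C, hC, h⟩ := S.exists_contract
  exact ⟨C, hC, fun B q hq h0 k => (h B q hq h0 k).mono (le_of_eq (by ring))⟩

lemma P_ofReal (ρ : X → ℝ) : S.P (fun x => (ρ x : ℂ)) = fun x => ((S.P ρ x : ℝ) : ℂ) := by
  ext x
  simp only [P, Complex.ofReal_tsum]
  simp [Complex.real_smul]

lemma integral_comp_mul {J : X → X} (hJm : Measurable J)
    (hJ : ∀ᵐ x ∂ν, ∀ n, J (S.V n x) = x) {ψ : X → ℂ} (hψ : Measurable ψ) {M : ℝ}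
    (hM : ∀ x, ‖ψ x‖ ≤ M) {G : X → ℂ} (hG : Measurable G) {bn : ℕ → ℝ}
    (hb : ∀ n x, ‖G (S.V n x)‖ ≤ bn n) (hs : Summable fun n => S.wb n * bn n) :
    ∫ x, ψ (J x) * G x ∂ν = ∫ x, ψ x * S.P G x ∂ν := by
  have hM0 : 0 ≤ M := (norm_nonneg _).trans (hM (Classical.arbitrary X))
  rw [← S.integral_P (b := fun x => ψ (J x) * G x) (bn := fun n => M * bn n)
    ((hψ.comp hJm).mul hG).stronglyMeasurable
    (fun n x => by rw [norm_mul]; exact mul_le_mul (hM _) (hb n x) (norm_nonneg _) hM0)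
    (by simpa only [mul_left_comm] using hs.mul_left M)]
  refine integral_congr_ae ?_
  filter_upwards [hJ] with x hx
  simp only [P, hx, ← tsum_mul_left, Complex.real_smul]
  congr 1; ext n; ring

/-- The perturbed transfer operator `g ↦ P (e^{isF} g)`. -/
noncomputable def L (F : X → ℝ) (s : ℝ) (g : X → ℂ) : X → ℂ :=
  S.P fun x => Complex.exp (Complex.I * ((s * F x : ℝ) : ℂ)) * g x

lemma norm_exp_I (a : ℝ) : ‖Complex.exp (Complex.I * (a : ℂ))‖ = 1 := by
  rw [mul_comm]; exact Complex.norm_exp_ofReal_mul_I a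

lemma norm_exp_I_sub (a b : ℝ) :
    ‖Complex.exp (Complex.I * (a : ℂ)) - Complex.exp (Complex.I * (b : ℂ))‖ ≤ |a - b| := by
  have : Complex.exp (Complex.I * (a : ℂ)) - Complex.exp (Complex.I * (b : ℂ))
      = Complex.exp (Complex.I * (b : ℂ)) * (Complex.exp (Complex.I * ((a - b : ℝ) : ℂ)) - 1) := by
    rw [mul_sub, ← Complex.exp_add]; congr 2
    · push_cast; ring
    · ring
  rw [this, norm_mul, norm_exp_I, one_mul]
  exact Real.norm_exp_I_mul_ofReal_sub_one_le

/-- The iterates of the perturbed operator compute characteristic functions of Birkhoff sums. -/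
lemma L_iterate_integral {J : X → X} (hJm : Measurable J)
    (hJ : ∀ᵐ x ∂ν, ∀ n, J (S.V n x) = x) {F : X → ℝ} (hF : Measurable F) (s : ℝ)
    (hL : ∀ B g, LipB B g → ∃ B', LipB B' (S.L F s g)) (N : ℕ) :
    ∀ (B : ℝ) (g : X → ℂ), LipB B g →
    ∫ x, (S.L F s)^[N] g x ∂ν =
      ∫ x, Complex.exp (Complex.I * ((s * birkhoffSum J F N x : ℝ) : ℂ)) * g x ∂ν := by
  induction N with
  | zero => intro B g hg; simp
  | succ N ih =>
    intro B g hg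
    obtain ⟨B', hB'⟩ := hL B g hg
    rw [Function.iterate_succ_apply, ih B' _ hB']
    have hS : Measurable (birkhoffSum J F N) := by
      unfold birkhoffSum
      exact Finset.measurable_sum _ fun i _ => hF.comp (hJm.iterate i)
    have hexp : ∀ {u : X → ℝ}, Measurable u →
        Measurable fun x => Complex.exp (Complex.I * ((s * u x : ℝ) : ℂ)) := fun hu =>
      (Complex.measurable_ofReal.comp (hu.const_mul s)).const_mul _ |>.cexp
    rw [L, ← S.integral_comp_mul hJm hJ (hexp hS) (M := 1) (fun x => (norm_exp_I _).le)
      (G := fun x => Complex.exp (Complex.I * ((s * F x : ℝ) : ℂ)) * g x) ((hexp hF).mul hg.continuous.measurable) (bn := fun _ => B)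
      (fun n x => by rw [norm_mul, norm_exp_I, one_mul]; exact hg.1 _)
      (S.wb_summable.mul_right B)]
    congr 1; ext x
    rw [birkhoffSum_succ', ← mul_assoc, ← Complex.exp_add]
    congr 2
    push_cast; ring

/-- The characteristic function of the `N`-th Birkhoff sum is the `N`-th power of that of `F`
under the invariant density `ρ`, up to `O(|s| + N s ^ 2)`. The iterates of the perturbed operator
are split into a multiple `a k` of `ρ` and a mean-zero part `r k`; the latter stays
`O(θ ^ k + |s|)` in the adapted norm, so that `a (k + 1)` and `lam * a k` differ by `O(|s| (θ ^ k + |s|))`. -/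
theorem perturb {ρ : X → ℝ} {Bρ : ℝ} (hρ : LipB Bρ ρ) (hρ0 : ∀ x, 0 ≤ ρ x) (hPρ : S.P ρ = ρ)
    (hρ1 : ∫ x, ρ x ∂ν = 1) {F : X → ℝ} (hF : Measurable F) {Fb : ℕ → ℝ}
    (hFb : ∀ n x, |F (S.V n x)| ≤ Fb n)
    (hFl : ∀ n x y, |F (S.V n x) - F (S.V n y)| ≤ Fb n * dist x y)
    (hs : Summable fun n => S.wb n * Fb n) {J : X → X} (hJm : Measurable J)
    (hJ : ∀ᵐ x ∂ν, ∀ n, J (S.V n x) = x) :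
    ∃ C s₀ : ℝ, 0 < C ∧ 0 < s₀ ∧ ∀ s : ℝ, |s| ≤ s₀ → ∀ (B : ℝ) (g : X → ℂ), LipB B g → ∀ N : ℕ,
      ‖∫ x, Complex.exp (Complex.I * ((s * birkhoffSum J F N x : ℝ) : ℂ)) * g x ∂ν
        - (∫ x, Complex.exp (Complex.I * ((s * F x : ℝ) : ℂ)) * (ρ x : ℂ) ∂ν) ^ N * ∫ x, g x ∂ν‖
      ≤ C * B * (|s| + N * s ^ 2) := by
  set ρc : X → ℂ := fun x => (ρ x : ℂ) with hρc
  have hρcL : LipB Bρ ρc := ⟨fun x => by simpa [ρc] using hρ.1 x, fun x y => by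
    have := hρ.2 x y
    simpa only [ρc, ← Complex.ofReal_sub, Complex.norm_real] using this⟩
  have hBρ : 0 ≤ Bρ := (norm_nonneg _).trans (hρ.1 (Classical.arbitrary X))
  have hPρc : S.P ρc = ρc := by rw [hρc, S.P_ofReal, hPρ]
  have hρc1 : ∫ x, ρc x ∂ν = 1 := by
    simp only [ρc]; rw [integral_complex_ofReal, hρ1]; simp
  have hFb0 : ∀ n, 0 ≤ Fb n := fun n => (abs_nonneg _).trans (hFb n (Classical.arbitrary X))
  have hintg : ∀ {B : ℝ} {g : X → ℂ}, LipB B g → Integrable g ν := fun hg =>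
    Integrable.of_bound hg.continuous.aestronglyMeasurable _ (ae_of_all _ hg.1)
  obtain ⟨C, hC, hA⟩ := S.exists_adapted
  have hδ := S.δ_pos
  have hδ1 := S.δ_lt
  have hK := S.K_pos
  have hsum0 : 0 ≤ ∑' n, S.wb n * Fb n := tsum_nonneg fun n => mul_nonneg (S.wb_nonneg n) (hFb0 n)
  set C1 : ℝ := (S.K * exp S.K + 2) * (∑' n, S.wb n * Fb n) with hC1
  have hC10 : 0 ≤ C1 := by positivity
  set Ex : ℝ → X → ℂ := fun s x => Complex.exp (Complex.I * ((s * F x : ℝ) : ℂ)) with hEx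
  have hExm : ∀ s, Measurable (Ex s) := fun s =>
    (Complex.measurable_ofReal.comp (hF.const_mul s)).const_mul _ |>.cexp
  have hExn : ∀ s x, ‖Ex s x‖ = 1 := fun s x => norm_exp_I _
  have hE1 : ∀ s x, ‖Ex s x - 1‖ ≤ |s| * |F x| := fun s x => by
    rw [← abs_mul]; exact Real.norm_exp_I_mul_ofReal_sub_one_le
  -- `L - P` has size `O(|s|)` on Lipschitz functions
  have hq : ∀ s B g, LipB B g → LipB (C1 * |s| * B) (S.P fun x => (Ex s x - 1) * g x) := by
    intro s B g hg
    have := S.P_mul (b := fun x => Ex s x - 1) (g := g) (bn := fun n => |s| * Fb n)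
      (fun n x => (hE1 s _).trans (mul_le_mul_of_nonneg_left (hFb n x) (abs_nonneg _)))
      (fun n x y => by
        have h1 := norm_exp_I_sub (s * F (S.V n x)) (s * F (S.V n y))
        rw [← mul_sub, abs_mul] at h1
        rw [sub_sub_sub_cancel_right]
        refine h1.trans ?_
        rw [mul_assoc]; exact mul_le_mul_of_nonneg_left (hFl n x y) (abs_nonneg _))
      (by simpa only [mul_left_comm] using hs.mul_left |s|) hg
    refine this.mono (le_of_eq ?_)
    simp only [mul_left_comm _ |s| _, tsum_mul_left, hC1]; ring
  have hLeq : ∀ s B g, LipB B g →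
      S.L F s g = fun x => S.P g x + S.P (fun x => (Ex s x - 1) * g x) x := by
    intro s B g hg
    have hB : 0 ≤ B := (norm_nonneg _).trans (hg.1 (Classical.arbitrary X))
    rw [L, ← S.P_add hg.1 (M' := 2 * B) (fun x => by
      rw [norm_mul]
      refine mul_le_mul ((norm_sub_le _ _).trans ?_) (hg.1 x) (norm_nonneg _) (by norm_num)
      rw [hExn, norm_one]; norm_num)]
    congr 1; ext x; simp only [Ex]; ring
  have hPl : ∀ B (g : X → ℂ), LipB B g → ∃ B', LipB B' (S.P g) := by
    intro B g hg
    have := S.P_mul (b := fun _ => 1) (g := g) (bn := fun n => 1) (by simp) (by simp)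
      (by simpa using S.wb_summable) hg
    simp only [one_mul] at this
    exact ⟨_, this⟩
  have hLl : ∀ s B g, LipB B g → ∃ B', LipB B' (S.L F s g) := by
    intro s B g hg
    obtain ⟨B', h'⟩ := hPl B g hg
    rw [hLeq s B g hg]
    exact ⟨_, h'.add (hq s B g hg)⟩
  set C2 : ℝ := C * (C1 * (1 + Bρ)) with hC2
  have hC20 : 0 ≤ C2 := by positivity
  -- half of the contraction gap `δ` is spent on absorbing the perturbation
  set θ : ℝ := 1 - S.δ / 2 with hθ
  have hθ0 : 0 < θ := by linarith
  have hθ1 : θ < 1 := by linarith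
  have hC21 : 0 < C2 + 1 := by linarith
  set s₀ : ℝ := S.δ / 2 / (C2 + 1) with hs₀
  set D0 : ℝ := C * (1 + Bρ) with hD0
  have hD00 : 0 ≤ D0 := by positivity
  set C3 : ℝ := C2 * Bρ / (1 - θ) with hC3
  have h1θ : 0 < 1 - θ := by linarith
  have hC30 : 0 ≤ C3 := by positivity
  set C4 : ℝ := C1 * (D0 / (1 - θ) + C3) + 1 with hC4
  refine ⟨C4, s₀, by positivity, by positivity, fun s hss B g hg N => ?_⟩
  have hB : 0 ≤ B := (norm_nonneg _).trans (hg.1 (Classical.arbitrary X))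
  set gk : ℕ → X → ℂ := fun k => (S.L F s)^[k] g with hgk
  set a : ℕ → ℂ := fun k => ∫ x, gk k x ∂ν with ha
  set lam : ℂ := ∫ x, Ex s x * ρc x ∂ν with hlam
  have hgkL : ∀ k, ∃ B', LipB B' (gk k) := by
    intro k
    induction k with
    | zero => exact ⟨B, hg⟩
    | succ k ih =>
      obtain ⟨B', h'⟩ := ih
      simp only [gk, Function.iterate_succ_apply']
      exact hLl s B' _ h'
  have haB : ∀ k, ‖a k‖ ≤ B := by
    intro k
    simp only [a, gk]
    rw [S.L_iterate_integral hJm hJ hF s (hLl s) k B g hg]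
    have := norm_integral_le_of_norm_le_const (μ := ν) (f := fun x =>
      Complex.exp (Complex.I * ((s * birkhoffSum J F k x : ℝ) : ℂ)) * g x) (C := B)
      (ae_of_all _ fun x => by rw [norm_mul, norm_exp_I, one_mul]; exact hg.1 x)
    simpa using this
  have hlam1 : ‖lam‖ ≤ 1 := by
    calc ‖lam‖ ≤ ∫ x, ‖Ex s x * ρc x‖ ∂ν := norm_integral_le_integral_norm _
      _ = ∫ x, ρ x ∂ν := by
          congr 1; ext x
          rw [norm_mul, hExn, one_mul]; simp [ρc, abs_of_nonneg (hρ0 x)]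
      _ = 1 := hρ1
  set r : ℕ → X → ℂ := fun k x => gk k x - a k * ρc x with hr
  have hr0 : ∀ k, ∫ x, r k x ∂ν = 0 := by
    intro k
    obtain ⟨B', h'⟩ := hgkL k
    simp only [r]
    rw [integral_sub (hintg h') ((hintg hρcL).const_mul _), integral_const_mul, hρc1]
    simp [a]
  set D : ℕ → ℝ := fun k => D0 * B * θ ^ k + C3 * |s| * B with hD
  have hDnn : ∀ k, 0 ≤ D k := fun k => by simp only [D]; positivity
  have hqk : ∀ k, LipB (D k) (r k) →
      LipB (C1 * |s| * (B * Bρ + D k)) (S.P fun x => (Ex s x - 1) * gk k x) := by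
    intro k hk
    apply hq
    have h1 := (hρcL.const_mul (a k)).add hk
    have e : (fun x => a k * ρc x + r k x) = gk k := by ext x; simp [r]
    rw [e] at h1
    refine h1.mono (by gcongr; exact haB k)
  have hrA : ∀ k, S.Adapted (D k) (r k) := by
    intro k
    induction k with
    | zero =>
      have h1 : LipB (B + B * Bρ) (r 0) := by
        have := hg.sub (hρcL.const_mul (a 0))
        refine this.mono (by gcongr; exact haB 0)
      intro j
      refine (hA _ _ h1 (hr0 0) j).mono ?_
      have : (0:ℝ) ≤ (1 - S.δ) ^ j := pow_nonneg (by linarith) j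
      refine mul_le_mul_of_nonneg_right ?_ this
      simp only [D, D0, pow_zero, mul_one]
      have : 0 ≤ C3 * |s| * B := by positivity
      linarith [show C * (B + B * Bρ) = C * (1 + Bρ) * B by ring]
    | succ k ih =>
      set q : X → ℂ := S.P fun x => (Ex s x - 1) * gk k x with hqdef
      have hqL := hqk k ih.lipB
      obtain ⟨B', h'⟩ := hgkL k
      have hrec : ∀ x, gk (k + 1) x = S.P (gk k) x + q x := by
        intro x
        simp only [gk, Function.iterate_succ_apply', hqdef]
        rw [hLeq s B' _ h']
      have hqint := hintg hqL
      obtain ⟨B'', h''⟩ := hPl B' _ h'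
      have ha1 : a (k + 1) = a k + ∫ x, q x ∂ν := by
        simp only [a, hrec]
        rw [integral_add (hintg h'') hqint, S.integral_P_bdd h'.continuous.stronglyMeasurable h'.1]
      set u : X → ℂ := fun x => q x - (∫ y, q y ∂ν) * ρc x with hu
      have hru : r (k + 1) = fun x => S.P (r k) x + u x := by
        have h5 : S.P (r k) = fun x => S.P (gk k) x - a k * ρc x := by
          simp only [r]
          rw [S.P_sub h'.1 (hρcL.const_mul (a k)).1, S.P_const_mul, hPρc]
        ext x
        rw [h5]
        simp only [r, hrec, ha1, u]; ring
      set Q : ℝ := C1 * |s| * (B * Bρ + D k)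
      have hqi : ‖∫ y, q y ∂ν‖ ≤ Q := by
        simpa using norm_integral_le_of_norm_le_const (μ := ν) (ae_of_all _ hqL.1)
      have huL : LipB (Q * (1 + Bρ)) u := by
        refine (hqL.sub (hρcL.const_mul _)).mono ?_
        rw [mul_add, mul_one]; gcongr
      have hu0 : ∫ x, u x ∂ν = 0 := by
        simp only [u]
        rw [integral_sub hqint ((hintg hρcL).const_mul _), integral_const_mul, hρc1]
        simp [q]
      have hfin := ih.step.add (hA _ _ huL hu0)
      rw [hru]
      intro j
      refine (hfin j).mono ?_
      have : (0:ℝ) ≤ (1 - S.δ) ^ j := pow_nonneg (by linarith) j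
      refine mul_le_mul_of_nonneg_right ?_ this
      -- `(1 - δ) D_k + C₂ |s| (B Bρ + D_k) ≤ θ D_k + C₂ |s| B Bρ ≤ D_{k+1}`
      have e1 : C * (Q * (1 + Bρ)) = C2 * |s| * (B * Bρ + D k) := by
        simp only [C2, Q]; ring
      rw [e1]
      have e2 : C2 * |s| ≤ S.δ / 2 := by
        have h6 : (C2 + 1) * s₀ = S.δ / 2 := by
          rw [hs₀]; field_simp
        have h7 : (C2 + 1) * |s| ≤ (C2 + 1) * s₀ := by gcongr
        linarith [abs_nonneg s]
      have e3 : C2 * |s| * D k ≤ S.δ / 2 * D k := mul_le_mul_of_nonneg_right e2 (hDnn k)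
      have e4 : C2 * Bρ = (1 - θ) * C3 := by rw [hC3]; field_simp
      have e5 : D (k + 1) = θ * D k + (1 - θ) * C3 * |s| * B := by
        simp only [D]; ring
      rw [e5, ← e4]
      simp only [hθ]
      linarith [show C2 * |s| * (B * Bρ + D k) = C2 * Bρ * |s| * B + C2 * |s| * D k by ring,
        show (1 - S.δ / 2) * D k = (1 - S.δ) * D k + S.δ / 2 * D k by ring]
  have hstep : ∀ k, ‖a (k + 1) - lam * a k‖ ≤ C1 * |s| * D k := by
    intro k
    obtain ⟨B', h'⟩ := hgkL k
    have hrk := (hrA k).lipB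
    have hri := hintg hrk
    have hEi : ∀ {B : ℝ} {v : X → ℂ}, LipB B v → Integrable (fun x => Ex s x * v x) ν := by
      intro B v hv
      refine Integrable.of_bound ((hExm s).aestronglyMeasurable.mul
        hv.continuous.aestronglyMeasurable) B (ae_of_all _ fun x => ?_)
      rw [norm_mul, hExn, one_mul]; exact hv.1 x
    have h1 : a (k + 1) = ∫ x, Ex s x * gk k x ∂ν := by
      simp only [a, gk, Function.iterate_succ_apply']
      exact S.integral_P_bdd ((hExm s).mul h'.continuous.measurable).stronglyMeasurable
        (M := B') (fun x => by rw [norm_mul, hExn, one_mul]; exact h'.1 x)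
    have h2 : a (k + 1) - lam * a k = ∫ x, (Ex s x - 1) * r k x ∂ν := by
      have e : ∀ x, Ex s x * gk k x = a k * (Ex s x * ρc x) + ((Ex s x - 1) * r k x + r k x) := by
        intro x; simp only [r]; ring
      have e' : ∀ x, (Ex s x - 1) * r k x = Ex s x * r k x - r k x := by intro x; ring
      have hi1 : Integrable (fun x => (Ex s x - 1) * r k x) ν := by
        simp only [e']; exact (hEi hrk).sub hri
      rw [h1]; simp only [e]
      rw [integral_add ((hEi hρcL).const_mul _) (g := fun x => (Ex s x - 1) * r k x + r k x)
        (hi1.add hri), integral_const_mul, integral_add hi1 hri, hr0]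
      simp only [hlam]; ring
    rw [h2, ← S.integral_P_bdd (g := fun x => (Ex s x - 1) * r k x) (M := 2 * D k)
      (((hExm s).sub measurable_const).mul hrk.continuous.measurable).stronglyMeasurable (fun x => by
        rw [norm_mul]
        refine mul_le_mul ((norm_sub_le _ _).trans ?_) (hrk.1 x) (norm_nonneg _) (by norm_num)
        rw [hExn, norm_one]; norm_num)]
    simpa using norm_integral_le_of_norm_le_const (μ := ν) (ae_of_all _ (hq s _ _ hrk).1)
  have hsumb : ∀ n, ‖a n - lam ^ n * a 0‖ ≤ ∑ k ∈ Finset.range n, C1 * |s| * D k := by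
    intro n
    induction n with
    | zero => simp
    | succ n ih =>
      rw [Finset.sum_range_succ]
      have : a (n + 1) - lam ^ (n + 1) * a 0
          = lam * (a n - lam ^ n * a 0) + (a (n + 1) - lam * a n) := by ring
      rw [this]
      refine (norm_add_le _ _).trans (add_le_add ?_ (hstep n))
      rw [norm_mul]
      exact (mul_le_of_le_one_left (norm_nonneg _) hlam1).trans ih
  have hfinal := hsumb N
  have ea : a N = ∫ x, Complex.exp (Complex.I * ((s * birkhoffSum J F N x : ℝ) : ℂ)) * g x ∂ν :=
    S.L_iterate_integral hJm hJ hF s (hLl s) N B g hg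
  rw [← ea]
  refine hfinal.trans ?_
  rw [← Finset.mul_sum]
  have hgeo : ∑ k ∈ Finset.range N, θ ^ k ≤ (1 - θ)⁻¹ := by
    rw [← tsum_geometric_of_lt_one hθ0.le hθ1]
    exact (summable_geometric_of_lt_one hθ0.le hθ1).sum_le_tsum _ (fun i _ => by positivity)
  have hDs : ∑ k ∈ Finset.range N, D k ≤ D0 * B * (1 - θ)⁻¹ + N * (C3 * |s| * B) := by
    simp only [D]
    rw [Finset.sum_add_distrib, ← Finset.mul_sum]
    simp only [Finset.sum_const, Finset.card_range, nsmul_eq_mul]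
    gcongr
  calc C1 * |s| * ∑ k ∈ Finset.range N, D k
      ≤ C1 * |s| * (D0 * B * (1 - θ)⁻¹ + N * (C3 * |s| * B)) := by gcongr
    _ = B * (C1 * (D0 / (1 - θ)) * |s| + C1 * C3 * (N * s ^ 2)) := by
        rw [← sq_abs s]; field_simp
    _ ≤ B * (C4 * |s| + C4 * (N * s ^ 2)) := by
        have h8 : 0 ≤ C1 * (D0 / (1 - θ)) := by positivity
        have h9 : 0 ≤ C1 * C3 := by positivity
        have h10 : C4 = C1 * (D0 / (1 - θ)) + C1 * C3 + 1 := by rw [hC4]; ring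
        gcongr <;> linarith
    _ = _ := by ring

end FullBranch
end Perturbation

/-! ### Regularity of invariant densities -/

section InvariantDensity

variable {X : Type*} [MetricSpace X] [MeasurableSpace X] [BorelSpace X] [SecondCountableTopology X]

namespace FullBranch

variable {ν : Measure X} [IsProbabilityMeasure ν] [Nonempty X] (S : FullBranch ν)

lemma iterate_one_cone (j : ℕ) : LogCone S.R ((S.P)^[j] fun _ => (1:ℝ)) ∧
    ∫ x, ((S.P)^[j] fun _ => (1:ℝ)) x ∂ν = 1 := by
  have hR := S.R_pos
  induction j with
  | zero =>
    refine ⟨⟨fun _ => zero_le_one, fun x y => ?_⟩, by simp⟩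
    simp only [Function.iterate_zero, id_eq, mul_one]
    exact one_le_exp (by positivity)
  | succ j ih =>
    rw [Function.iterate_succ_apply']
    obtain ⟨hc, -, M, hM⟩ := S.cone_integrable hR.le ih.1
    refine ⟨?_, by rw [S.integral_P_bdd hc.stronglyMeasurable hM, ih.2]⟩
    have := S.cone_P hR.le ih.1
    refine ⟨this.1, fun x y => (this.2 x y).trans (mul_le_mul_of_nonneg_right ?_ (this.1 y))⟩
    apply exp_le_exp.2
    have hd : 0 ≤ dist x y := dist_nonneg
    have : S.R / 2 + S.K ≤ S.R := by unfold R; linarith [S.K_pos]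
    gcongr

/-- A bounded uniformly continuous invariant density is automatically log-Lipschitz: iterating the
transfer operator improves any modulus of continuity. -/
theorem invariant_cone {ρ : X → ℝ} {M : ℝ} (hρu : UniformContinuous ρ) (hM : ∀ x, ‖ρ x‖ ≤ M)
    (hρ0 : ∀ x, 0 ≤ ρ x)
    (hPρ : S.P ρ = ρ) : LogCone S.R ρ := by
  refine ⟨hρ0, fun x y => ?_⟩
  have hR := S.R_pos
  have key : ∀ ε > 0, ρ x ≤ exp (S.R * dist x y) * (ρ y + ε * exp S.R) := by
    intro ε hε
    obtain ⟨η, hη, hu⟩ := Metric.uniformContinuous_iff.1 hρu ε hε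
    have claim : ∀ j : ℕ, ∀ x y, dist x y < 2 ^ j * η →
        ρ x ≤ exp (S.R * dist x y) * (ρ y + ε * ((S.P)^[j] fun _ => (1:ℝ)) y) := by
      intro j
      induction j with
      | zero =>
        intro x y hxy
        have h1 := hu (by simpa using hxy)
        rw [Real.dist_eq] at h1
        have h2 : ρ x ≤ ρ y + ε := by linarith [le_abs_self (ρ x - ρ y)]
        simp only [Function.iterate_zero, id_eq, mul_one]
        refine h2.trans (le_mul_of_one_le_left (by linarith [hρ0 y]) (one_le_exp (by positivity)))
      | succ j ih =>
        intro x y hxy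
        set u := (S.P)^[j] fun _ => (1:ℝ) with hu'
        have hcu := (S.iterate_one_cone j).1
        obtain ⟨-, -, M', hM'⟩ := S.cone_integrable hR.le hcu
        rw [Function.iterate_succ_apply', ← hu']
        conv_lhs => rw [← hPρ]
        nth_rewrite 2 [← hPρ]
        have hsm := (S.summable_bdd hM y).add ((S.summable_bdd hM' y).mul_left ε)
        have e : S.P ρ y + ε * S.P u y
            = ∑' n, (S.w n y • ρ (S.V n y) + ε * (S.w n y • u (S.V n y))) := by
          rw [(S.summable_bdd hM y).tsum_add ((S.summable_bdd hM' y).mul_left ε), tsum_mul_left]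
          rfl
        rw [e, ← tsum_mul_left, P]
        refine Summable.tsum_le_tsum (fun n => ?_) (S.summable_bdd hM x) (hsm.mul_left _)
        simp only [smul_eq_mul]
        have hd : 0 ≤ dist x y := dist_nonneg
        have hV := S.V_contr n x y
        have h1 := ih (S.V n x) (S.V n y) (by rw [pow_succ] at hxy; linarith)
        have hnn : 0 ≤ ρ (S.V n y) + ε * u (S.V n y) :=
          add_nonneg (hρ0 _) (mul_nonneg hε.le (hcu.1 _))
        have h2 : ρ (S.V n x) ≤ exp (S.R * dist x y / 2) * (ρ (S.V n y) + ε * u (S.V n y)) := by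
          refine h1.trans (mul_le_mul_of_nonneg_right ?_ hnn)
          apply exp_le_exp.2; nlinarith
        have h3 : exp (S.K * dist x y) * exp (S.R * dist x y / 2) ≤ exp (S.R * dist x y) := by
          rw [← exp_add]; apply exp_le_exp.2; unfold R
          nlinarith [mul_nonneg S.K_pos.le hd]
        calc S.w n x * ρ (S.V n x)
            ≤ (exp (S.K * dist x y) * S.w n y)
              * (exp (S.R * dist x y / 2) * (ρ (S.V n y) + ε * u (S.V n y))) :=
              mul_le_mul (S.w_dist n x y) h2 (hρ0 _)
                (mul_nonneg (exp_pos _).le (S.w_nonneg n y))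
          _ = (exp (S.K * dist x y) * exp (S.R * dist x y / 2))
              * (S.w n y * (ρ (S.V n y) + ε * u (S.V n y))) := by ring
          _ ≤ exp (S.R * dist x y) * (S.w n y * (ρ (S.V n y) + ε * u (S.V n y))) :=
              mul_le_mul_of_nonneg_right h3 (mul_nonneg (S.w_nonneg n y) hnn)
          _ = _ := by ring
    obtain ⟨j, hj⟩ := pow_unbounded_of_one_lt (1 / η) (one_lt_two)
    have h1 := claim j x y ((S.diam x y).trans_lt (by rwa [div_lt_iff₀ hη] at hj))
    refine h1.trans ?_
    have h2 := (S.cone_le_integral hR.le (S.iterate_one_cone j).1 y).1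
    rw [(S.iterate_one_cone j).2, mul_one] at h2
    gcongr
  have hlim : Tendsto (fun ε : ℝ => exp (S.R * dist x y) * (ρ y + ε * exp S.R)) (𝓝[>] 0)
      (𝓝 (exp (S.R * dist x y) * (ρ y + 0 * exp S.R))) := by
    apply tendsto_nhdsWithin_of_tendsto_nhds
    exact Continuous.tendsto (by fun_prop) 0
  rw [zero_mul, add_zero] at hlim
  exact ge_of_tendsto hlim (eventually_nhdsWithin_of_forall fun ε hε => key ε hε)

end FullBranch
end InvariantDensity

/-! ### Inducing and Kac's formula -/

/-- A map `T` together with its induced map `J`: the orbit of `x` makes `N x` steps outside the base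
and one further step (from the base) before arriving at `J x = T^[N x + 1] x`. -/
structure Induced (X : Type*) [MeasurableSpace X] where
  T : X → X
  J : X → X
  N : X → ℕ
  T_meas : Measurable T
  J_meas : Measurable J
  N_meas : Measurable N
  N_T : ∀ x, N x ≠ 0 → N (T x) + 1 = N x
  J_T : ∀ x, N x ≠ 0 → J (T x) = J x
  J_zero : ∀ x, N x = 0 → J x = T x

namespace Induced

variable {X : Type*} [MeasurableSpace X] (D : Induced X)

lemma J_eq (x : X) : D.J x = D.T^[D.N x + 1] x := by
  generalize hn : D.N x = n
  induction n generalizing x with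
  | zero => simp [D.J_zero x hn]
  | succ n ih =>
    have h := D.N_T x (by omega)
    rw [← D.J_T x (by omega), ih (D.T x) (by omega)]
    rfl

/-- The time of the `k`-th arrival. -/
def tau (k : ℕ) (x : X) : ℕ := birkhoffSum D.J (fun x => D.N x + 1) k x

lemma tau_succ' (k : ℕ) (x : X) : D.tau (k + 1) x = D.N x + 1 + D.tau k (D.J x) := by
  rw [tau, birkhoffSum_succ']; rfl

lemma tau_add (k l : ℕ) (x : X) : D.tau (k + l) x = D.tau k x + D.tau l (D.J^[k] x) := by
  rw [tau, birkhoffSum_add]; rfl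

lemma le_tau (k : ℕ) (x : X) : k ≤ D.tau k x := by
  induction k generalizing x with
  | zero => simp
  | succ k ih => rw [tau_succ']; have := ih (D.J x); omega

lemma J_iter (k : ℕ) (x : X) : D.J^[k] x = D.T^[D.tau k x] x := by
  induction k generalizing x with
  | zero => simp [tau]
  | succ k ih =>
    rw [Function.iterate_succ_apply, ih, tau_succ', add_comm, Function.iterate_add_apply, ← J_eq]

/-- Sum of the observable over one excursion. -/
noncomputable def ind (f : X → ℝ) (x : X) : ℝ := birkhoffSum D.T f (D.N x + 1) x

lemma sum_ind (f : X → ℝ) (k : ℕ) (x : X) :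
    birkhoffSum D.J (D.ind f) k x = birkhoffSum D.T f (D.tau k x) x := by
  induction k generalizing x with
  | zero => simp [tau]
  | succ k ih =>
    rw [birkhoffSum_succ', ih, tau_succ', birkhoffSum_add, ← J_eq]; rfl

lemma birk_meas {T : X → X} (hT : Measurable T) {f : X → ℝ} (hf : Measurable f) (n : ℕ) :
    Measurable (birkhoffSum T f n) :=
  Finset.measurable_sum _ fun i _ => hf.comp (hT.iterate i)

lemma ind_meas {f : X → ℝ} (hf : Measurable f) : Measurable (D.ind f) := by
  have : Measurable fun p : X × ℕ => birkhoffSum D.T f (p.2 + 1) p.1 :=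
    measurable_from_prod_countable_left fun n => birk_meas D.T_meas hf (n + 1)
  exact this.comp (measurable_id.prodMk D.N_meas)

lemma tau_meas (k : ℕ) : Measurable (D.tau k) :=
  Finset.measurable_sum (Finset.range k) fun i _ =>
    (D.N_meas.comp (D.J_meas.iterate i)).add_const 1

/-! ### Kac's formula -/

variable (m : Measure X)

/-- The measure induced on the space by pushing the base forward. -/
noncomputable def mu : Measure X := (m.restrict {x | D.N x = 0}).map D.T

lemma meas_N (j : ℕ) : MeasurableSet {x | j ≤ D.N x} := D.N_meas (measurableSet_Ici)

lemma meas_N0 : MeasurableSet {x | D.N x = 0} := D.N_meas (measurableSet_singleton 0)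

variable {m} [IsProbabilityMeasure m] (hm : MeasurePreserving D.T m m)

lemma step (hm : MeasurePreserving D.T m m) {ψ : X → ENNReal} (hψ : Measurable ψ) :
    ∫⁻ x, ψ x ∂m = ∫⁻ x, ψ x ∂D.mu m + ∫⁻ x in {x | 1 ≤ D.N x}, ψ (D.T x) ∂m := by
  rw [← hm.lintegral_comp hψ, mu, lintegral_map hψ D.T_meas]
  have e : {x | 1 ≤ D.N x} = {x | D.N x = 0}ᶜ := by
    ext x; simp [Nat.one_le_iff_ne_zero]
  rw [e, lintegral_add_compl _ D.meas_N0]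

lemma N_iter (j : ℕ) (x : X) (h : j ≤ D.N x) : D.N (D.T^[j] x) + j = D.N x := by
  induction j generalizing x with
  | zero => simp
  | succ j ih =>
    have h1 := D.N_T x (by omega)
    have := ih (D.T x) (by omega)
    rw [Function.iterate_succ_apply]; omega

/-- Iterating invariance: each point either has just arrived from the base or is the image of a
point outside the base. -/
lemma steps (hm : MeasurePreserving D.T m m) {ψ : X → ENNReal} (hψ : Measurable ψ) (k : ℕ) :
    ∫⁻ x, ψ x ∂m = ∑ j ∈ Finset.range k, ∫⁻ x in {x | j ≤ D.N x}, ψ (D.T^[j] x) ∂D.mu m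
      + ∫⁻ x in {x | k ≤ D.N x}, ψ (D.T^[k] x) ∂m := by
  induction k with
  | zero => simp
  | succ k ih =>
    rw [ih, Finset.sum_range_succ, add_assoc]
    congr 1
    have hψk : Measurable fun x => ψ (D.T^[k] x) := hψ.comp (D.T_meas.iterate k)
    rw [← lintegral_indicator (D.meas_N k), D.step hm (hψk.indicator (D.meas_N k)),
      lintegral_indicator (D.meas_N k)]
    congr 1
    rw [← lintegral_indicator (D.meas_N 1), ← lintegral_indicator (D.meas_N (k+1))]
    refine lintegral_congr fun x => ?_
    simp only [Set.indicator, Set.mem_setOf_eq, Function.comp]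
    by_cases h : 1 ≤ D.N x
    · have := D.N_T x (by omega)
      rw [if_pos h]
      simp only [show k ≤ D.N (D.T x) ↔ k + 1 ≤ D.N x by omega, Function.iterate_succ_apply]
    · rw [if_neg h, if_neg (by omega)]

lemma tail_tendsto (μ : Measure X) [IsFiniteMeasure μ] :
    Tendsto (fun k => μ {x | k ≤ D.N x}) atTop (𝓝 0) := by
  have := tendsto_measure_iInter_atTop (μ := μ) (s := fun k => {x | k ≤ D.N x})
    (fun k => (D.meas_N k).nullMeasurableSet) (fun a b hab x (hx : b ≤ D.N x) => hab.trans hx)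
    ⟨0, measure_ne_top _ _⟩
  have e : ⋂ k, {x | k ≤ D.N x} = ∅ := by
    ext x; simp only [Set.mem_iInter, Set.mem_setOf_eq, Set.mem_empty_iff_false, iff_false, not_forall]
    exact ⟨D.N x + 1, by omega⟩
  rwa [e, measure_empty] at this

/-- Kac's decomposition: `m` is spread over the excursions started from the induced measure. -/
lemma kac (hm : MeasurePreserving D.T m m) :
    m = Measure.sum fun j => ((D.mu m).restrict {x | j ≤ D.N x}).map (D.T^[j]) := by
  ext s hs
  rw [Measure.sum_apply _ hs]
  have h0 : ∀ k, m s = ∑ j ∈ Finset.range k,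
      ((D.mu m).restrict {x | j ≤ D.N x}).map (D.T^[j]) s
        + ∫⁻ x in {x | k ≤ D.N x}, s.indicator 1 (D.T^[k] x) ∂m := by
    intro k
    have h := D.steps hm (measurable_one.indicator hs) k
    rw [lintegral_indicator_one hs] at h
    rw [h]
    congr 1
    refine Finset.sum_congr rfl fun j _ => ?_
    rw [← lintegral_indicator_one hs,
      lintegral_map (measurable_one.indicator hs) (D.T_meas.iterate j)]
  have h1 : Tendsto (fun k => ∫⁻ x in {x | k ≤ D.N x}, s.indicator 1 (D.T^[k] x) ∂m) atTop (𝓝 0) := by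
    refine tendsto_of_tendsto_of_tendsto_of_le_of_le tendsto_const_nhds (D.tail_tendsto m)
      (fun _ => zero_le) fun k => ?_
    refine (lintegral_mono (g := fun _ => 1) fun x => ?_).trans (by simp)
    exact Set.indicator_le_self' (fun _ _ => zero_le) _
  have h2 := (ENNReal.summable (f := fun j => ((D.mu m).restrict {x | j ≤ D.N x}).map
    (D.T^[j]) s)).hasSum.tendsto_sum_nat.add h1
  rw [add_zero] at h2
  exact tendsto_nhds_unique (tendsto_const_nhds.congr h0) h2

instance : IsFiniteMeasure (D.mu m) := by unfold mu; infer_instance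

lemma kac_lintegral (hm : MeasurePreserving D.T m m) {ψ : X → ENNReal} (hψ : Measurable ψ) :
    ∫⁻ x, ψ x ∂m = ∑' j, ∫⁻ x in {x | j ≤ D.N x}, ψ (D.T^[j] x) ∂D.mu m := by
  conv_lhs => rw [D.kac hm]
  rw [lintegral_sum_measure]
  exact tsum_congr fun j => lintegral_map hψ (D.T_meas.iterate j)

lemma mu_le (hm : MeasurePreserving D.T m m) : D.mu m ≤ m := by
  refine Measure.le_iff.2 fun s hs => ?_
  rw [← lintegral_indicator_one hs, ← lintegral_indicator_one hs,
    D.step hm (measurable_one.indicator hs)]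
  exact le_self_add

lemma J_preserves (hm : MeasurePreserving D.T m m) :
    MeasurePreserving D.J (D.mu m) (D.mu m) := by
  refine ⟨D.J_meas, ?_⟩
  ext s hs
  have h := D.step hm ((measurable_one.indicator hs).comp D.J_meas : Measurable (s.indicator (1 : X → ENNReal) ∘ D.J))
  have e : {x | 1 ≤ D.N x} = {x | D.N x = 0}ᶜ := by
    ext x; simp [Nat.one_le_iff_ne_zero]
  have e1 : ∫⁻ x in {x | 1 ≤ D.N x}, (s.indicator (1 : X → ENNReal) ∘ D.J) (D.T x) ∂m
      = ∫⁻ x in {x | 1 ≤ D.N x}, (s.indicator (1 : X → ENNReal) ∘ D.J) x ∂m := by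
    refine setLIntegral_congr_fun (D.meas_N 1) fun x hx => ?_
    simp only [Function.comp]
    rw [D.J_T x (Nat.one_le_iff_ne_zero.1 hx)]
  rw [e1, ← lintegral_add_compl _ D.meas_N0, ← e] at h
  have hfin : ∫⁻ x in {x | 1 ≤ D.N x}, (s.indicator (1 : X → ENNReal) ∘ D.J) x ∂m ≠ ⊤ := by
    refine ne_top_of_le_ne_top (measure_ne_top m Set.univ)
      ((lintegral_mono (g := fun _ => 1) fun x => ?_).trans ((setLIntegral_le_lintegral _ _).trans (by simp)))
    exact Set.indicator_le_self' (fun _ _ => zero_le) _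
  have h' := (ENNReal.add_left_inj hfin).1 h
  rw [← lintegral_indicator_one hs, lintegral_map (measurable_one.indicator hs) D.J_meas]
  change ∫⁻ x, (s.indicator (1 : X → ENNReal) ∘ D.J) x ∂D.mu m = _
  rw [← h', ← lintegral_indicator_one hs, mu, lintegral_map (measurable_one.indicator hs) D.T_meas]
  refine setLIntegral_congr_fun D.meas_N0 fun x hx => ?_
  simp only [Function.comp]
  rw [D.J_zero x hx]

/-- Kac's formula for non-negative observables. -/
lemma kac_ind (hm : MeasurePreserving D.T m m) {g : X → ℝ} (hg : Measurable g) (hg0 : ∀ x, 0 ≤ g x) :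
    ∫⁻ x, ENNReal.ofReal (D.ind g x) ∂D.mu m = ∫⁻ x, ENNReal.ofReal (g x) ∂m := by
  rw [D.kac_lintegral hm hg.ennreal_ofReal]
  have : ∀ j, ∫⁻ x in {x | j ≤ D.N x}, ENNReal.ofReal (g (D.T^[j] x)) ∂D.mu m
      = ∫⁻ x, {x | j ≤ D.N x}.indicator (fun x => ENNReal.ofReal (g (D.T^[j] x))) x ∂D.mu m :=
    fun j => (lintegral_indicator (D.meas_N j) _).symm
  simp_rw [this]
  have hgj : ∀ j, Measurable fun x => ENNReal.ofReal (g (D.T^[j] x)) := fun j =>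
    (hg.comp (D.T_meas.iterate j)).ennreal_ofReal
  rw [← lintegral_tsum fun j => ((hgj j).indicator (D.meas_N j)).aemeasurable]
  refine lintegral_congr fun x => ?_
  rw [tsum_eq_sum (s := Finset.range (D.N x + 1)), ind, birkhoffSum,
    ENNReal.ofReal_sum_of_nonneg fun i _ => hg0 _]
  · refine Finset.sum_congr rfl fun j hj => ?_
    rw [Set.indicator_of_mem]
    rw [Finset.mem_range] at hj; simp only [Set.mem_setOf_eq]; omega
  · intro j hj
    rw [Set.indicator_of_notMem]
    rw [Finset.mem_range] at hj; simp only [Set.mem_setOf_eq]; omega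

lemma ind_nonneg {g : X → ℝ} (hg0 : ∀ x, 0 ≤ g x) (x : X) : 0 ≤ D.ind g x := by
  unfold ind birkhoffSum; exact Finset.sum_nonneg fun _ _ => hg0 _

lemma kac_integrable (hm : MeasurePreserving D.T m m) {g : X → ℝ} (hg : Measurable g)
    (hg0 : ∀ x, 0 ≤ g x) (hi : Integrable g m) :
    Integrable (D.ind g) (D.mu m) ∧ ∫ x, D.ind g x ∂D.mu m = ∫ x, g x ∂m := by
  have h := D.kac_ind hm hg hg0
  refine ⟨⟨(D.ind_meas hg).aestronglyMeasurable, ?_⟩, ?_⟩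
  · rw [hasFiniteIntegral_iff_ofReal (ae_of_all _ (D.ind_nonneg hg0)), h,
      ← hasFiniteIntegral_iff_ofReal (ae_of_all _ hg0)]
    exact hi.2
  · rw [integral_eq_lintegral_of_nonneg_ae (ae_of_all _ (D.ind_nonneg hg0))
      (D.ind_meas hg).aestronglyMeasurable, h,
      ← integral_eq_lintegral_of_nonneg_ae (ae_of_all _ hg0) hg.aestronglyMeasurable]

lemma ind_one (x : X) : D.ind (fun _ => 1) x = D.N x + 1 := by
  simp [ind, birkhoffSum]

lemma ind_add_const (g : X → ℝ) (c : ℝ) (x : X) :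
    D.ind (fun y => g y + c) x = D.ind g x + c * (D.N x + 1) := by
  simp [ind, birkhoffSum, Finset.sum_add_distrib]; ring

lemma kac_phi (hm : MeasurePreserving D.T m m) :
    Integrable (fun x => (D.N x : ℝ) + 1) (D.mu m) ∧ ∫ x, ((D.N x : ℝ) + 1) ∂D.mu m = 1 := by
  have := D.kac_integrable hm (g := fun _ => 1) measurable_const (fun _ => zero_le_one)
    (integrable_const _)
  simp only [ind_one, integral_const, probReal_univ, one_smul] at this
  refine ⟨?_, this.2⟩
  have h1 := this.1
  rwa [show D.ind (fun _ => 1) = fun x => (D.N x : ℝ) + 1 from funext D.ind_one] at h1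

end Induced

/-! ### Renewal systems: choice of the starting point -/

/-- `e^{ia}`. -/
noncomputable def ee (a : ℝ) : ℂ := Complex.exp (Complex.I * (a : ℂ))

lemma ee_norm (a : ℝ) : ‖ee a‖ = 1 := FullBranch.norm_exp_I a

lemma ee_zero : ee 0 = 1 := by simp [ee]

lemma ee_add (a b : ℝ) : ee (a + b) = ee a * ee b := by
  rw [ee, ee, ee, ← Complex.exp_add]; push_cast; ring_nf

lemma ee_cont : Continuous ee := by unfold ee; fun_prop

lemma ee_sub_le (a b : ℝ) : ‖ee a - ee b‖ ≤ min 2 |a - b| := by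
  refine le_min ((norm_sub_le _ _).trans ?_) (FullBranch.norm_exp_I_sub a b)
  rw [ee_norm, ee_norm]; norm_num

lemma min_two_add (a b : ℝ) (ha : 0 ≤ a) (hb : 0 ≤ b) : min 2 (a + b) ≤ min 2 a + min 2 b := by
  rcases le_total 2 a with h | h <;> rcases le_total 2 b with h' | h' <;>
    simp [min_def] <;> split_ifs <;> linarith

section Sys

variable {X : Type*} [MetricSpace X] [MeasurableSpace X] [BorelSpace X] [SecondCountableTopology X]

/-- A probability measure `m` preserved by `D.T` whose induced system is a full-branch system with
log-Lipschitz invariant density `ρ` and integrable return time. -/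
structure RenewalSys (ν m : Measure X) where
  S : FullBranch ν
  D : Induced X
  JV : ∀ n x, D.J (S.V n x) = x
  NV : ∀ n x, D.N (S.V n x) = n
  inv : MeasurePreserving D.T m m
  ρ : X → ℝ
  cone : LogCone S.R ρ
  Pρ : S.P ρ = ρ
  dens : D.mu m = ν.withDensity fun x => ENNReal.ofReal (ρ x)
  M_pos : 0 < ∫ x, ρ x ∂ν
  sum_N : Summable fun n => S.wb n * ((n : ℝ) + 1)

namespace RenewalSys

variable {ν m : Measure X} [IsProbabilityMeasure ν] [IsProbabilityMeasure m] [Nonempty X]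
  (Z : RenewalSys ν m)

/-- The measure carried by the induced system. -/
noncomputable def μ : Measure X := Z.D.mu m

instance : IsFiniteMeasure Z.μ := by unfold μ; infer_instance

/-- The total mass of the induced measure, which by Kac's formula is the inverse of the mean
return time. -/
noncomputable def M : ℝ := ∫ x, Z.ρ x ∂ν

lemma ρ_facts : Continuous Z.ρ ∧ Integrable Z.ρ ν ∧ ∃ M, ∀ x, ‖Z.ρ x‖ ≤ M :=
  Z.S.cone_integrable Z.S.R_pos.le Z.cone

lemma ρ_lip : ∃ B, LipB B Z.ρ := by
  obtain ⟨-, -, M, hM⟩ := Z.ρ_facts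
  exact ⟨_, Z.S.cone_lip Z.S.R_pos.le Z.cone fun x => (le_abs_self _).trans (hM x)⟩

lemma integral_μ {E : Type*} [NormedAddCommGroup E] [NormedSpace ℝ E] (ψ : X → E) :
    ∫ x, ψ x ∂Z.μ = ∫ x, Z.ρ x • ψ x ∂ν := by
  rw [μ, Z.dens, integral_withDensity_eq_integral_toReal_smul
    (Z.ρ_facts.1.measurable.ennreal_ofReal) (ae_of_all _ fun x => ENNReal.ofReal_lt_top)]
  refine integral_congr_ae (ae_of_all _ fun x => ?_)
  simp only
  rw [ENNReal.toReal_ofReal (Z.cone.1 x)]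

lemma integrable_μ {E : Type*} [NormedAddCommGroup E] [NormedSpace ℝ E] (ψ : X → E) :
    Integrable ψ Z.μ ↔ Integrable (fun x => Z.ρ x • ψ x) ν := by
  rw [μ, Z.dens, integrable_withDensity_iff_integrable_smul'
    (Z.ρ_facts.1.measurable.ennreal_ofReal) (ae_of_all _ fun x => ENNReal.ofReal_lt_top)]
  refine integrable_congr (ae_of_all _ fun x => ?_)
  simp only
  rw [ENNReal.toReal_ofReal (Z.cone.1 x)]

lemma M_eq : Z.M = Z.μ.real Set.univ := by
  have := Z.integral_μ (fun _ => (1:ℝ))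
  simp only [integral_const, smul_eq_mul, mul_one] at this
  exact this.symm

lemma J_pres : MeasurePreserving Z.D.J Z.μ Z.μ := Z.D.J_preserves Z.inv

lemma summable_tail : Summable fun j => Z.μ.real {x | j ≤ Z.D.N x} := by
  refine ENNReal.summable_toReal ?_
  have h := Z.D.kac_lintegral Z.inv (ψ := fun _ => 1) measurable_const
  simp only [lintegral_const, measure_univ, mul_one, Measure.restrict_apply MeasurableSet.univ,
    Set.univ_inter, one_mul] at h
  change ∑' j, Z.D.mu m _ ≠ ⊤
  rw [← h]; simp

/-- By Kac's formula an `m`-distributed point lies at one of the `N + 1` times of an excursion; in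
the limit the Birkhoff sums may be started at the beginning of that excursion instead. -/
theorem start {f : X → ℝ} (hf : Measurable f) {s : ℕ → ℝ} (hs : Tendsto s atTop (𝓝 0)) :
    Tendsto (fun n => ∫ x, ee (s n * birkhoffSum Z.D.T f n x) ∂m
      - ∫ x, (((Z.D.N x : ℝ) + 1 : ℝ) : ℂ) * ee (s n * birkhoffSum Z.D.T f n x) ∂Z.μ)
      atTop (𝓝 0) := by
  set T := Z.D.T with hTdef
  set ψ : ℕ → X → ℂ := fun n x => ee (s n * birkhoffSum T f n x) with hψ
  have hψm : ∀ n, Measurable (ψ n) := fun n =>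
    ee_cont.measurable.comp ((Induced.birk_meas Z.D.T_meas hf n).const_mul _)
  have hψ1 : ∀ n x, ‖ψ n x‖ = 1 := fun n x => ee_norm _
  have hb : ∀ n (μ' : Measure X) [IsFiniteMeasure μ'], Integrable (ψ n) μ' := fun n μ' _ =>
    Integrable.of_bound (hψm n).aestronglyMeasurable 1 (ae_of_all _ fun x => (hψ1 n x).le)
  have hb' : ∀ n j (μ' : Measure X) [IsFiniteMeasure μ'],
      Integrable (fun x => ψ n (T^[j] x)) μ' := fun n j μ' _ =>
    Integrable.of_bound ((hψm n).comp (Z.D.T_meas.iterate j)).aestronglyMeasurable 1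
      (ae_of_all _ fun x => (hψ1 n _).le)
  have e1 : ∀ n, HasSum (fun j => ∫ x in {x | j ≤ Z.D.N x}, ψ n (T^[j] x) ∂Z.μ)
      (∫ x, ψ n x ∂m) := by
    intro n
    have hi := hb n m
    have hk := Z.D.kac Z.inv
    rw [hk] at hi
    have := hasSum_integral_measure hi
    rw [← hk] at this
    have e : (fun j => ∫ x in {x | j ≤ Z.D.N x}, ψ n (T^[j] x) ∂Z.μ) = fun j =>
        ∫ x, ψ n x ∂((Z.D.mu m).restrict {x | j ≤ Z.D.N x}).map (Z.D.T^[j]) := by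
      ext j
      rw [integral_map (Z.D.T_meas.iterate j).aemeasurable (hψm n).aestronglyMeasurable]
      rfl
    rw [e]; exact this
  have e2 : ∀ n, HasSum (fun j => ∫ x in {x | j ≤ Z.D.N x}, ψ n x ∂Z.μ)
      (∫ x, (((Z.D.N x : ℝ) + 1 : ℝ) : ℂ) * ψ n x ∂Z.μ) := by
    intro n
    have hsum := hasSum_integral_of_summable_integral_norm (μ := Z.μ)
      (F := fun j => {x | j ≤ Z.D.N x}.indicator (ψ n))
      (fun j => (hb n Z.μ).indicator (Z.D.meas_N j)) (by
        refine Z.summable_tail.congr fun j => ?_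
        have : ∀ x, ‖{x | j ≤ Z.D.N x}.indicator (ψ n) x‖ = {x | j ≤ Z.D.N x}.indicator 1 x := by
          intro x; rw [norm_indicator_eq_indicator_norm]; simp only [hψ1]; rfl
        simp only [this]
        rw [integral_indicator_one (Z.D.meas_N j)])
    have e : (fun j => ∫ x in {x | j ≤ Z.D.N x}, ψ n x ∂Z.μ) = fun j =>
        ∫ x, {x | j ≤ Z.D.N x}.indicator (ψ n) x ∂Z.μ := by
      ext j; rw [integral_indicator (Z.D.meas_N j)]
    have e' : ∫ x, (((Z.D.N x : ℝ) + 1 : ℝ) : ℂ) * ψ n x ∂Z.μ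
        = ∫ x, ∑' j, {x | j ≤ Z.D.N x}.indicator (ψ n) x ∂Z.μ := by
      refine integral_congr_ae (ae_of_all _ fun x => ?_)
      simp only
      rw [tsum_eq_sum (s := Finset.range (Z.D.N x + 1)),
        Finset.sum_congr rfl (g := fun _ => ψ n x)]
      · simp
      · intro j hj
        rw [Finset.mem_range] at hj
        rw [Set.indicator_of_mem]; simp only [Set.mem_setOf_eq]; omega
      · intro j hj
        rw [Finset.mem_range] at hj
        rw [Set.indicator_of_notMem]; simp only [Set.mem_setOf_eq]; omega
    rw [e, e']; exact hsum
  have e3 : ∀ n, ∫ x, ψ n x ∂m - ∫ x, (((Z.D.N x : ℝ) + 1 : ℝ) : ℂ) * ψ n x ∂Z.μ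
      = ∑' j, ∫ x in {x | j ≤ Z.D.N x}, (ψ n (T^[j] x) - ψ n x) ∂Z.μ := by
    intro n
    rw [← ((e1 n).sub (e2 n)).tsum_eq]
    exact tsum_congr fun j => (integral_sub (hb' n j _) (hb n _)).symm
  change Tendsto (fun n => ∫ x, ψ n x ∂m - ∫ x, (((Z.D.N x : ℝ) + 1 : ℝ) : ℂ) * ψ n x ∂Z.μ) _ _
  simp only [e3]
  have hz : (0:ℂ) = ∑' _ : ℕ, (0:ℂ) := by simp
  rw [hz]
  refine tendsto_tsum_of_dominated_convergence (Z.summable_tail.mul_left 2) (fun j => ?_)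
    (Eventually.of_forall fun n j => ?_)
  · rw [tendsto_zero_iff_norm_tendsto_zero]
    set b : ℕ → X → ℝ := fun n x => min 2 (|s n| * |birkhoffSum T f j x|) with hbdef
    have hbm : ∀ n, Measurable (b n) := fun n =>
      measurable_const.min (((Induced.birk_meas Z.D.T_meas hf j).abs).const_mul _)
    have hb0 : ∀ n x, 0 ≤ b n x := fun n x => le_min (by norm_num) (by positivity)
    have hbi : ∀ n, Integrable (b n) m := fun n =>
      Integrable.of_bound (hbm n).aestronglyMeasurable 2 (ae_of_all _ fun x => by
        rw [Real.norm_of_nonneg (hb0 n x)]; exact min_le_left _ _)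
    have hlim : Tendsto (fun n => ∫ x, b n x ∂m) atTop (𝓝 0) := by
      have h0 : (0:ℝ) = ∫ x, (0:ℝ) ∂m := by simp
      rw [h0]
      refine tendsto_integral_of_dominated_convergence (fun _ => 2)
        (fun n => (hbm n).aestronglyMeasurable) (integrable_const _)
        (fun n => ae_of_all _ fun x => by
          rw [Real.norm_of_nonneg (hb0 n x)]; exact min_le_left _ _)
        (ae_of_all _ fun x => ?_)
      have h1 : Tendsto (fun n => |s n| * |birkhoffSum T f j x|) atTop (𝓝 0) := by
        simpa using hs.abs.mul_const |birkhoffSum T f j x|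
      have h2 := (tendsto_const_nhds (x := (2:ℝ))).min h1
      rwa [min_eq_right (by norm_num)] at h2
    have hlim2 : Tendsto (fun n => 2 * ∫ x, b n x ∂m) atTop (𝓝 0) := by
      simpa using hlim.const_mul 2
    refine squeeze_zero (fun _ => norm_nonneg _) (fun n => ?_) hlim2
    have hTn : MeasurePreserving (T^[n]) m m := Z.inv.iterate n
    have hbT : Integrable (fun x => b n (T^[n] x)) m := hTn.integrable_comp_of_integrable (hbi n)
    have hpt : ∀ x, ‖ψ n (T^[j] x) - ψ n x‖ ≤ b n (T^[n] x) + b n x := by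
      intro x
      refine (ee_sub_le _ _).trans ?_
      have h1 := birkhoffSum_add T f n j x
      have h2 := birkhoffSum_add T f j n x
      rw [add_comm j n] at h2
      have h3 : birkhoffSum T f n (T^[j] x) - birkhoffSum T f n x
          = birkhoffSum T f j (T^[n] x) - birkhoffSum T f j x := by linarith
      rw [← mul_sub, h3, abs_mul]
      refine le_trans ?_ (min_two_add _ _ (by positivity) (by positivity))
      refine min_le_min_left _ ?_
      rw [← mul_add]
      exact mul_le_mul_of_nonneg_left (abs_sub _ _) (abs_nonneg _)
    have hdi : Integrable (fun x => ‖ψ n (T^[j] x) - ψ n x‖) m := ((hb' n j m).sub (hb n m)).norm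
    calc ‖∫ x in {x | j ≤ Z.D.N x}, (ψ n (T^[j] x) - ψ n x) ∂Z.μ‖
        ≤ ∫ x in {x | j ≤ Z.D.N x}, ‖ψ n (T^[j] x) - ψ n x‖ ∂Z.μ := norm_integral_le_integral_norm _
      _ ≤ ∫ x, ‖ψ n (T^[j] x) - ψ n x‖ ∂m :=
          integral_mono_measure (Measure.restrict_le_self.trans (Z.D.mu_le Z.inv))
            (ae_of_all _ fun _ => norm_nonneg _) hdi
      _ ≤ ∫ x, (b n (T^[n] x) + b n x) ∂m := integral_mono hdi (hbT.add (hbi n)) hpt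
      _ = 2 * ∫ x, b n x ∂m := by
          rw [integral_add hbT (hbi n), two_mul]
          congr 1
          have h2 := integral_map (μ := m) hTn.measurable.aemeasurable
            (f := b n) (hbm n).aestronglyMeasurable
          rw [hTn.map_eq] at h2
          exact h2.symm
  · refine (norm_integral_le_integral_norm _).trans ?_
    refine (integral_mono (g := fun _ => (2:ℝ)) (((hb' n j _).sub (hb n _)).norm)
      (integrable_const _) fun x => ?_).trans ?_
    · exact (ee_sub_le _ _).trans (min_le_left _ _)
    · simp [mul_comm]

end RenewalSys
end Sys

/-! ### Characteristic functions of sums over excursions -/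

lemma ee_sub_sub_le_two (x : ℝ) : ‖ee x - 1 - Complex.I * x‖ ≤ 2 * |x| := by
  have h1 := (ee_sub_le x 0).trans (min_le_right _ _)
  rw [ee_zero, sub_zero] at h1
  refine (norm_sub_le _ _).trans ?_
  rw [norm_mul, Complex.norm_I, one_mul, Complex.norm_real, Real.norm_eq_abs]
  linarith

lemma ee_sub_sub_le_sq (x : ℝ) : ‖ee x - 1 - Complex.I * x‖ ≤ 2 * |x| ^ 2 := by
  rcases le_total |x| 1 with h | h
  · have hn : ‖Complex.I * (x:ℂ)‖ = |x| := by
      rw [norm_mul, Complex.norm_I, one_mul, Complex.norm_real, Real.norm_eq_abs]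
    have := Complex.norm_exp_sub_one_sub_id_le (x := Complex.I * (x:ℂ)) (by rw [hn]; exact h)
    rw [hn] at this
    refine this.trans ?_
    nlinarith [sq_nonneg |x|]
  · refine (ee_sub_sub_le_two x).trans ?_
    nlinarith

lemma ee_sub_sub_le (x : ℝ) {q : ℝ} (h1 : 1 ≤ q) (h2 : q ≤ 2) :
    ‖ee x - 1 - Complex.I * x‖ ≤ 2 * |x| ^ q := by
  rcases le_total |x| 1 with h | h
  · refine (ee_sub_sub_le_sq x).trans ?_
    rcases eq_or_lt_of_le (abs_nonneg x) with h0 | h0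
    · rw [← h0]; simp; positivity
    · rw [← Real.rpow_natCast]
      exact mul_le_mul_of_nonneg_left (Real.rpow_le_rpow_of_exponent_ge h0 h (by simpa using h2))
        (by norm_num)
  · refine (ee_sub_sub_le_two x).trans ?_
    exact mul_le_mul_of_nonneg_left (by simpa using Real.rpow_le_rpow_of_exponent_le h h1)
      (by norm_num)

lemma norm_pow_sub_one_le {z : ℂ} (hz : ‖z‖ ≤ 1) (n : ℕ) : ‖z ^ n - 1‖ ≤ n * ‖z - 1‖ := by
  induction n with
  | zero => simp
  | succ n ih =>
    have : z ^ (n + 1) - 1 = z ^ n * (z - 1) + (z ^ n - 1) := by ring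
    rw [this]
    refine (norm_add_le _ _).trans ?_
    rw [norm_mul, norm_pow]
    push_cast
    have h1 : ‖z‖ ^ n * ‖z - 1‖ ≤ 1 * ‖z - 1‖ :=
      mul_le_mul_of_nonneg_right (pow_le_one₀ (norm_nonneg _) hz) (norm_nonneg _)
    linarith

section Sys

variable {X : Type*} [MetricSpace X] [MeasurableSpace X] [BorelSpace X] [SecondCountableTopology X]

/-- Observables that are Lipschitz along each branch, with constants summable against the
branch weights. -/
def FullBranch.BL {ν : Measure X} (S : FullBranch ν) (F : X → ℝ) : Prop :=
  Measurable F ∧ ∃ Fb : ℕ → ℝ, (∀ n x, |F (S.V n x)| ≤ Fb n) ∧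
    (∀ n x y, |F (S.V n x) - F (S.V n y)| ≤ Fb n * dist x y) ∧
    Summable fun n => S.wb n * Fb n

namespace RenewalSys

variable {ν m : Measure X} [IsProbabilityMeasure ν] [IsProbabilityMeasure m] [Nonempty X]
  (Z : RenewalSys ν m)

/-- The characteristic function of `F` under the normalised induced measure. -/
noncomputable def lamc (F : X → ℝ) (s : ℝ) : ℂ := (∫ x, ee (s * F x) ∂Z.μ) / (Z.M : ℂ)

lemma M_pos' : 0 < Z.M := Z.M_pos

lemma ee_integrable {F : X → ℝ} (hF : Measurable F) (μ' : Measure X) [IsFiniteMeasure μ'] :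
    Integrable (fun x => ee (F x)) μ' :=
  Integrable.of_bound (ee_cont.measurable.comp hF).aestronglyMeasurable 1
    (ae_of_all _ fun x => (ee_norm _).le)

lemma lamc_norm_le {F : X → ℝ} (s : ℝ) : ‖Z.lamc F s‖ ≤ 1 := by
  have hM := Z.M_pos'
  rw [lamc, norm_div, Complex.norm_real, Real.norm_of_nonneg hM.le, div_le_one hM]
  refine (norm_integral_le_integral_norm _).trans ?_
  simp only [ee_norm, integral_const, smul_eq_mul, mul_one]
  exact Z.M_eq.ge

lemma BL_integrable {F : X → ℝ} (hF : Z.S.BL F) : Integrable F Z.μ := by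
  obtain ⟨hm, Fb, h1, -, h3⟩ := hF
  rw [Z.integrable_μ]
  obtain ⟨hc, -, M, hM⟩ := Z.ρ_facts
  refine (Z.S.integrable_of_branch hm.stronglyMeasurable (fun n x => h1 n x) h3).bdd_mul (c := M)
    hc.aestronglyMeasurable (ae_of_all _ hM)

lemma BL_N (c : ℝ) : Z.S.BL fun x => (Z.D.N x : ℝ) + 1 + c := by
  refine ⟨((measurable_from_top.comp Z.D.N_meas).add_const 1).add_const c,
    fun n => (n:ℝ) + 1 + |c|, fun n x => ?_, fun n x y => ?_, ?_⟩
  · simp only [Z.NV]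
    refine (abs_add_le _ _).trans ?_
    rw [abs_of_nonneg (by positivity)]
  · simp only [Z.NV, sub_self, abs_zero]; positivity
  · simp only [mul_add (Z.S.wb _) (_ + 1) |c|]
    exact Z.sum_N.add (Z.S.wb_summable.mul_right _)

/-- `FullBranch.perturb` for the normalised density of the induced measure. -/
theorem pert {F : X → ℝ} (hF : Z.S.BL F) :
    ∃ C s₀ : ℝ, 0 < C ∧ 0 < s₀ ∧ ∀ s : ℝ, |s| ≤ s₀ → ∀ (B : ℝ) (g : X → ℂ), LipB B g → ∀ N : ℕ,
      ‖∫ x, ee (s * birkhoffSum Z.D.J F N x) * g x ∂ν - Z.lamc F s ^ N * ∫ x, g x ∂ν‖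
      ≤ C * B * (|s| + N * s ^ 2) := by
  obtain ⟨hm, Fb, h1, h2, h3⟩ := hF
  obtain ⟨B, hB⟩ := Z.ρ_lip
  have hM := Z.M_pos'
  have hP : Z.S.P (fun x => Z.ρ x / Z.M) = fun x => Z.ρ x / Z.M := by
    ext x
    have := congrFun Z.Pρ x
    simp only [FullBranch.P, smul_eq_mul] at this ⊢
    rw [← this, ← tsum_div_const]
    exact tsum_congr fun n => by rw [mul_div_assoc]
  have hL : LipB (B / Z.M) fun x => Z.ρ x / Z.M := by
    refine ⟨fun x => ?_, fun x y => ?_⟩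
    · rw [norm_div, Real.norm_of_nonneg hM.le]; gcongr; exact hB.1 x
    · rw [← sub_div, norm_div, Real.norm_of_nonneg hM.le, div_mul_eq_mul_div]
      gcongr; exact hB.2 x y
  obtain ⟨C, s₀, hC, hs₀, h⟩ := Z.S.perturb hL (fun x => div_nonneg (Z.cone.1 x) hM.le) hP
    (by rw [integral_div]; exact div_self hM.ne') hm h1 h2 h3 Z.D.J_meas
    (ae_of_all _ fun x n => Z.JV n x)
  refine ⟨C, s₀, hC, hs₀, fun s hs B g hg N => ?_⟩
  have e : Z.lamc F s = ∫ x, Complex.exp (Complex.I * ((s * F x : ℝ) : ℂ)) *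
      ((Z.ρ x / Z.M : ℝ) : ℂ) ∂ν := by
    rw [lamc, Z.integral_μ, ← integral_div]
    refine integral_congr_ae (ae_of_all _ fun x => ?_)
    simp only [ee, Complex.real_smul]
    push_cast; ring
  rw [e]
  exact h s hs B g hg N

/-- The characteristic function of the induced Birkhoff sums, weighted by the return time. -/
theorem excursion {F : X → ℝ} (hF : Z.S.BL F) {s : ℕ → ℝ} {k : ℕ → ℕ}
    (hs : Tendsto s atTop (𝓝 0)) (hk : Tendsto (fun n => k n * s n ^ 2) atTop (𝓝 0)) :
    Tendsto (fun n => ∫ x, (((Z.D.N x : ℝ) + 1 : ℝ) : ℂ) *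
        ee (s n * birkhoffSum Z.D.J F (k n + 1) x) ∂Z.μ - Z.lamc F (s n) ^ k n) atTop (𝓝 0) := by
  obtain ⟨hφi, hφ1⟩ := Z.D.kac_phi Z.inv
  change Integrable _ Z.μ at hφi
  change ∫ x, _ ∂Z.μ = 1 at hφ1
  set φ : X → ℝ := fun x => (Z.D.N x : ℝ) + 1 with hφ
  have hφm : Measurable φ := (measurable_from_top.comp Z.D.N_meas).add_const 1
  have hφ0 : ∀ x, 0 ≤ φ x := fun x => by positivity
  have hBm : ∀ j, Measurable (birkhoffSum Z.D.J F j) := fun j =>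
    Induced.birk_meas Z.D.J_meas hF.1 j
  -- dropping the first excursion
  have hA : Tendsto (fun n => ∫ x, ((φ x : ℝ) : ℂ) * ee (s n * birkhoffSum Z.D.J F (k n + 1) x) ∂Z.μ
      - ∫ x, ((φ x : ℝ) : ℂ) * ee (s n * birkhoffSum Z.D.J F (k n) (Z.D.J x)) ∂Z.μ)
      atTop (𝓝 0) := by
    have hdom : Tendsto (fun n => ∫ x, φ x * min 2 |s n * F x| ∂Z.μ) atTop (𝓝 0) := by
      have h0 : (0:ℝ) = ∫ x, (0:ℝ) ∂Z.μ := by simp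
      rw [h0]
      refine tendsto_integral_of_dominated_convergence (fun x => φ x * 2)
        (fun n => (hφm.mul (measurable_const.min (hF.1.const_mul _).abs)).aestronglyMeasurable)
        (hφi.mul_const 2) (fun n => ae_of_all _ fun x => ?_) (ae_of_all _ fun x => ?_)
      · rw [Real.norm_of_nonneg (mul_nonneg (hφ0 x) (le_min (by norm_num) (abs_nonneg _)))]
        exact mul_le_mul_of_nonneg_left (min_le_left _ _) (hφ0 x)
      · have h1 : Tendsto (fun n => |s n * F x|) atTop (𝓝 0) := by
          simpa using (hs.mul_const (F x)).abs
        have h2 := ((tendsto_const_nhds (x := (2:ℝ))).min h1).const_mul (φ x)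
        rwa [min_eq_right (by norm_num), mul_zero] at h2
    have hintg : ∀ (u : X → ℝ), Measurable u → Integrable (fun x => ((φ x : ℝ) : ℂ) * ee (u x)) Z.μ :=
      fun u hu => hφi.ofReal.mul_bdd (c := 1) (ee_cont.measurable.comp hu).aestronglyMeasurable
        (ae_of_all _ fun x => (ee_norm _).le)
    refine squeeze_zero_norm (fun n => ?_) hdom
    have hBJ : Measurable fun x => s n * birkhoffSum Z.D.J F (k n) (Z.D.J x) :=
      ((hBm _).comp Z.D.J_meas).const_mul _
    rw [← integral_sub (hintg _ ((hBm _).const_mul _)) (hintg _ hBJ)]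
    refine norm_integral_le_of_norm_le ?_ (ae_of_all _ fun x => ?_)
    · refine (hφi.mul_const 2).mono'
        (hφm.mul (measurable_const.min (hF.1.const_mul _).abs)).aestronglyMeasurable
        (ae_of_all _ fun x => ?_)
      rw [Real.norm_of_nonneg (mul_nonneg (hφ0 x) (le_min (by norm_num) (abs_nonneg _)))]
      exact mul_le_mul_of_nonneg_left (min_le_left _ _) (hφ0 x)
    · rw [← mul_sub, norm_mul, Complex.norm_real, Real.norm_of_nonneg (hφ0 x)]
      refine mul_le_mul_of_nonneg_left ((ee_sub_le _ _).trans ?_) (hφ0 x)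
      rw [birkhoffSum_succ', ← mul_sub, add_sub_cancel_right]
  -- the transfer operator turns the weight into a Lipschitz function
  obtain ⟨B, hB⟩ := Z.ρ_lip
  have hBL := Z.BL_N 0
  simp only [add_zero] at hBL
  obtain ⟨-, bn, hb1, hb2, hb3⟩ := hBL
  have hBc : LipB B fun x => ((Z.ρ x : ℝ) : ℂ) :=
    ⟨fun x => by rw [Complex.norm_real]; exact hB.1 x, fun x y => by
      rw [← Complex.ofReal_sub, Complex.norm_real]; exact hB.2 x y⟩
  have hb1' : ∀ n x, ‖((φ (Z.S.V n x) : ℝ) : ℂ)‖ ≤ bn n := fun n x => by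
    rw [Complex.norm_real]; exact hb1 n x
  have hL := Z.S.P_mul (b := fun x => ((φ x : ℝ) : ℂ)) hb1' (fun n x y => by
    rw [← Complex.ofReal_sub, Complex.norm_real]; exact hb2 n x y) hb3 hBc
  set B' := (Z.S.K * exp Z.S.K + 2) * (∑' n, Z.S.wb n * bn n) * B
  set g := Z.S.P fun x => ((φ x : ℝ) : ℂ) * ((Z.ρ x : ℝ) : ℂ) with hg
  have hGm : Measurable fun x => ((φ x : ℝ) : ℂ) * ((Z.ρ x : ℝ) : ℂ) :=
    (Complex.measurable_ofReal.comp hφm).mul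
      (Complex.measurable_ofReal.comp Z.ρ_facts.1.measurable)
  have hbb : ∀ n x, ‖((φ (Z.S.V n x) : ℝ) : ℂ) * ((Z.ρ (Z.S.V n x) : ℝ) : ℂ)‖ ≤ bn n * B :=
    fun n x => by
      rw [norm_mul]
      exact mul_le_mul (hb1' n x) (hBc.1 _) (norm_nonneg _) ((norm_nonneg _).trans (hb1' n x))
  have hss : Summable fun n => Z.S.wb n * (bn n * B) := by
    simpa only [mul_assoc] using hb3.mul_right B
  have hgi : ∫ x, g x ∂ν = 1 := by
    rw [hg, Z.S.integral_P hGm.stronglyMeasurable hbb hss]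
    have := Z.integral_μ φ
    rw [hφ1] at this
    have h2 : ((1:ℝ):ℂ) = ∫ x, ((Z.ρ x • φ x : ℝ) : ℂ) ∂ν := by rw [this, integral_complex_ofReal]
    rw [← Complex.ofReal_one, h2]
    refine integral_congr_ae (ae_of_all _ fun x => ?_)
    simp [mul_comm]
  have hcomp : ∀ n, ∫ x, ((φ x : ℝ) : ℂ) * ee (s n * birkhoffSum Z.D.J F (k n) (Z.D.J x)) ∂Z.μ
      = ∫ x, ee (s n * birkhoffSum Z.D.J F (k n) x) * g x ∂ν := by
    intro n
    rw [hg, ← Z.S.integral_comp_mul Z.D.J_meas (ae_of_all _ fun x n => Z.JV n x)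
      (ψ := fun x => ee (s n * birkhoffSum Z.D.J F (k n) x))
      (ee_cont.measurable.comp ((hBm _).const_mul _)) (M := 1) (fun x => (ee_norm _).le) hGm hbb hss,
      Z.integral_μ]
    refine integral_congr_ae (ae_of_all _ fun x => ?_)
    simp only [Complex.real_smul]; ring
  obtain ⟨C, s₀, hC, hs₀, hp⟩ := Z.pert hF
  have hBb : Tendsto (fun n => ∫ x, ((φ x : ℝ) : ℂ) * ee (s n * birkhoffSum Z.D.J F (k n) (Z.D.J x)) ∂Z.μ
      - Z.lamc F (s n) ^ k n) atTop (𝓝 0) := by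
    have hlim : Tendsto (fun n => C * B' * (|s n| + k n * s n ^ 2)) atTop (𝓝 0) := by
      have := (hs.abs.add hk).const_mul (C * B')
      simpa using this
    refine squeeze_zero_norm' ?_ hlim
    have hev : ∀ᶠ n in atTop, |s n| ≤ s₀ := by
      have := hs.abs
      rw [abs_zero] at this
      exact this.eventually_le_const hs₀
    filter_upwards [hev] with n hn
    rw [hcomp]
    have := hp (s n) hn B' g hL (k n)
    rwa [hgi, mul_one] at this
  have := hA.add hBb
  simp only [sub_add_sub_cancel, add_zero] at this
  exact this

end RenewalSys
end Sys

/-! ### Concentration of the return times -/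

lemma tendsto_zero_of_le {u : ℕ → ℝ} (h0 : ∀ n, 0 ≤ u n)
    (h : ∀ η > 0, ∀ᶠ n in atTop, u n ≤ η) : Tendsto u atTop (𝓝 0) := by
  rw [Metric.tendsto_nhds]
  intro ε hε
  filter_upwards [h (ε / 2) (by positivity)] with n hn
  rw [Real.dist_eq, sub_zero, abs_of_nonneg (h0 n)]; linarith

section Sys

variable {X : Type*} [MetricSpace X] [MeasurableSpace X] [BorelSpace X] [SecondCountableTopology X]

/-- If the characteristic functions converge to one, the variables converge to zero in measure. -/
lemma charFun_conv {P : Measure X} [IsProbabilityMeasure P] {Y : ℕ → X → ℝ}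
    (hY : ∀ n, Measurable (Y n))
    (h : ∀ t : ℝ, Tendsto (fun n => ∫ x, ee (t * Y n x) ∂P) atTop (𝓝 1)) {r : ℝ} (hr : 0 < r) :
    Tendsto (fun n => P.real {x | r < |Y n x|}) atTop (𝓝 0) := by
  have hp : ∀ n, IsProbabilityMeasure (P.map (Y n)) := fun n =>
    Measure.isProbabilityMeasure_map (hY n).aemeasurable
  have hc : ∀ n t, charFun (P.map (Y n)) t = ∫ x, ee (t * Y n x) ∂P := by
    intro n t
    rw [charFun_apply_real, integral_map (hY n).aemeasurable
      (Continuous.aestronglyMeasurable (by fun_prop))]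
    refine integral_congr_ae (ae_of_all _ fun x => ?_)
    simp only [ee]; congr 1; push_cast; ring
  have hlim : Tendsto (fun n => 2⁻¹ * r * ‖∫ t in (-2 * r⁻¹)..(2 * r⁻¹), 1 - charFun (P.map (Y n)) t‖)
      atTop (𝓝 0) := by
    have h1 : Tendsto (fun n => ∫ t in (-2 * r⁻¹)..(2 * r⁻¹), 1 - charFun (P.map (Y n)) t) atTop
        (𝓝 (∫ t in (-2 * r⁻¹)..(2 * r⁻¹), (0:ℂ))) := by
      refine intervalIntegral.tendsto_integral_filter_of_dominated_convergence (fun _ => 2)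
        (Eventually.of_forall fun n => ?_) (Eventually.of_forall fun n => ae_of_all _ fun t _ => ?_)
        (by simp) (ae_of_all _ fun t _ => ?_)
      · exact (measurable_const.sub measurable_charFun).aestronglyMeasurable
      · have := hp n; exact norm_one_sub_charFun_le_two
      · simp only [hc]
        simpa using (tendsto_const_nhds (x := (1:ℂ))).sub (h t)
    have := (h1.norm).const_mul (2⁻¹ * r)
    simpa using this
  refine squeeze_zero (fun _ => measureReal_nonneg) (fun n => ?_) hlim
  have := hp n
  have hb := measureReal_abs_gt_le_integral_charFun (μ := P.map (Y n)) hr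
  have hms : MeasurableSet {x : ℝ | r < |x|} := measurableSet_lt measurable_const measurable_id.abs
  rwa [map_measureReal_apply (hY n) hms] at hb

namespace RenewalSys

variable {ν m : Measure X} [IsProbabilityMeasure ν] [IsProbabilityMeasure m] [Nonempty X]
  (Z : RenewalSys ν m)

lemma lamc_sub_one_eq {F : X → ℝ} (hF : Z.S.BL F) (h0 : ∫ x, F x ∂Z.μ = 0) (s : ℝ) :
    Z.lamc F s - 1
      = (∫ x, (ee (s * F x) - 1 - Complex.I * ((s * F x : ℝ) : ℂ)) ∂Z.μ) / Z.M := by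
  have hM := Z.M_pos'
  have hFi := Z.BL_integrable hF
  have hei := ee_integrable (hF.1.const_mul s) Z.μ
  have hI : Integrable (fun x => Complex.I * ((s * F x : ℝ) : ℂ)) Z.μ :=
    ((hFi.const_mul s).ofReal).const_mul _
  have hei1 : Integrable (fun x => ee (s * F x) - 1) Z.μ := hei.sub (integrable_const _)
  rw [integral_sub hei1 hI, integral_sub hei (integrable_const _),
    integral_const_mul, integral_complex_ofReal, integral_const_mul, h0, lamc]
  have hMc : (Z.M : ℂ) ≠ 0 := by exact_mod_cast hM.ne'
  rw [integral_const, ← Z.M_eq, Complex.real_smul]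
  field_simp
  simp

lemma lamc_sub_one_le {F : X → ℝ} (hF : Z.S.BL F) (h0 : ∫ x, F x ∂Z.μ = 0) {q : ℝ} (h1 : 1 ≤ q)
    (h2 : q ≤ 2) (hq : Integrable (fun x => |F x| ^ q) Z.μ) (s : ℝ) :
    ‖Z.lamc F s - 1‖ ≤ 2 * |s| ^ q * (∫ x, |F x| ^ q ∂Z.μ) / Z.M := by
  have hM := Z.M_pos'
  rw [Z.lamc_sub_one_eq hF h0, norm_div, Complex.norm_real, Real.norm_of_nonneg hM.le]
  refine div_le_div_of_nonneg_right ?_ hM.le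
  rw [← integral_const_mul]
  refine norm_integral_le_of_norm_le (hq.const_mul _) (ae_of_all _ fun x => ?_)
  refine (ee_sub_sub_le _ h1 h2).trans (le_of_eq ?_)
  rw [abs_mul, Real.mul_rpow (abs_nonneg _) (abs_nonneg _)]; ring

/-- Return times concentrate around their mean at every scale `a n` with `k n = o (a n ^ q)`,
as soon as they have a moment of order `q`. -/
theorem conc {q : ℝ} (h1 : 1 ≤ q) (h2 : q ≤ 2)
    (hq : Integrable (fun x => ((Z.D.N x : ℝ) + 1) ^ q) Z.μ) {a : ℕ → ℝ} {k : ℕ → ℕ}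
    (ha : Tendsto a atTop atTop) (hka : Tendsto (fun n => k n / a n ^ q) atTop (𝓝 0))
    (hk2 : Tendsto (fun n => k n / a n ^ 2) atTop (𝓝 0)) {δ : ℝ} (hδ : 0 < δ) :
    Tendsto (fun n => Z.μ.real {x | δ * a n < |(Z.D.tau (k n) x : ℝ) - k n / Z.M|})
      atTop (𝓝 0) := by
  have hM := Z.M_pos'
  obtain ⟨hφi, hφ1⟩ := Z.D.kac_phi Z.inv
  change Integrable _ Z.μ at hφi
  change ∫ x, _ ∂Z.μ = 1 at hφ1
  set F : X → ℝ := fun x => (Z.D.N x : ℝ) + 1 + -(1 / Z.M) with hFdef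
  have hF : Z.S.BL F := Z.BL_N _
  have hF0 : ∫ x, F x ∂Z.μ = 0 := by
    rw [hFdef, integral_add hφi (integrable_const _), hφ1, integral_const, ← Z.M_eq, smul_eq_mul]
    field_simp; ring
  have hFq : Integrable (fun x => |F x| ^ q) Z.μ := by
    refine (hq.const_mul ((1 + 1 / Z.M) ^ q)).mono'
      ((hF.1.abs.pow_const q).aestronglyMeasurable) (ae_of_all _ fun x => ?_)
    rw [Real.norm_of_nonneg (by positivity), ← Real.mul_rpow (by positivity) (by positivity)]
    refine Real.rpow_le_rpow (abs_nonneg _) ((abs_add_le _ _).trans ?_) (by linarith)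
    rw [abs_neg, abs_of_nonneg (by positivity : (0:ℝ) ≤ (Z.D.N x : ℝ) + 1),
      abs_of_nonneg (by positivity)]
    have hn : (0:ℝ) ≤ Z.D.N x := by positivity
    have : 0 ≤ 1 / Z.M * Z.D.N x := by positivity
    nlinarith
  have hsum : ∀ j x, birkhoffSum Z.D.J F j x = (Z.D.tau j x : ℝ) - j / Z.M := by
    intro j x
    simp only [birkhoffSum, hFdef, Induced.tau, Finset.sum_add_distrib]
    push_cast
    simp [Finset.sum_add_distrib]
    ring
  set P : Measure X := (ENNReal.ofReal (1 / Z.M)) • Z.μ with hP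
  have hPp : IsProbabilityMeasure P := by
    constructor
    rw [hP, Measure.smul_apply, smul_eq_mul, ← ofReal_measureReal (measure_ne_top _ _), ← Z.M_eq,
      ← ENNReal.ofReal_mul (by positivity), one_div_mul_cancel hM.ne', ENNReal.ofReal_one]
  have hPint : ∀ ψ : X → ℂ, ∫ x, ψ x ∂P = (∫ x, ψ x ∂Z.μ) / Z.M := by
    intro ψ
    rw [hP, integral_smul_measure, ENNReal.toReal_ofReal (by positivity), Complex.real_smul]
    push_cast; ring
  set Y : ℕ → X → ℝ := fun n x => birkhoffSum Z.D.J F (k n) x / a n with hYdef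
  have hYm : ∀ n, Measurable (Y n) := fun n => (Induced.birk_meas Z.D.J_meas hF.1 _).div_const _
  obtain ⟨B, hB⟩ := Z.ρ_lip
  have hBc : LipB B fun x => ((Z.ρ x : ℝ) : ℂ) :=
    ⟨fun x => by rw [Complex.norm_real]; exact hB.1 x, fun x y => by
      rw [← Complex.ofReal_sub, Complex.norm_real]; exact hB.2 x y⟩
  obtain ⟨C, s₀, hC, hs₀, hp⟩ := Z.pert hF
  have hchar : ∀ t : ℝ, Tendsto (fun n => ∫ x, ee (t * Y n x) ∂P) atTop (𝓝 1) := by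
    intro t
    set s : ℕ → ℝ := fun n => t / a n with hsdef
    have hs : Tendsto s atTop (𝓝 0) := ha.const_div_atTop t
    have hks : Tendsto (fun n => k n * s n ^ 2) atTop (𝓝 0) := by
      have := hk2.mul_const (t ^ 2)
      rw [zero_mul] at this
      refine this.congr fun n => ?_
      simp only [hsdef]; ring
    have hA : Tendsto (fun n => ∫ x, ee (t * Y n x) ∂P - Z.lamc F (s n) ^ k n) atTop (𝓝 0) := by
      have hlim : Tendsto (fun n => C * B * (|s n| + k n * s n ^ 2) / Z.M) atTop (𝓝 0) := by
        have := ((hs.abs.add hks).const_mul (C * B)).div_const Z.M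
        simpa using this
      refine squeeze_zero_norm' ?_ hlim
      have hev : ∀ᶠ n in atTop, |s n| ≤ s₀ := by
        have := hs.abs
        rw [abs_zero] at this
        exact this.eventually_le_const hs₀
      filter_upwards [hev] with n hn
      have h3 := hp (s n) hn B _ hBc (k n)
      have hMc : (Z.M : ℂ) ≠ 0 := by exact_mod_cast hM.ne'
      have e1 : ∫ x, ((Z.ρ x : ℝ) : ℂ) ∂ν = Z.M := integral_complex_ofReal
      have e2 : ∫ x, ee (t * Y n x) ∂P = (∫ x, ee (s n * birkhoffSum Z.D.J F (k n) x) *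
          ((Z.ρ x : ℝ) : ℂ) ∂ν) / Z.M := by
        rw [hPint, Z.integral_μ]
        congr 1
        refine integral_congr_ae (ae_of_all _ fun x => ?_)
        simp only [Complex.real_smul, hYdef, hsdef]
        rw [mul_comm, mul_div_assoc', div_mul_eq_mul_div]
      have e3 : ∫ x, ee (t * Y n x) ∂P - Z.lamc F (s n) ^ k n
          = (∫ x, ee (s n * birkhoffSum Z.D.J F (k n) x) * ((Z.ρ x : ℝ) : ℂ) ∂ν
            - Z.lamc F (s n) ^ k n * Z.M) / Z.M := by
        rw [e2]; field_simp
      rw [e3, norm_div, Complex.norm_real, Real.norm_of_nonneg hM.le]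
      rw [e1] at h3
      exact div_le_div_of_nonneg_right h3 hM.le
    have hBb : Tendsto (fun n => Z.lamc F (s n) ^ k n - 1) atTop (𝓝 0) := by
      have hlim : Tendsto (fun n => (2 * |t| ^ q * (∫ x, |F x| ^ q ∂Z.μ) / Z.M) * (k n / a n ^ q))
          atTop (𝓝 0) := by
        simpa using hka.const_mul (2 * |t| ^ q * (∫ x, |F x| ^ q ∂Z.μ) / Z.M)
      refine squeeze_zero_norm' ?_ hlim
      filter_upwards [ha.eventually_gt_atTop 0] with n hn
      refine (norm_pow_sub_one_le (Z.lamc_norm_le _) _).trans ?_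
      have h3 := Z.lamc_sub_one_le hF hF0 h1 h2 hFq (s n)
      refine (mul_le_mul_of_nonneg_left h3 (by positivity)).trans (le_of_eq ?_)
      have : |s n| ^ q = |t| ^ q / a n ^ q := by
        simp only [hsdef]
        rw [abs_div, abs_of_pos hn, Real.div_rpow (abs_nonneg _) hn.le]
      rw [this]; ring
    have := (hA.add hBb).add_const 1
    simpa using this
  have hfin := (charFun_conv hYm hchar hδ).const_mul Z.M
  rw [mul_zero] at hfin
  refine hfin.congr' ?_
  filter_upwards [ha.eventually_gt_atTop 0] with n hn
  have e : {x | δ * a n < |(Z.D.tau (k n) x : ℝ) - k n / Z.M|} = {x | δ < |Y n x|} := by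
    ext x
    simp only [Set.mem_setOf_eq, hYdef, hsum, abs_div, abs_of_pos hn, lt_div_iff₀ hn]
  rw [e, hP, measureReal_ennreal_smul_apply, ENNReal.toReal_ofReal (by positivity)]
  field_simp

end RenewalSys
end Sys

/-! ### From a fixed number of excursions to a fixed time -/

section Sys

variable {X : Type*} [MetricSpace X] [MeasurableSpace X] [BorelSpace X] [SecondCountableTopology X]

lemma birk_mono {T : X → X} {g : X → ℝ} (hg : ∀ x, 0 ≤ g x) {i j : ℕ} (h : i ≤ j) (x : X) :
    birkhoffSum T g i x ≤ birkhoffSum T g j x :=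
  Finset.sum_le_sum_of_subset_of_nonneg (Finset.range_mono h) fun _ _ _ => hg _

/-- Deterministic comparison of the sum up to time `n` with the sum up to the `k`-th arrival, when
this arrival happens within `r` of time `n`: since each excursion takes at least one unit of
time, at most `2r` excursions matter. -/
lemma Induced.compare (D : Induced X) {g : X → ℝ} (hg : ∀ x, 0 ≤ g x) (c : ℝ) {n k r : ℕ} {x : X}
    (h : |(D.tau k x : ℝ) - n| ≤ r) :
    |birkhoffSum D.T (fun y => g y + c) n x - birkhoffSum D.T (fun y => g y + c) (D.tau k x) x|
      ≤ birkhoffSum D.J (D.ind g) (k + r - (k - r)) (D.J^[k - r] x) + |c| * r := by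
  have hc : ∀ j, birkhoffSum D.T (fun y => g y + c) j x = birkhoffSum D.T g j x + c * j := by
    intro j; simp [birkhoffSum, Finset.sum_add_distrib, mul_comm]
  rw [hc, hc]
  obtain ⟨ha, hb⟩ := abs_le.1 h
  have ha' : n ≤ D.tau k x + r := by
    have : (n:ℝ) ≤ D.tau k x + r := by linarith
    exact_mod_cast this
  have hb' : D.tau k x ≤ n + r := by
    have : (D.tau k x:ℝ) ≤ n + r := by linarith
    exact_mod_cast this
  have h1 : D.tau (k - r) x ≤ n ∧ D.tau (k - r) x ≤ D.tau k x := by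
    rcases le_total r k with hrk | hrk
    · have := D.tau_add (k - r) r x
      rw [Nat.sub_add_cancel hrk] at this
      have h2 := D.le_tau r (D.J^[k - r] x)
      omega
    · rw [Nat.sub_eq_zero_of_le hrk]; simp [Induced.tau]
  have h2 : n ≤ D.tau (k + r) x ∧ D.tau k x ≤ D.tau (k + r) x := by
    have := D.tau_add k r x
    have h2 := D.le_tau r (D.J^[k] x)
    omega
  have h3 : birkhoffSum D.T g (D.tau (k + r) x) x = birkhoffSum D.T g (D.tau (k - r) x) x
      + birkhoffSum D.J (D.ind g) (k + r - (k - r)) (D.J^[k - r] x) := by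
    rw [← D.sum_ind, ← D.sum_ind, ← birkhoffSum_add]
    congr 1; omega
  have m1 := birk_mono (T := D.T) hg h1.1 x
  have m2 := birk_mono (T := D.T) hg h1.2 x
  have m3 := birk_mono (T := D.T) hg h2.1 x
  have m4 := birk_mono (T := D.T) hg h2.2 x
  have h4 : |birkhoffSum D.T g n x - birkhoffSum D.T g (D.tau k x) x|
      ≤ birkhoffSum D.J (D.ind g) (k + r - (k - r)) (D.J^[k - r] x) := by
    rw [abs_le]; constructor <;> linarith
  have h5 : |c * (n - D.tau k x)| ≤ |c| * r := by
    rw [abs_mul, abs_sub_comm]; exact mul_le_mul_of_nonneg_left h (abs_nonneg _)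
  calc _ = |(birkhoffSum D.T g n x - birkhoffSum D.T g (D.tau k x) x) + c * (n - D.tau k x)| := by
        congr 1; ring
    _ ≤ _ := (abs_add_le _ _).trans (add_le_add h4 h5)

namespace RenewalSys

variable {ν m : Measure X} [IsProbabilityMeasure ν] [IsProbabilityMeasure m] [Nonempty X]
  (Z : RenewalSys ν m)

/-- The number of excursions completed by time `n`, on average. -/
noncomputable def kn (n : ℕ) : ℕ := ⌊n * Z.M⌋₊

lemma integral_birk {G : X → ℝ} (hG : Integrable G Z.μ) (hGm : Measurable G) (p l : ℕ) :
    Integrable (fun x => birkhoffSum Z.D.J G p (Z.D.J^[l] x)) Z.μ ∧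
    ∫ x, birkhoffSum Z.D.J G p (Z.D.J^[l] x) ∂Z.μ = p * ∫ x, G x ∂Z.μ := by
  have hi : ∀ j, Integrable (fun x => G (Z.D.J^[j] x)) Z.μ ∧
      ∫ x, G (Z.D.J^[j] x) ∂Z.μ = ∫ x, G x ∂Z.μ := by
    intro j
    have hJ := Z.J_pres.iterate j
    refine ⟨hJ.integrable_comp_of_integrable hG, ?_⟩
    have h2 := integral_map (μ := Z.μ) hJ.measurable.aemeasurable (f := G) hGm.aestronglyMeasurable
    rw [hJ.map_eq] at h2
    exact h2.symm
  simp only [birkhoffSum, ← Function.iterate_add_apply]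
  refine ⟨integrable_finset_sum _ fun i _ => (hi _).1, ?_⟩
  rw [integral_finset_sum _ fun i _ => (hi _).1]
  simp [(hi _).2]

/-- Birkhoff sums up to time `n` and up to the end of the excursion number `kn n + 1` differ by
`o(a n)` in measure: by `conc` these times differ by `o(a n)`, so by `Induced.compare` and
invariance the difference of the sums has mean `o(a n)`. -/
lemma fixed_time_measure {q : ℝ} (h1 : 1 ≤ q) (h2 : q ≤ 2)
    (hq : Integrable (fun x => ((Z.D.N x : ℝ) + 1) ^ q) Z.μ) {a : ℕ → ℝ}
    (ha : Tendsto a atTop atTop) (hka : Tendsto (fun n => ((Z.kn n + 1 : ℕ) : ℝ) / a n ^ q) atTop (𝓝 0))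
    (hk2 : Tendsto (fun n => ((Z.kn n + 1 : ℕ) : ℝ) / a n ^ 2) atTop (𝓝 0))
    {g : X → ℝ} (hg : Measurable g) (hg0 : ∀ x, 0 ≤ g x) (hgi : Integrable g m) (c : ℝ)
    {ε : ℝ} (hε : 0 < ε) :
    Tendsto (fun n => Z.μ.real {x | ε * a n < |birkhoffSum Z.D.T (fun y => g y + c) n x
      - birkhoffSum Z.D.T (fun y => g y + c) (Z.D.tau (Z.kn n + 1) x) x|}) atTop (𝓝 0) := by
  have hM := Z.M_pos'
  obtain ⟨hGi, -⟩ := Z.D.kac_integrable Z.inv hg hg0 hgi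
  change Integrable _ Z.μ at hGi
  have hGm := Z.D.ind_meas hg
  set G := Z.D.ind g with hG
  have hG0 : ∀ x, 0 ≤ G x := Z.D.ind_nonneg hg0
  set I := ∫ x, G x ∂Z.μ with hI
  have hI0 : 0 ≤ I := integral_nonneg hG0
  refine tendsto_zero_of_le (fun _ => measureReal_nonneg) fun η hη => ?_
  -- the precision at which the arrival time is located
  set δ : ℝ := min (ε / (8 * (|c| + 1))) (η * ε / (16 * (I + 1))) with hδdef
  have hδ : 0 < δ := by positivity
  have hδ1 : δ * |c| ≤ ε / 8 := by
    have : δ ≤ ε / (8 * (|c| + 1)) := min_le_left _ _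
    rw [le_div_iff₀ (by positivity)] at this
    nlinarith [abs_nonneg c]
  have hδ2 : δ * I ≤ η * ε / 16 := by
    have : δ ≤ η * ε / (16 * (I + 1)) := min_le_right _ _
    rw [le_div_iff₀ (by positivity)] at this
    nlinarith
  have hconc := Z.conc h1 h2 hq ha hka hk2 hδ
  filter_upwards [hconc.eventually_le_const (by positivity : (0:ℝ) < η / 2),
    ha.eventually_gt_atTop 0, ha.eventually_ge_atTop ((1 / Z.M + 1) / δ)] with n hn hpos hbig
  rw [div_le_iff₀ hδ] at hbig
  set k := Z.kn n + 1 with hk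
  set r := ⌈δ * a n + 1 / Z.M⌉₊ with hr
  have hr1 : δ * a n + 1 / Z.M ≤ r := Nat.le_ceil _
  have hr2 : (r:ℝ) ≤ 2 * δ * a n := by
    have := Nat.ceil_lt_add_one (a := δ * a n + 1 / Z.M) (by positivity)
    rw [← hr] at this; nlinarith
  have hkn : |(k:ℝ) / Z.M - n| ≤ 1 / Z.M := by
    have e1 : (Z.kn n : ℝ) ≤ n * Z.M := Nat.floor_le (by positivity)
    have e2 : n * Z.M < Z.kn n + 1 := Nat.lt_floor_add_one _
    have : (k:ℝ) = Z.kn n + 1 := by rw [hk]; push_cast; ring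
    rw [this, div_sub' hM.ne', abs_div, abs_of_pos hM]
    refine div_le_div_of_nonneg_right ?_ hM.le
    rw [abs_le]; constructor <;> linarith
  have hsub : {x | ε * a n < |birkhoffSum Z.D.T (fun y => g y + c) n x
      - birkhoffSum Z.D.T (fun y => g y + c) (Z.D.tau k x) x|}
      ⊆ {x | δ * a n < |(Z.D.tau k x : ℝ) - k / Z.M|} ∪
        {x | ε / 2 * a n ≤ birkhoffSum Z.D.J G (k + r - (k - r)) (Z.D.J^[k - r] x)} := by
    intro x hx
    by_contra hcon
    simp only [Set.mem_union, Set.mem_setOf_eq, not_or, not_lt, not_le] at hcon hx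
    have h3 : |(Z.D.tau k x : ℝ) - n| ≤ r := by
      refine le_trans ?_ hr1
      calc |(Z.D.tau k x : ℝ) - n| = |((Z.D.tau k x : ℝ) - k / Z.M) + (k / Z.M - n)| := by
            congr 1; ring
        _ ≤ _ := (abs_add_le _ _).trans (add_le_add hcon.1 hkn)
    have h4 := Z.D.compare hg0 c h3
    have h5 : |c| * r ≤ ε / 4 * a n := by
      calc |c| * r ≤ |c| * (2 * δ * a n) := mul_le_mul_of_nonneg_left hr2 (abs_nonneg _)
        _ = 2 * (δ * |c|) * a n := by ring
        _ ≤ 2 * (ε / 8) * a n := by gcongr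
        _ = _ := by ring
    have h6 := hcon.2
    rw [hG] at h6
    nlinarith
  refine (measureReal_mono hsub).trans ((measureReal_union_le _ _).trans ?_)
  have hmark : Z.μ.real {x | ε / 2 * a n ≤ birkhoffSum Z.D.J G (k + r - (k - r)) (Z.D.J^[k - r] x)}
      ≤ η / 2 := by
    obtain ⟨hi1, hi2⟩ := Z.integral_birk hGi hGm (k + r - (k - r)) (k - r)
    have := mul_meas_ge_le_integral_of_nonneg (μ := Z.μ)
      (f := fun x => birkhoffSum Z.D.J G (k + r - (k - r)) (Z.D.J^[k - r] x))
      (ae_of_all _ fun x => Finset.sum_nonneg fun i _ => hG0 _) hi1 (ε / 2 * a n)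
    rw [hi2] at this
    have hp : ((k + r - (k - r) : ℕ) : ℝ) ≤ 4 * δ * a n := by
      have : k + r - (k - r) ≤ 2 * r := by omega
      have h' : ((k + r - (k - r) : ℕ) : ℝ) ≤ 2 * r := by exact_mod_cast this
      linarith
    have h7 : ((k + r - (k - r) : ℕ) : ℝ) * I ≤ η / 2 * (ε / 2 * a n) := by
      calc ((k + r - (k - r) : ℕ) : ℝ) * I ≤ (4 * δ * a n) * I := mul_le_mul_of_nonneg_right hp hI0
        _ = 4 * (δ * I) * a n := by ring
        _ ≤ 4 * (η * ε / 16) * a n := by gcongr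
        _ = _ := by ring
    have hpos2 : 0 < ε / 2 * a n := by positivity
    refine le_of_mul_le_mul_left ?_ hpos2
    exact this.trans (h7.trans (le_of_eq (mul_comm _ _)))
  linarith

/-- The sum up to time `n` may be replaced by the sum over `kn n + 1` excursions. -/
theorem fixed_time {q : ℝ} (h1 : 1 ≤ q) (h2 : q ≤ 2)
    (hq : Integrable (fun x => ((Z.D.N x : ℝ) + 1) ^ q) Z.μ) {a : ℕ → ℝ}
    (ha : Tendsto a atTop atTop) (hka : Tendsto (fun n => ((Z.kn n + 1 : ℕ) : ℝ) / a n ^ q) atTop (𝓝 0))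
    (hk2 : Tendsto (fun n => ((Z.kn n + 1 : ℕ) : ℝ) / a n ^ 2) atTop (𝓝 0))
    {g : X → ℝ} (hg : Measurable g) (hg0 : ∀ x, 0 ≤ g x) (hgi : Integrable g m) (c t : ℝ) :
    Tendsto (fun n => ∫ x, (((Z.D.N x : ℝ) + 1 : ℝ) : ℂ) *
        ee (t / a n * birkhoffSum Z.D.T (fun y => g y + c) n x) ∂Z.μ
      - ∫ x, (((Z.D.N x : ℝ) + 1 : ℝ) : ℂ) *
        ee (t / a n * birkhoffSum Z.D.J (Z.D.ind fun y => g y + c) (Z.kn n + 1) x) ∂Z.μ)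
      atTop (𝓝 0) := by
  obtain ⟨hφi, hφ1⟩ := Z.D.kac_phi Z.inv
  change Integrable _ Z.μ at hφi
  change ∫ x, _ ∂Z.μ = 1 at hφ1
  set φ : X → ℝ := fun x => (Z.D.N x : ℝ) + 1 with hφ
  have hφm : Measurable φ := (measurable_from_top.comp Z.D.N_meas).add_const 1
  have hφ0 : ∀ x, 0 ≤ φ x := fun x => by positivity
  have hfm : Measurable fun y => g y + c := hg.add_const c
  have hBT := fun n => Induced.birk_meas Z.D.T_meas hfm n
  have hBJ := fun n => Induced.birk_meas Z.D.J_meas (Z.D.ind_meas hfm) n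
  have hintg : ∀ (u : X → ℝ), Measurable u → Integrable (fun x => ((φ x : ℝ) : ℂ) * ee (u x)) Z.μ :=
    fun u hu => hφi.ofReal.mul_bdd (c := 1) (ee_cont.measurable.comp hu).aestronglyMeasurable
      (ae_of_all _ fun x => (ee_norm _).le)
  rw [tendsto_zero_iff_norm_tendsto_zero]
  refine tendsto_zero_of_le (fun _ => norm_nonneg _) fun η hη => ?_
  set ε : ℝ := η / (2 * (|t| + 1)) with hεdef
  have hε : 0 < ε := by positivity
  set A : ℕ → Set X := fun n => {x | ε * a n < |birkhoffSum Z.D.T (fun y => g y + c) n x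
      - birkhoffSum Z.D.T (fun y => g y + c) (Z.D.tau (Z.kn n + 1) x) x|} with hA
  have hAm : ∀ n, MeasurableSet (A n) := by
    intro n
    have e : A n = {x | ε * a n < |birkhoffSum Z.D.T (fun y => g y + c) n x
      - birkhoffSum Z.D.J (Z.D.ind fun y => g y + c) (Z.kn n + 1) x|} := by
      simp only [hA, Z.D.sum_ind]
    rw [e]
    exact measurableSet_lt measurable_const ((hBT n).sub (hBJ _)).abs
  have hA0 := Z.fixed_time_measure h1 h2 hq ha hka hk2 hg hg0 hgi c hε
  have hA0' : Tendsto (Z.μ ∘ A) atTop (𝓝 0) := by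
    have := (ENNReal.tendsto_toReal_iff (fun n => measure_ne_top Z.μ (A n)) ENNReal.zero_ne_top).1
      (by rw [ENNReal.toReal_zero]; exact hA0)
    exact this
  have hset : Tendsto (fun n => ∫ x in A n, φ x ∂Z.μ) atTop (𝓝 0) := by
    have h3 := tendsto_setLIntegral_zero (μ := Z.μ) (f := fun x => ENNReal.ofReal (φ x)) (by
      have := hφi.2
      rw [hasFiniteIntegral_iff_ofReal (ae_of_all _ hφ0)] at this
      exact this.ne) hA0'
    have h4 := (ENNReal.tendsto_toReal ENNReal.zero_ne_top).comp h3
    refine h4.congr fun n => ?_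
    rw [integral_eq_lintegral_of_nonneg_ae (ae_of_all _ hφ0) hφm.aestronglyMeasurable]
    rfl
  filter_upwards [hset.eventually_le_const (by positivity : (0:ℝ) < η / 4),
    ha.eventually_gt_atTop 0] with n hn hpos
  rw [← integral_sub (hintg _ ((hBT _).const_mul _)) (hintg _ ((hBJ _).const_mul _))]
  have hbi : Integrable (fun x => |t| * ε * φ x + (A n).indicator (fun x => 2 * φ x) x) Z.μ :=
    (hφi.const_mul _).add ((hφi.const_mul 2).indicator (hAm n))
  refine (norm_integral_le_of_norm_le hbi (ae_of_all _ fun x => ?_)).trans ?_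
  · rw [← mul_sub, norm_mul, Complex.norm_real, Real.norm_of_nonneg (hφ0 x)]
    have hle := ee_sub_le (t / a n * birkhoffSum Z.D.T (fun y => g y + c) n x)
      (t / a n * birkhoffSum Z.D.J (Z.D.ind fun y => g y + c) (Z.kn n + 1) x)
    by_cases hx : x ∈ A n
    · rw [Set.indicator_of_mem hx]
      have := hle.trans (min_le_left _ _)
      have h5 : 0 ≤ |t| * ε * φ x := by have := hφ0 x; positivity
      nlinarith [hφ0 x]
    · rw [Set.indicator_of_notMem hx, add_zero, mul_comm]
      refine mul_le_mul_of_nonneg_right ((hle.trans (min_le_right _ _)).trans ?_) (hφ0 x)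
      simp only [hA, Set.mem_setOf_eq, not_lt] at hx
      rw [← mul_sub, Z.D.sum_ind, abs_mul, abs_div, abs_of_pos hpos, div_mul_eq_mul_div,
        div_le_iff₀ hpos, mul_assoc]
      exact mul_le_mul_of_nonneg_left hx (abs_nonneg _)
  · rw [integral_add (hφi.const_mul _) ((hφi.const_mul 2).indicator (hAm n)),
      integral_const_mul, hφ1, integral_indicator (hAm n), integral_const_mul]
    have h6 : |t| * ε ≤ η / 2 := by
      rw [hεdef, mul_div_assoc', div_le_iff₀ (by positivity)]
      nlinarith [abs_nonneg t]
    linarith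

end RenewalSys
end Sys

/-! ### The inverse of the left branch and its distortion -/

namespace LSV

/-- The left branch of the map, extended to `[0, ∞)`. -/
noncomputable def Lm (α x : ℝ) : ℝ := x * (1 + 2 ^ α * x ^ α)

/-- The derivative of the left branch. -/
noncomputable def Ld (α x : ℝ) : ℝ := 1 + (1 + α) * 2 ^ α * x ^ α

/-- The inverse of the left branch on `[0, ∞)`. -/
noncomputable def U (α y : ℝ) : ℝ := Function.invFunOn (Lm α) (Set.Ici 0) y

/-- The preimages of `1` under the left branch: `1 = x₀ > x₁ = 1/2 > x₂ > ...`. -/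
noncomputable def xs (α : ℝ) (n : ℕ) : ℝ := (U α)^[n] 1

/-- The derivative of the `n`-th iterate of `U`. -/
noncomputable def Dn (α : ℝ) (n : ℕ) (z : ℝ) : ℝ := ∏ j ∈ Finset.range n, (Ld α ((U α)^[j + 1] z))⁻¹

variable {α : ℝ}

lemma two_rpow_pos : (0:ℝ) < 2 ^ α := by positivity

lemma Ld_one_le (hα : 0 < α ∧ α < 1) {x : ℝ} (hx : 0 ≤ x) : 1 ≤ Ld α x := by
  have : 0 ≤ (1 + α) * 2 ^ α * x ^ α := by
    have := hα.1; positivity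
  unfold Ld; linarith

lemma Ld_mono (hα : 0 < α ∧ α < 1) {x y : ℝ} (hx : 0 ≤ x) (hxy : x ≤ y) : Ld α x ≤ Ld α y := by
  have := hα.1
  unfold Ld; gcongr

lemma Lm_zero : Lm α 0 = 0 := by simp [Lm]

lemma Lm_half : Lm α (1 / 2) = 1 := by
  have : (2:ℝ) ^ α * (1 / 2) ^ α = 1 := by
    rw [← mul_rpow (by norm_num) (by norm_num)]; norm_num
  rw [Lm, this]; norm_num

lemma le_Lm {x : ℝ} (hx : 0 ≤ x) : x ≤ Lm α x := by
  have : 0 ≤ x * (2 ^ α * x ^ α) := by positivity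
  unfold Lm; linarith

lemma Lm_strictMonoOn (hα : 0 < α ∧ α < 1) : StrictMonoOn (Lm α) (Set.Ici 0) := by
  intro x hx y hy hxy
  have hx : 0 ≤ x := hx
  unfold Lm
  have h1 : x ^ α ≤ y ^ α := rpow_le_rpow hx hxy.le hα.1.le
  have h2 : 0 < 1 + (2:ℝ) ^ α * x ^ α := by positivity
  calc x * (1 + 2 ^ α * x ^ α) < y * (1 + 2 ^ α * x ^ α) := by gcongr
    _ ≤ _ := by have : 0 ≤ y := hx.trans hxy.le
                gcongr

lemma Lm_continuous (hα : 0 < α ∧ α < 1) : Continuous (Lm α) := by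
  unfold Lm
  exact continuous_id.mul (continuous_const.add (continuous_const.mul
    (continuous_id.rpow_const fun x => Or.inr hα.1.le)))

lemma Lm_hasDerivAt {x : ℝ} (hx : 0 < x) : HasDerivAt (Lm α) (Ld α x) x := by
  have h1 : HasDerivAt (fun x : ℝ => x ^ α) (α * x ^ (α - 1)) x :=
    Real.hasDerivAt_rpow_const (Or.inl hx.ne')
  have h2 := (hasDerivAt_id x).mul ((h1.const_mul (2 ^ α)).const_add 1)
  have e : Ld α x = 1 * (1 + 2 ^ α * x ^ α) + id x * (2 ^ α * (α * x ^ (α - 1))) := by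
    rw [rpow_sub_one hx.ne']
    simp only [id, Ld]; field_simp; ring
  rw [e]; exact h2

lemma Lm_tangent (hα : 0 < α ∧ α < 1) {a b : ℝ} (ha : 0 < a) (hb : 0 ≤ b) :
    Lm α a + Ld α a * (b - a) ≤ Lm α b := by
  have h1 := one_add_mul_self_le_rpow_one_add (s := b / a - 1) (p := 1 + α)
    (by have : 0 ≤ b / a := by positivity
        linarith) (by linarith [hα.1])
  rw [add_sub_cancel, div_rpow hb ha.le, le_div_iff₀ (by positivity)] at h1
  have e1 : b ^ (1 + α) = b * b ^ α := by
    rw [rpow_add' hb (by linarith [hα.1]), rpow_one]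
  have e2 : a ^ (1 + α) = a * a ^ α := by
    rw [rpow_add ha, rpow_one]
  rw [e1, e2] at h1
  have h2 : (1 + (1 + α) * (b / a - 1)) * (a * a ^ α) = a * a ^ α + (1 + α) * a ^ α * (b - a) := by
    field_simp
  rw [h2] at h1
  have h3 := mul_le_mul_of_nonneg_left h1 (two_rpow_pos (α := α)).le
  unfold Lm Ld
  linarith

lemma Lm_surj (hα : 0 < α ∧ α < 1) {y : ℝ} (hy : 0 ≤ y) : ∃ x ∈ Set.Ici (0:ℝ), Lm α x = y := by
  have h := intermediate_value_Icc hy (Lm_continuous hα).continuousOn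
  obtain ⟨x, hx, hxy⟩ := h ⟨by rw [Lm_zero]; exact hy, le_Lm hy⟩
  exact ⟨x, hx.1, hxy⟩

lemma U_nonneg (hα : 0 < α ∧ α < 1) {y : ℝ} (hy : 0 ≤ y) : 0 ≤ U α y :=
  Function.invFunOn_mem (Lm_surj hα hy)

lemma Lm_U (hα : 0 < α ∧ α < 1) {y : ℝ} (hy : 0 ≤ y) : Lm α (U α y) = y :=
  Function.invFunOn_eq (Lm_surj hα hy)

lemma U_Lm (hα : 0 < α ∧ α < 1) {x : ℝ} (hx : 0 ≤ x) : U α (Lm α x) = x := by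
  have h0 : 0 ≤ Lm α x := hx.trans (le_Lm hx)
  exact (Lm_strictMonoOn hα).injOn (U_nonneg hα h0) hx (Lm_U hα h0)

lemma U_lt (hα : 0 < α ∧ α < 1) {y y' : ℝ} (hy : 0 ≤ y) (h : y < y') : U α y < U α y' := by
  rw [← (Lm_strictMonoOn hα).lt_iff_lt (U_nonneg hα hy) (U_nonneg hα (hy.trans h.le)),
    Lm_U hα hy, Lm_U hα (hy.trans h.le)]
  exact h

lemma U_mono (hα : 0 < α ∧ α < 1) {y y' : ℝ} (hy : 0 ≤ y) (h : y ≤ y') : U α y ≤ U α y' := by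
  rcases h.eq_or_lt with rfl | h
  · exact le_rfl
  · exact (U_lt hα hy h).le

lemma U_zero (hα : 0 < α ∧ α < 1) : U α 0 = 0 := by
  have := U_Lm hα (le_refl (0:ℝ)); rwa [Lm_zero] at this

lemma U_pos (hα : 0 < α ∧ α < 1) {y : ℝ} (hy : 0 < y) : 0 < U α y := by
  have := U_lt hα le_rfl hy; rwa [U_zero hα] at this

lemma U_one (hα : 0 < α ∧ α < 1) : U α 1 = 1 / 2 := by
  have := U_Lm hα (x := 1 / 2) (by norm_num); rwa [Lm_half] at this

lemma U_le (hα : 0 < α ∧ α < 1) {y : ℝ} (hy : 0 ≤ y) : U α y ≤ y := by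
  have := le_Lm (α := α) (U_nonneg hα hy); rwa [Lm_U hα hy] at this

lemma U_sub_le (hα : 0 < α ∧ α < 1) {z z' : ℝ} (hz : 0 < z) (h : 0 ≤ z') :
    Ld α (U α z) * (U α z' - U α z) ≤ z' - z := by
  have := Lm_tangent hα (U_pos hα hz) (U_nonneg hα h)
  rw [Lm_U hα hz.le, Lm_U hα h] at this
  linarith

lemma U_lip (hα : 0 < α ∧ α < 1) {z z' : ℝ} (hz : 0 < z) (h : z ≤ z') :
    U α z' - U α z ≤ z' - z := by
  have h1 := U_sub_le hα hz (hz.le.trans h)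
  have h2 := Ld_one_le hα (U_nonneg hα hz.le)
  have h3 := U_mono hα hz.le h
  nlinarith

lemma U_continuousAt (hα : 0 < α ∧ α < 1) {y : ℝ} (hy : 0 < y) : ContinuousAt (U α) y := by
  rw [Metric.continuousAt_iff]
  intro ε hε
  refine ⟨min ε y, by positivity, fun x hx => ?_⟩
  rw [Real.dist_eq] at hx ⊢
  have hx1 := hx.trans_le (min_le_left _ _)
  have hx2 := hx.trans_le (min_le_right _ _)
  have hx0 : 0 < x := by linarith [neg_lt_of_abs_lt hx2]
  rcases le_total x y with h | h
  · rw [abs_sub_comm, abs_of_nonneg (by linarith [U_mono hα hx0.le h])]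
    rw [abs_sub_comm, abs_of_nonneg (by linarith)] at hx1
    linarith [U_lip hα hx0 h]
  · rw [abs_of_nonneg (by linarith [U_mono hα hy.le h])]
    rw [abs_of_nonneg (by linarith)] at hx1
    linarith [U_lip hα hy h]

lemma U_hasDerivAt (hα : 0 < α ∧ α < 1) {y : ℝ} (hy : 0 < y) :
    HasDerivAt (U α) (Ld α (U α y))⁻¹ y := by
  refine HasDerivAt.of_local_left_inverse (U_continuousAt hα hy) (Lm_hasDerivAt (U_pos hα hy))
    (by linarith [Ld_one_le hα (U_nonneg hα hy.le)]) ?_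
  filter_upwards [lt_mem_nhds hy] with x hx
  exact Lm_U hα hx.le

/-! iterates -/

lemma Un_pos (hα : 0 < α ∧ α < 1) (n : ℕ) {z : ℝ} (hz : 0 < z) : 0 < (U α)^[n] z := by
  induction n with
  | zero => exact hz
  | succ n ih => rw [Function.iterate_succ_apply']; exact U_pos hα ih

lemma Un_mono (hα : 0 < α ∧ α < 1) (n : ℕ) {z z' : ℝ} (hz : 0 < z) (h : z ≤ z') :
    (U α)^[n] z ≤ (U α)^[n] z' := by
  induction n with
  | zero => exact h
  | succ n ih => simp only [Function.iterate_succ_apply']; exact U_mono hα (Un_pos hα n hz).le ih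

lemma Un_lt (hα : 0 < α ∧ α < 1) (n : ℕ) {z z' : ℝ} (hz : 0 < z) (h : z < z') :
    (U α)^[n] z < (U α)^[n] z' := by
  induction n with
  | zero => exact h
  | succ n ih => simp only [Function.iterate_succ_apply']; exact U_lt hα (Un_pos hα n hz).le ih

lemma Un_lip (hα : 0 < α ∧ α < 1) (n : ℕ) {z z' : ℝ} (hz : 0 < z) (h : z ≤ z') :
    (U α)^[n] z' - (U α)^[n] z ≤ z' - z := by
  induction n with
  | zero => exact le_rfl
  | succ n ih =>
    simp only [Function.iterate_succ_apply']
    exact (U_lip hα (Un_pos hα n hz) (Un_mono hα n hz h)).trans ih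

lemma Dn_succ (n : ℕ) (z : ℝ) : Dn α (n + 1) z = Dn α n z * (Ld α ((U α)^[n + 1] z))⁻¹ := by
  rw [Dn, Finset.prod_range_succ]; rfl

lemma Dn_pos (hα : 0 < α ∧ α < 1) (n : ℕ) {z : ℝ} (hz : 0 < z) : 0 < Dn α n z := by
  refine Finset.prod_pos fun j _ => inv_pos.2 ?_
  linarith [Ld_one_le hα (Un_pos hα (j + 1) hz).le]

lemma Un_hasDerivAt (hα : 0 < α ∧ α < 1) (n : ℕ) {z : ℝ} (hz : 0 < z) :
    HasDerivAt ((U α)^[n]) (Dn α n z) z := by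
  induction n with
  | zero => simpa [Dn] using hasDerivAt_id z
  | succ n ih =>
    have := (U_hasDerivAt hα (Un_pos hα n hz)).comp z ih
    rw [Function.iterate_succ', Dn_succ, mul_comm, Function.iterate_succ_apply']
    exact this

lemma Un_sub_le (hα : 0 < α ∧ α < 1) (n : ℕ) {z z' : ℝ} (hz : 0 < z) (h : z ≤ z') :
    (U α)^[n] z' - (U α)^[n] z ≤ Dn α n z * (z' - z) := by
  induction n with
  | zero => simp [Dn]
  | succ n ih =>
    have h1 := U_sub_le hα (Un_pos hα n hz) (Un_pos hα n (hz.trans_le h)).le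
    have h2 := Ld_one_le hα (Un_pos hα (n + 1) hz).le
    rw [Dn_succ]
    simp only [Function.iterate_succ_apply'] at h2 ⊢
    rw [mul_right_comm, ← div_eq_mul_inv, le_div_iff₀ (by linarith)]
    linarith

lemma Un_sub_ge (hα : 0 < α ∧ α < 1) (n : ℕ) {z z' : ℝ} (hz : 0 < z) (h : z ≤ z') :
    Dn α n z' * (z' - z) ≤ (U α)^[n] z' - (U α)^[n] z := by
  induction n with
  | zero => simp [Dn]
  | succ n ih =>
    have h1 := U_sub_le hα (Un_pos hα n (hz.trans_le h)) (Un_pos hα n hz).le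
    have h2 := Ld_one_le hα (Un_pos hα (n + 1) (hz.trans_le h)).le
    rw [Dn_succ]
    simp only [Function.iterate_succ_apply'] at h2 ⊢
    rw [mul_right_comm, ← div_eq_mul_inv, div_le_iff₀ (by linarith)]
    linarith

/-! the sequence `xs` -/

lemma xs_zero : xs α 0 = 1 := rfl
lemma xs_one (hα : 0 < α ∧ α < 1) : xs α 1 = 1 / 2 := U_one hα
lemma xs_pos (hα : 0 < α ∧ α < 1) (n : ℕ) : 0 < xs α n := Un_pos hα n one_pos
lemma xs_succ (n : ℕ) : xs α (n + 1) = U α (xs α n) := Function.iterate_succ_apply' _ _ _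
lemma Lm_xs (hα : 0 < α ∧ α < 1) (n : ℕ) : Lm α (xs α (n + 1)) = xs α n := by
  rw [xs_succ, Lm_U hα (xs_pos hα n).le]
lemma xs_antitone (hα : 0 < α ∧ α < 1) : Antitone (xs α) :=
  antitone_nat_of_succ_le fun n => by rw [xs_succ]; exact U_le hα (xs_pos hα n).le
lemma xs_le_half (hα : 0 < α ∧ α < 1) (n : ℕ) : xs α (n + 1) ≤ 1 / 2 := by
  rw [← xs_one hα]; exact xs_antitone hα (by omega)
lemma xs_le_one (hα : 0 < α ∧ α < 1) (n : ℕ) : xs α n ≤ 1 := xs_antitone hα (Nat.zero_le n)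

lemma half_eq_xs (hα : 0 < α ∧ α < 1) (n : ℕ) : (U α)^[n] (1 / 2) = xs α (n + 1) := by
  rw [← U_one hα, ← Function.iterate_succ_apply]; rfl

lemma Un_mem (hα : 0 < α ∧ α < 1) (n : ℕ) {z : ℝ} (hz : z ∈ Set.Icc (1 / 2 : ℝ) 1) :
    xs α (n + 1) ≤ (U α)^[n] z ∧ (U α)^[n] z ≤ xs α n := by
  constructor
  · rw [← half_eq_xs hα]; exact Un_mono hα n (by norm_num) hz.1
  · exact Un_mono hα n (by linarith [hz.1]) hz.2

lemma small_rpow (hα : 0 < α ∧ α < 1) {y : ℝ} (hy : 0 ≤ y) (h : y ≤ 1 / 2) : 2 ^ α * y ^ α ≤ 1 := by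
  rw [← mul_rpow (by norm_num) hy]
  exact rpow_le_one (by linarith) (by linarith) hα.1.le

lemma xs_sub (hα : 0 < α ∧ α < 1) (n : ℕ) :
    xs α n - xs α (n + 1) = 2 ^ α * xs α (n + 1) ^ (1 + α) := by
  nth_rewrite 1 [← Lm_xs hα n]
  rw [rpow_add (xs_pos hα _), rpow_one, Lm]; ring

lemma xs_le_two (hα : 0 < α ∧ α < 1) (n : ℕ) : xs α n ≤ 2 * xs α (n + 1) := by
  rw [← Lm_xs hα n]
  have h1 := small_rpow hα (xs_pos hα (n + 1)).le (xs_le_half hα n)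
  unfold Lm
  nlinarith [xs_pos hα (n + 1)]

lemma rpow_sub_le (hα : 0 < α ∧ α < 1) {a b : ℝ} (ha : 0 < a) (hb : a ≤ b) :
    b ^ α - a ^ α ≤ α * a ^ (α - 1) * (b - a) := by
  have h1 := rpow_one_add_le_one_add_mul_self (s := b / a - 1) (p := α)
    (by have : 0 ≤ b / a := by have := ha.trans_le hb; positivity
        linarith) hα.1.le hα.2.le
  rw [add_sub_cancel, div_rpow (ha.le.trans hb) ha.le, div_le_iff₀ (by positivity)] at h1
  rw [rpow_sub_one ha.ne']
  have h2 : (1 + α * (b / a - 1)) * a ^ α = a ^ α + α * (a ^ α / a) * (b - a) := by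
    field_simp
  linarith

lemma Ld_ratio (hα : 0 < α ∧ α < 1) {a b : ℝ} (ha : 0 < a) (hb : a ≤ b) :
    Ld α b ≤ exp (2 * 2 ^ α * a ^ (α - 1) * (b - a)) * Ld α a := by
  have h1 := rpow_sub_le hα ha hb
  have h2 := Ld_one_le hα ha.le
  have h3 := add_one_le_exp (2 * 2 ^ α * a ^ (α - 1) * (b - a))
  have hnn : 0 ≤ 2 ^ α * a ^ (α - 1) * (b - a) := by
    have : 0 ≤ b - a := by linarith
    positivity
  have h4 : Ld α b - Ld α a ≤ 2 * 2 ^ α * a ^ (α - 1) * (b - a) := by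
    have h5 : (1 + α) * 2 ^ α * (b ^ α - a ^ α) ≤ (1 + α) * 2 ^ α * (α * a ^ (α - 1) * (b - a)) :=
      mul_le_mul_of_nonneg_left h1 (by have := hα.1; positivity)
    have h6 : (1 + α) * α ≤ 2 := by nlinarith [hα.1, hα.2]
    have : Ld α b - Ld α a = (1 + α) * 2 ^ α * (b ^ α - a ^ α) := by unfold Ld; ring
    rw [this]
    nlinarith
  nlinarith

/-- The decay of `xs`: `n + 1 ≤ C xₙ^{-α}`. -/
lemma xs_rate (hα : 0 < α ∧ α < 1) (n : ℕ) :
    α / 4 * (n + 1) ≤ xs α n ^ (-α) := by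
  induction n with
  | zero => simp [xs_zero]; linarith [hα.2]
  | succ n ih =>
    set y := xs α (n + 1) with hy
    have hy0 : 0 < y := xs_pos hα _
    set a := 2 ^ α * y ^ α with ha
    have ha0 : 0 < a := by positivity
    have ha1 : a ≤ 1 := small_rpow hα hy0.le (xs_le_half hα n)
    have e : xs α n ^ (-α) = y ^ (-α) * (1 + a) ^ (-α) := by
      rw [← Lm_xs hα n, Lm, mul_rpow hy0.le (by positivity)]
    -- `(1 + a)^{-α} ≤ 1 - α a / 4`
    have h1 : (1 + a) ^ (-α) ≤ 1 - α * a / 4 := by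
      rw [rpow_neg (by positivity)]
      have h2 : 1 + α * a / 2 ≤ (1 + a) ^ α := by
        rw [rpow_def_of_pos (by positivity)]
        have h3 : a / 2 ≤ log (1 + a) := by
          have := Real.one_sub_inv_le_log_of_pos (x := 1 + a) (by positivity)
          have h4 : a / 2 ≤ 1 - (1 + a)⁻¹ := by
            rw [show 1 - (1 + a)⁻¹ = a / (1 + a) by field_simp; ring]
            gcongr; linarith
          linarith
        have := add_one_le_exp (log (1 + a) * α)
        nlinarith [hα.1]
      rw [inv_le_comm₀ (by positivity) (by nlinarith [hα.1, hα.2])]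
      refine le_trans ?_ h2
      rw [inv_le_iff_one_le_mul₀ (by nlinarith [hα.1, hα.2])]
      have hαa : 0 < α * a := mul_pos hα.1 ha0
      have hαa1 : α * a ≤ 1 := by nlinarith [hα.1, hα.2]
      nlinarith
    have h5 : y ^ (-α) * (1 + a) ^ (-α) ≤ y ^ (-α) * (1 - α * a / 4) := by gcongr
    have h6 : y ^ (-α) * (α * a / 4) = α * 2 ^ α / 4 := by
      rw [ha]
      have : y ^ (-α) * y ^ α = 1 := by rw [← rpow_add hy0]; simp
      calc _ = α * 2 ^ α / 4 * (y ^ (-α) * y ^ α) := by ring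
        _ = _ := by rw [this, mul_one]
    have h7 : (1:ℝ) ≤ 2 ^ α := one_le_rpow (by norm_num) hα.1.le
    rw [e] at ih
    push_cast
    nlinarith [hα.1]

lemma xs_rpow_le (hα : 0 < α ∧ α < 1) {r : ℝ} (hr : 0 ≤ r) (n : ℕ) :
    xs α n ^ r ≤ (4 / α) ^ (r / α) * ((n + 1 : ℝ) ^ (r / α))⁻¹ := by
  have h := xs_rate hα n
  have hx := xs_pos hα n
  have hn : (0:ℝ) < n + 1 := by positivity
  have h0 : 0 < α / 4 * ((n:ℝ) + 1) := by have := hα.1; positivity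
  have h1 : (α / 4 * ((n:ℝ) + 1)) ^ (r / α) ≤ (xs α n ^ (-α)) ^ (r / α) :=
    rpow_le_rpow h0.le h (div_nonneg hr hα.1.le)
  rw [← rpow_mul hx.le, show -α * (r / α) = -r by have := hα.1.ne'; field_simp, rpow_neg hx.le] at h1
  rw [← inv_rpow hn.le, ← mul_rpow (by have := hα.1; positivity) (by positivity)]
  rw [le_inv_comm₀ (by positivity) (by positivity), ← inv_rpow (by positivity)] at h1
  rwa [mul_inv, inv_div] at h1

lemma xs_summable (hα : 0 < α ∧ α < 1) {r : ℝ} (hr : α < r) :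
    Summable fun n => xs α (n + 1) ^ r := by
  have h1 : Summable fun n : ℕ => ((n + 1 : ℕ) : ℝ) ^ (-(r / α)) :=
    (summable_nat_add_iff 1).2 (Real.summable_nat_rpow.2 (by
      rw [neg_lt_neg_iff, lt_div_iff₀ hα.1]; linarith))
  refine Summable.of_nonneg_of_le (fun n => (rpow_pos_of_pos (xs_pos hα _) r).le) (fun n => ?_)
    (h1.mul_left ((4 / α) ^ (r / α)))
  refine (rpow_le_rpow (xs_pos hα _).le (xs_antitone hα (Nat.le_succ n))
    (by linarith [hα.1])).trans ?_
  refine (xs_rpow_le hα (by linarith [hα.1]) n).trans (le_of_eq ?_)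
  rw [rpow_neg (by positivity)]; push_cast; rfl

/-- The bounded-distortion exponent. -/
noncomputable def kap (α : ℝ) : ℝ := 2 * 2 ^ α * 2 ^ α * ∑' n, xs α (n + 1) ^ (2 * α)

lemma kap_nonneg (hα : 0 < α ∧ α < 1) : 0 ≤ kap α := by
  have : 0 ≤ ∑' n, xs α (n + 1) ^ (2 * α) :=
    tsum_nonneg fun n => (rpow_pos_of_pos (xs_pos hα _) _).le
  unfold kap; positivity

/-- General distortion estimate, from a bound on the distance of the iterates. -/
lemma Dn_dist_aux (hα : 0 < α ∧ α < 1) (n : ℕ) {z z' c : ℝ} (hz : z ∈ Set.Icc (1 / 2 : ℝ) 1)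
    (hz' : z' ∈ Set.Icc (1 / 2 : ℝ) 1) (h : z ≤ z') (hc : 0 ≤ c)
    (hd : ∀ j, (U α)^[j] z' - (U α)^[j] z ≤ c * (2 ^ α * xs α (j + 1) ^ (1 + α))) :
    Dn α n z ≤ exp (kap α * c) * Dn α n z' := by
  have hz0 : 0 < z := by linarith [hz.1]
  have hz0' : 0 < z' := by linarith [hz'.1]
  have key : ∀ n, Dn α n z ≤ exp (∑ j ∈ Finset.range n,
      2 * 2 ^ α * 2 ^ α * c * xs α (j + 1 + 1) ^ (2 * α)) * Dn α n z' := by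
    intro n
    induction n with
    | zero => simp [Dn]
    | succ n ih =>
      rw [Dn_succ, Dn_succ, Finset.sum_range_succ, exp_add]
      set a := (U α)^[n + 1] z
      set b := (U α)^[n + 1] z'
      have ha : 0 < a := Un_pos hα _ hz0
      have hab : a ≤ b := Un_mono hα _ hz0 h
      have hax : xs α (n + 1 + 1) ≤ a := (Un_mem hα (n + 1) hz).1
      set y := xs α (n + 1 + 1)
      have hy : 0 < y := xs_pos hα _
      have h1 := Ld_ratio hα ha hab
      have hLa : 0 < Ld α a := by linarith [Ld_one_le hα ha.le]
      have hLb : 0 < Ld α b := by linarith [Ld_one_le hα (ha.le.trans hab)]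
      have h2 : 2 * 2 ^ α * a ^ (α - 1) * (b - a) ≤ 2 * 2 ^ α * 2 ^ α * c * y ^ (2 * α) := by
        have h3 : a ^ (α - 1) ≤ y ^ (α - 1) :=
          rpow_le_rpow_of_nonpos hy hax (by linarith [hα.2])
        have h4 := hd (n + 1)
        have h5 : y ^ (α - 1) * y ^ (1 + α) = y ^ (2 * α) := by
          rw [← rpow_add hy]; congr 1; ring
        calc 2 * 2 ^ α * a ^ (α - 1) * (b - a)
            ≤ 2 * 2 ^ α * y ^ (α - 1) * (c * (2 ^ α * y ^ (1 + α))) := by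
              gcongr
          _ = 2 * 2 ^ α * 2 ^ α * c * (y ^ (α - 1) * y ^ (1 + α)) := by ring
          _ = _ := by rw [h5]
      have h3 : (Ld α a)⁻¹ ≤ exp (2 * 2 ^ α * 2 ^ α * c * y ^ (2 * α)) * (Ld α b)⁻¹ := by
        rw [← div_eq_mul_inv, le_div_iff₀ hLb, inv_mul_le_iff₀ hLa, mul_comm]
        exact h1.trans (mul_le_mul_of_nonneg_right (exp_le_exp.2 h2) hLa.le)
      calc Dn α n z * (Ld α a)⁻¹ ≤ _ :=
            mul_le_mul ih h3 (by positivity) (mul_nonneg (exp_pos _).le (Dn_pos hα n hz0').le)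
        _ = _ := by ring
  refine (key n).trans (mul_le_mul_of_nonneg_right (exp_le_exp.2 ?_) (Dn_pos hα n hz0').le)
  rw [← Finset.mul_sum]
  have hs : Summable fun n => xs α (n + 1) ^ (2 * α) := xs_summable hα (by linarith [hα.1])
  have hnn : ∀ n, 0 ≤ xs α (n + 1) ^ (2 * α) := fun n => (rpow_pos_of_pos (xs_pos hα _) _).le
  have h6 : ∑ j ∈ Finset.range n, xs α (j + 1 + 1) ^ (2 * α) ≤ ∑' n, xs α (n + 1) ^ (2 * α) := by
    refine le_trans ?_ (hs.sum_le_tsum (Finset.range (n + 1)) (fun i _ => hnn i))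
    rw [Finset.sum_range_succ']
    linarith [hnn 0]
  unfold kap
  calc _ ≤ 2 * 2 ^ α * 2 ^ α * c * ∑' n, xs α (n + 1) ^ (2 * α) := by gcongr
    _ = _ := by ring

lemma Dn_bdd (hα : 0 < α ∧ α < 1) (n : ℕ) {z z' : ℝ} (hz : z ∈ Set.Icc (1 / 2 : ℝ) 1)
    (hz' : z' ∈ Set.Icc (1 / 2 : ℝ) 1) (h : z ≤ z') : Dn α n z ≤ exp (kap α) * Dn α n z' := by
  have := Dn_dist_aux hα n hz hz' h zero_le_one (fun j => by
    have h1 := (Un_mem hα j hz).1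
    have h2 := (Un_mem hα j hz').2
    rw [one_mul, ← xs_sub hα]; linarith)
  rwa [mul_one] at this

lemma Dn_one_le (hα : 0 < α ∧ α < 1) (n : ℕ) :
    Dn α n 1 ≤ 2 * (2 ^ α * xs α (n + 1) ^ (1 + α)) := by
  have := Un_sub_ge hα n (z := 1 / 2) (z' := 1) (by norm_num) (by norm_num)
  rw [half_eq_xs hα] at this
  have h2 := xs_sub hα n
  unfold xs at h2 this ⊢
  linarith

lemma Dn_le (hα : 0 < α ∧ α < 1) (n : ℕ) {z : ℝ} (hz : z ∈ Set.Icc (1 / 2 : ℝ) 1) :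
    Dn α n z ≤ exp (kap α) * 2 * (2 ^ α * xs α (n + 1) ^ (1 + α)) := by
  have h1 := Dn_bdd hα n hz (z' := 1) ⟨by norm_num, le_rfl⟩ hz.2
  have h2 := mul_le_mul_of_nonneg_left (Dn_one_le hα n) (exp_pos (kap α)).le
  linarith

lemma Dn_dist (hα : 0 < α ∧ α < 1) (n : ℕ) {z z' : ℝ} (hz : z ∈ Set.Icc (1 / 2 : ℝ) 1)
    (hz' : z' ∈ Set.Icc (1 / 2 : ℝ) 1) :
    Dn α n z ≤ exp (kap α * (exp (kap α) * 2) * |z - z'|) * Dn α n z' := by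
  have hk := kap_nonneg hα
  have hz0 : 0 < z := by linarith [hz.1]
  have hz0' : 0 < z' := by linarith [hz'.1]
  rcases le_total z z' with h | h
  · have hd : 0 ≤ z' - z := by linarith
    have := Dn_dist_aux hα n hz hz' h (c := exp (kap α) * 2 * (z' - z)) (by positivity) (fun j => by
      have h1 := Un_sub_le hα j hz0 h
      have h2 := Dn_le hα j hz
      calc _ ≤ _ := h1
        _ ≤ (exp (kap α) * 2 * (2 ^ α * xs α (j + 1) ^ (1 + α))) * (z' - z) := by gcongr
        _ = _ := by ring)
    rw [abs_sub_comm, abs_of_nonneg hd]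
    convert this using 3
    ring
  · -- the derivative is decreasing
    have h1 : Dn α n z ≤ Dn α n z' := by
      refine Finset.prod_le_prod (fun j _ => ?_) (fun j _ => ?_)
      · have := Ld_one_le hα (Un_pos hα (j + 1) hz0).le
        positivity
      · have := Ld_one_le hα (Un_pos hα (j + 1) hz0').le
        exact inv_anti₀ (by linarith)
          (Ld_mono hα (Un_pos hα (j + 1) hz0').le (Un_mono hα (j + 1) hz0' h))
    refine h1.trans (le_mul_of_one_le_left (Dn_pos hα n hz0').le (one_le_exp (by positivity)))

end LSV

/-! ### The induced LSV map as a full-branch system -/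

namespace LSV

variable {α : ℝ}

/-- The half-open interval `(0,1]` as a space: the LSV map and all its return branches are
defined exactly (with no boundary ambiguities) on it. -/
abbrev Iu : Type := Set.Ioc (0:ℝ) 1

lemma half_mem (x : Iu) : (1 + (x:ℝ)) / 2 ∈ Set.Icc (1 / 2 : ℝ) 1 :=
  ⟨by linarith [x.2.1], by linarith [x.2.2]⟩

/-- The inverse branches of the induced map, as real functions on `[0,1]`: the inverse
`(1 + x) / 2` of the right branch followed by `n` inverses of the left branch. -/
noncomputable def vr (α : ℝ) (n : ℕ) (x : ℝ) : ℝ := (U α)^[n] ((1 + x) / 2)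

lemma vr_hasDerivAt (hα : 0 < α ∧ α < 1) (n : ℕ) {x : ℝ} (hx : 0 ≤ x) :
    HasDerivAt (vr α n) (Dn α n ((1 + x) / 2) / 2) x := by
  have h1 : HasDerivAt (fun x : ℝ => (1 + x) / 2) (1 / 2) x :=
    ((hasDerivAt_id x).const_add 1).div_const 2
  have := (Un_hasDerivAt hα n (z := (1 + x) / 2) (by linarith)).comp x h1
  rw [mul_one_div] at this
  exact this

lemma vr_zero (hα : 0 < α ∧ α < 1) (n : ℕ) : vr α n 0 = xs α (n + 1) := by
  rw [vr, add_zero, half_eq_xs hα]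

lemma vr_one (n : ℕ) : vr α n 1 = xs α n := by
  rw [vr]; norm_num [xs]

lemma vr_lt (hα : 0 < α ∧ α < 1) (n : ℕ) {x y : ℝ} (hx : 0 ≤ x) (h : x < y) :
    vr α n x < vr α n y := Un_lt hα n (by linarith) (by linarith)

lemma vr_image (hα : 0 < α ∧ α < 1) (n : ℕ) :
    vr α n '' Set.Ioc 0 1 = Set.Ioc (xs α (n + 1)) (xs α n) := by
  apply Set.Subset.antisymm
  · rintro _ ⟨x, hx, rfl⟩
    refine ⟨by rw [← vr_zero hα]; exact vr_lt hα n le_rfl hx.1, ?_⟩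
    exact (Un_mem hα n ⟨by linarith [hx.1], by linarith [hx.2]⟩).2
  · rw [← vr_zero hα, ← vr_one]
    exact intermediate_value_Ioc zero_le_one fun x hx =>
      (vr_hasDerivAt hα n hx.1).continuousAt.continuousWithinAt

lemma xs_tendsto (hα : 0 < α ∧ α < 1) : Tendsto (xs α) atTop (𝓝 0) := by
  rw [← tendsto_add_atTop_iff_nat 1]
  simpa using (xs_summable hα hα.2).tendsto_atTop_zero

lemma iUnion_Ioc (hα : 0 < α ∧ α < 1) :
    ⋃ n, Set.Ioc (xs α (n + 1)) (xs α n) = Set.Ioc 0 1 := by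
  ext y
  simp only [Set.mem_iUnion, Set.mem_Ioc]
  constructor
  · rintro ⟨n, h1, h2⟩
    exact ⟨(xs_pos hα _).trans h1, h2.trans (xs_le_one hα n)⟩
  · rintro ⟨h1, h2⟩
    have hex : ∃ n, xs α n < y := ((xs_tendsto hα).eventually_lt_const h1).exists
    classical
    set n := Nat.find hex
    have hn : xs α n < y := Nat.find_spec hex
    have hn0 : n ≠ 0 := by
      intro h0; rw [h0, xs_zero] at hn; linarith
    obtain ⟨k, hk⟩ := Nat.exists_eq_succ_of_ne_zero hn0
    refine ⟨k, by rw [← Nat.succ_eq_add_one, ← hk]; exact hn, ?_⟩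
    exact not_lt.1 (Nat.find_min hex (show k < n by omega))

/-- The inverse branches of the induced map as maps of `(0,1]`. -/
noncomputable def Vb (hα : 0 < α ∧ α < 1) (n : ℕ) (x : Iu) : Iu :=
  ⟨vr α n x, Un_pos hα n (by linarith [(half_mem x).1]),
    (Un_mem hα n (half_mem x)).2.trans (xs_le_one hα n)⟩

/-- A bound for the weight of the `n`-th branch: up to the distortion factor, the length
`2 ^ α * xs (n + 1) ^ (1 + α)` of its image `(xs (n + 1), xs n]`. -/
noncomputable def wB (α : ℝ) (n : ℕ) : ℝ := exp (kap α) * (2 ^ α * xs α (n + 1) ^ (1 + α))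

/-- Lebesgue measure on `(0,1]`. -/
noncomputable def lam : Measure Iu := Measure.comap Subtype.val volume

lemma lintegral_I (g : ℝ → ENNReal) :
    ∫⁻ x : Iu, g x ∂lam = ∫⁻ x in Set.Ioc (0:ℝ) 1, g x :=
  lintegral_subtype_comap measurableSet_Ioc g

instance : IsProbabilityMeasure lam := by
  constructor
  have := lintegral_I fun _ => 1
  simpa using this

/-- Extension by constants of a function on `(0,1]` to the line. -/
noncomputable def ext1 {Y : Type*} (ψ : Iu → Y) (x : ℝ) : Y :=
  if h : x ∈ Set.Ioc (0:ℝ) 1 then ψ ⟨x, h⟩ else ψ ⟨1, by norm_num⟩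

lemma ext1_coe {Y : Type*} (ψ : Iu → Y) (x : Iu) : ext1 ψ x = ψ x := by
  rw [ext1, dif_pos x.2]

lemma ext1_measurable {Y : Type*} [MeasurableSpace Y] {ψ : Iu → Y} (hψ : Measurable ψ) :
    Measurable (ext1 ψ) :=
  Measurable.dite (s := Set.Ioc (0:ℝ) 1) hψ measurable_const measurableSet_Ioc

lemma lintegral_I' (ψ : Iu → ENNReal) :
    ∫⁻ x, ψ x ∂lam = ∫⁻ x in Set.Ioc (0:ℝ) 1, ext1 ψ x := by
  rw [← lintegral_I]; simp only [ext1_coe]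

/-- The induced map of the LSV map on `(0,1]` is a full-branch system. -/
noncomputable def fb (hα : 0 < α ∧ α < 1) : FullBranch lam where
  V := Vb hα
  w := fun n x => Dn α n ((1 + (x:ℝ)) / 2) / 2
  wb := wB α
  K := kap α * exp (kap α) + 1
  K_pos := by have := kap_nonneg hα; positivity
  diam := fun x y => by
    rw [Subtype.dist_eq, Real.dist_eq, abs_le]
    constructor <;> linarith [x.2.1, x.2.2, y.2.1, y.2.2]
  V_contr := fun n x y => by
    wlog h : (x:ℝ) ≤ y generalizing x y
    · rw [dist_comm, dist_comm x]; exact this y x (not_le.1 h).le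
    rw [Subtype.dist_eq, Subtype.dist_eq, Real.dist_eq, Real.dist_eq, abs_sub_comm,
      abs_sub_comm (x:ℝ), abs_of_nonneg (sub_nonneg.2 h)]
    have h1 := (half_mem x).1
    have h2 := Un_lip hα n (z := (1 + (x:ℝ)) / 2) (z' := (1 + (y:ℝ)) / 2) (by linarith)
      (by linarith)
    have h3 := Un_mono hα n (z := (1 + (x:ℝ)) / 2) (z' := (1 + (y:ℝ)) / 2) (by linarith)
      (by linarith)
    simp only [Vb, vr]
    rw [abs_of_nonneg (by linarith)]
    linarith
  w_nonneg := fun n x => by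
    have := Dn_pos hα n (z := (1 + (x:ℝ)) / 2) (by linarith [(half_mem x).1])
    positivity
  w_le := fun n x => by
    have := Dn_le hα n (half_mem x)
    unfold wB
    linarith
  w_dist := fun n x y => by
    have h1 := Dn_dist hα n (half_mem x) (half_mem y)
    have h2 : |(1 + (x:ℝ)) / 2 - (1 + (y:ℝ)) / 2| = dist x y / 2 := by
      rw [Subtype.dist_eq, Real.dist_eq, show (1 + (x:ℝ)) / 2 - (1 + (y:ℝ)) / 2 = (x - y) / 2 by ring,
        abs_div, abs_two]
    rw [h2] at h1
    have h3 : kap α * (exp (kap α) * 2) * (dist x y / 2)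
        ≤ (kap α * exp (kap α) + 1) * dist x y := by
      have : 0 ≤ dist x y := dist_nonneg
      linarith
    have h4 := Dn_pos hα n (z := (1 + (y:ℝ)) / 2) (by linarith [(half_mem y).1])
    have h5 := mul_le_mul_of_nonneg_right (exp_le_exp.2 h3) h4.le
    linarith
  wb_summable := by
    unfold wB
    exact ((xs_summable hα (by linarith : α < 1 + α)).mul_left _).mul_left _
  dual := fun ψ hψ => by
    have hU : ∫⁻ x in Set.Ioc (0:ℝ) 1, ext1 ψ x
        = ∑' n, ∫⁻ x in Set.Ioc (xs α (n + 1)) (xs α n), ext1 ψ x := by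
      conv_lhs => rw [← iUnion_Ioc hα]
      exact lintegral_iUnion (fun n => measurableSet_Ioc)
        (xs_antitone hα).pairwise_disjoint_on_Ioc_succ _
    rw [lintegral_I' ψ, hU]
    congr 1; ext n
    rw [lintegral_I' fun x => _,
      ← vr_image hα n, lintegral_image_eq_lintegral_abs_deriv_mul measurableSet_Ioc
      (fun x hx => (vr_hasDerivAt hα n hx.1.le).hasDerivWithinAt)
      (fun x hx y hy hxy => ?_)]
    · refine setLIntegral_congr_fun measurableSet_Ioc fun x hx => ?_
      have hD := Dn_pos hα n (z := (1 + x) / 2) (by linarith [hx.1])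
      have e1 := ext1_coe ψ (Vb hα n ⟨x, hx⟩)
      simp only [Vb] at e1
      rw [e1, ext1, dif_pos hx, abs_of_nonneg (by positivity)]
      rfl
    · rcases lt_trichotomy x y with h | h | h
      · exact absurd hxy (vr_lt hα n hx.1.le h).ne
      · exact h
      · exact absurd hxy (vr_lt hα n hy.1.le h).ne'

end LSV

/-! ### The first entry time of the LSV map -/

namespace LSV

variable {α : ℝ}

lemma lsv_left {x : ℝ} (hx : x ≤ 1 / 2) : lsv α x = Lm α x := by rw [lsv, if_pos hx]; rfl

lemma lsv_right {x : ℝ} (hx : 1 / 2 < x) : lsv α x = 2 * x - 1 := by rw [lsv, if_neg (not_le.2 hx)]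

lemma lsv_mem (hα : 0 < α ∧ α < 1) {x : ℝ} (hx : x ∈ Set.Ioc (0:ℝ) 1) :
    lsv α x ∈ Set.Ioc (0:ℝ) 1 := by
  by_cases h : x ≤ 1 / 2
  · rw [lsv_left h]
    refine ⟨hx.1.trans_le (le_Lm hx.1.le), ?_⟩
    rw [← Lm_half (α := α)]
    exact (Lm_strictMonoOn hα).monotoneOn hx.1.le (by norm_num) h
  · rw [not_le] at h
    rw [lsv_right h]
    exact ⟨by linarith, by linarith [hx.2]⟩

lemma lsv_measurable : Measurable (lsv α) := by
  unfold lsv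
  refine Measurable.ite measurableSet_Iic ?_ ?_ <;> fun_prop

/-- The LSV map as a self-map of `(0,1]`. -/
noncomputable def Tu (hα : 0 < α ∧ α < 1) (x : Iu) : Iu := ⟨lsv α x, lsv_mem hα x.2⟩

lemma Tu_measurable (hα : 0 < α ∧ α < 1) : Measurable (Tu hα) :=
  (lsv_measurable.comp measurable_subtype_coe).subtype_mk

lemma exists_xs_lt (hα : 0 < α ∧ α < 1) (y : Iu) : ∃ n, xs α (n + 1) < y := by
  obtain ⟨n, hn⟩ := Set.mem_iUnion.1 ((Set.ext_iff.1 (iUnion_Ioc hα) y).2 y.2)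
  exact ⟨n, hn.1⟩

open Classical in
/-- The number of steps before the orbit enters `(1/2,1]`. -/
noncomputable def Nu (hα : 0 < α ∧ α < 1) (y : Iu) : ℕ := Nat.find (exists_xs_lt hα y)

lemma Nu_eq_iff (hα : 0 < α ∧ α < 1) (y : Iu) (n : ℕ) :
    Nu hα y = n ↔ (y:ℝ) ∈ Set.Ioc (xs α (n + 1)) (xs α n) := by
  classical
  unfold Nu
  rw [Nat.find_eq_iff]
  constructor
  · rintro ⟨h1, h2⟩
    refine ⟨h1, ?_⟩
    rcases n with _ | n
    · exact y.2.2
    · exact not_lt.1 (h2 n (by omega))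
  · rintro ⟨h1, h2⟩
    exact ⟨h1, fun k hk => not_lt.2 (h2.trans (xs_antitone hα (by omega)))⟩

lemma Nu_mem (hα : 0 < α ∧ α < 1) (y : Iu) :
    (y:ℝ) ∈ Set.Ioc (xs α (Nu hα y + 1)) (xs α (Nu hα y)) := (Nu_eq_iff hα y _).1 rfl

lemma Nu_measurable (hα : 0 < α ∧ α < 1) : Measurable (Nu hα) := by
  refine measurable_to_countable' fun n => ?_
  have : Nu hα ⁻¹' {n} = Subtype.val ⁻¹' Set.Ioc (xs α (n + 1)) (xs α n) := by
    ext y; exact Nu_eq_iff hα y n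
  rw [this]
  exact measurable_subtype_coe measurableSet_Ioc

lemma Nu_Tu (hα : 0 < α ∧ α < 1) (y : Iu) (h : Nu hα y ≠ 0) :
    Nu hα (Tu hα y) + 1 = Nu hα y := by
  obtain ⟨n, hn⟩ := Nat.exists_eq_succ_of_ne_zero h
  have hm := (Nu_eq_iff hα y _).1 hn
  rw [hn, Nat.succ_eq_add_one]
  congr 1
  rw [Nu_eq_iff, Tu]
  simp only
  rw [lsv_left (hm.2.trans (xs_le_half hα n))]
  have e1 := Lm_xs hα n
  have e2 := Lm_xs hα (n + 1)
  rw [← e1]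
  refine ⟨?_, (Lm_strictMonoOn hα).monotoneOn y.2.1.le (xs_pos hα _).le hm.2⟩
  rw [← e2]
  exact Lm_strictMonoOn hα (xs_pos hα _).le y.2.1.le hm.1

/-- The first-entry map of `(1/2,1]` followed by one more step. -/
noncomputable def Ju (hα : 0 < α ∧ α < 1) (y : Iu) : Iu := (Tu hα)^[Nu hα y + 1] y

/-- The LSV map and its induced map, with base `(1/2,1]` identified with `(0,1]` through the
right branch. -/
noncomputable def indu (hα : 0 < α ∧ α < 1) : Induced Iu where
  T := Tu hα
  J := Ju hα
  N := Nu hα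
  T_meas := Tu_measurable hα
  J_meas := by
    have h : Measurable fun p : Iu × ℕ => (Tu hα)^[p.2 + 1] p.1 :=
      measurable_from_prod_countable_left fun n => (Tu_measurable hα).iterate (n + 1)
    exact h.comp (measurable_id.prodMk (Nu_measurable hα))
  N_meas := Nu_measurable hα
  N_T := Nu_Tu hα
  J_T := fun x hx => by
    unfold Ju
    rw [Nu_Tu hα x hx]; rfl
  J_zero := fun x hx => by
    unfold Ju; rw [hx]; rfl

lemma Nu_Vb (hα : 0 < α ∧ α < 1) (n : ℕ) (x : Iu) : Nu hα (Vb hα n x) = n := by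
  rw [Nu_eq_iff, ← vr_image hα]
  exact ⟨x, x.2, rfl⟩

lemma Tu_Vb_zero (hα : 0 < α ∧ α < 1) (x : Iu) : Tu hα (Vb hα 0 x) = x := by
  apply Subtype.ext
  simp only [Tu, Vb, vr, Function.iterate_zero, id]
  rw [lsv_right (by linarith [x.2.1])]; ring

lemma Tu_Vb_succ (hα : 0 < α ∧ α < 1) (n : ℕ) (x : Iu) : Tu hα (Vb hα (n + 1) x) = Vb hα n x := by
  apply Subtype.ext
  have h1 := (Un_mem hα (n + 1) (half_mem x)).2.trans (xs_le_half hα n)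
  simp only [Tu, Vb, vr]
  rw [lsv_left h1, Function.iterate_succ_apply',
    Lm_U hα (Un_pos hα n (by linarith [(half_mem x).1])).le]

lemma Tu_iter_Vb (hα : 0 < α ∧ α < 1) (n j : ℕ) (x : Iu) :
    (Tu hα)^[j] (Vb hα (n + j) x) = Vb hα n x := by
  induction j with
  | zero => rfl
  | succ j ih => rw [Function.iterate_succ_apply, ← add_assoc, Tu_Vb_succ, ih]

lemma Ju_Vb (hα : 0 < α ∧ α < 1) (n : ℕ) (x : Iu) : Ju hα (Vb hα n x) = x := by
  unfold Ju
  have := Tu_iter_Vb hα 0 n x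
  rw [zero_add] at this
  rw [Nu_Vb, Function.iterate_succ_apply', this, Tu_Vb_zero hα x]

lemma wB_nonneg (hα : 0 < α ∧ α < 1) (n : ℕ) : 0 ≤ wB α n := by
  have := xs_pos hα (n + 1)
  unfold wB; positivity

lemma wB_eq (hα : 0 < α ∧ α < 1) (n : ℕ) (r : ℝ) :
    wB α n * xs α (n + 1) ^ r = exp (kap α) * 2 ^ α * xs α (n + 1) ^ (1 + α + r) := by
  unfold wB
  rw [rpow_add (xs_pos hα _) (1 + α) r]; ring

/-- The polynomial growth of the return time in terms of the position. -/
lemma succ_le_xs (hα : 0 < α ∧ α < 1) (n : ℕ) : (n:ℝ) + 1 ≤ 4 / α * xs α (n + 1) ^ (-α) := by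
  have h1 := xs_rate hα (n + 1)
  have hα0 := hα.1
  push_cast at h1
  rw [div_mul_eq_mul_div, le_div_iff₀ hα.1]
  nlinarith

lemma wB_summable (hα : 0 < α ∧ α < 1) {r : ℝ} (hr : -1 < r) :
    Summable fun n => wB α n * xs α (n + 1) ^ r := by
  simp only [wB_eq hα]
  exact (xs_summable hα (by linarith)).mul_left _

lemma wB_sum_N (hα : 0 < α ∧ α < 1) : Summable fun n => wB α n * ((n:ℝ) + 1) := by
  refine Summable.of_nonneg_of_le (fun n => by have := wB_nonneg hα n; positivity)
    (fun n => mul_le_mul_of_nonneg_left (succ_le_xs hα n) (wB_nonneg hα n)) ?_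
  have := (wB_summable hα (r := -α) (by linarith [hα.2])).mul_left (4 / α)
  refine this.congr fun n => by ring

end LSV

/-! ### Invariant measures on the half-open interval -/

section InvariantOfJ

variable {X : Type*} [MetricSpace X] [MeasurableSpace X] [BorelSpace X] [SecondCountableTopology X]

/-- A continuous density of a measure invariant under the expanding map is a fixed point of the
transfer operator, pointwise. -/
lemma FullBranch.P_eq_of_inv {ν : Measure X} [IsProbabilityMeasure ν] [Nonempty X]
    [ν.IsOpenPosMeasure] (S : FullBranch ν) {J : X → X} (JV : ∀ n x, J (S.V n x) = x)
    {ρ : X → ℝ} (hρ : Continuous ρ) {M : ℝ} (hM : ∀ x, ‖ρ x‖ ≤ M) (hρ0 : ∀ x, 0 ≤ ρ x)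
    (hJ : MeasurePreserving J (ν.withDensity fun x => ENNReal.ofReal (ρ x))
      (ν.withDensity fun x => ENNReal.ofReal (ρ x))) : S.P ρ = ρ := by
  have hc : Continuous (S.P ρ) := by
    refine continuous_tsum (fun n => (S.w_cont n).smul (hρ.comp (S.V_cont n)))
      (S.wb_summable.mul_right M) fun n x => ?_
    exact S.norm_term_le (bn := fun _ => M) (fun _ _ => hM _) n x
  have hρm : Measurable fun x => ENNReal.ofReal (ρ x) := hρ.measurable.ennreal_ofReal
  have hPm : Measurable fun x => ENNReal.ofReal (S.P ρ x) := hc.measurable.ennreal_ofReal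
  have hP0 : ∀ x, 0 ≤ S.P ρ x := fun x =>
    tsum_nonneg fun n => mul_nonneg (S.w_nonneg n x) (hρ0 _)
  have key : (ν.withDensity fun x => ENNReal.ofReal (S.P ρ x))
      = ν.withDensity fun x => ENNReal.ofReal (ρ x) := by
    refine Measure.ext_of_lintegral _ fun ψ hψ => ?_
    have hψJ : Measurable fun x => ψ (J x) := hψ.comp hJ.measurable
    rw [← hJ.lintegral_comp hψ, lintegral_withDensity_eq_lintegral_mul _ hPm hψ,
      lintegral_withDensity_eq_lintegral_mul _ hρm hψJ, S.dual _
        (hρm.mul hψJ), ← lintegral_tsum]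
    · refine lintegral_congr fun x => ?_
      simp only [Pi.mul_apply, JV, Function.comp]
      have : ENNReal.ofReal (S.P ρ x) = ∑' n, ENNReal.ofReal (S.w n x) * ENNReal.ofReal (ρ (S.V n x)) := by
        simp only [P, smul_eq_mul]
        rw [ENNReal.ofReal_tsum_of_nonneg (fun n => mul_nonneg (S.w_nonneg n x) (hρ0 _))
          (by simpa using S.summable_bdd hM x)]
        congr 1; ext n
        rw [ENNReal.ofReal_mul (S.w_nonneg n x)]
      rw [this, ← ENNReal.tsum_mul_right]
      congr 1; ext n; ring
    · intro n
      refine (Measurable.mul ?_ ?_).aemeasurable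
      · exact (S.w_cont n).measurable.ennreal_ofReal
      · exact (hρm.mul hψJ).comp (S.V_cont n).measurable
  have hintg : ∫⁻ x, ENNReal.ofReal (S.P ρ x) ∂ν ≠ ⊤ := by
    have h1 := S.P_norm_le hM
    refine ((lintegral_mono fun x => ENNReal.ofReal_le_ofReal
      ((le_abs_self _).trans (h1 x))).trans_lt ?_).ne
    simp
  have hae := (withDensity_eq_iff hPm.aemeasurable hρm.aemeasurable hintg).1 key
  refine (Continuous.ae_eq_iff_eq ν hc hρ).1 ?_
  filter_upwards [hae] with x hx
  exact (ENNReal.ofReal_eq_ofReal_iff (hP0 x) (hρ0 x)).1 hx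

end InvariantOfJ

namespace LSV

variable {α : ℝ}

instance : lam.IsOpenPosMeasure := by
  constructor
  rintro _ ⟨O, hO, rfl⟩ ⟨x, hx⟩
  rw [lam, comap_subtype_coe_apply measurableSet_Ioc]
  obtain ⟨ε, hε, hball⟩ := Metric.isOpen_iff.1 hO x hx
  have hsub : Set.Ioo (max 0 ((x:ℝ) - ε)) x ⊆ Subtype.val '' (Subtype.val ⁻¹' O : Set Iu) := by
    intro y hy
    have h0 : 0 < y := (le_max_left _ _).trans_lt hy.1
    have h1 : (x:ℝ) - ε < y := (le_max_right _ _).trans_lt hy.1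
    refine ⟨⟨y, h0, hy.2.le.trans x.2.2⟩, ?_, rfl⟩
    apply hball
    rw [Metric.mem_ball, Real.dist_eq, abs_lt]
    constructor <;> linarith [hy.2]
  have hpos : 0 < volume (Set.Ioo (max 0 ((x:ℝ) - ε)) (x:ℝ)) := by
    rw [Real.volume_Ioo, ENNReal.ofReal_pos, sub_pos]
    exact max_lt x.2.1 (by linarith)
  exact (hpos.trans_le (measure_mono hsub)).ne'

/-- The invariant measure as a measure on `(0,1]`. -/
noncomputable def mI (m : Measure ℝ) : Measure Iu := m.comap Subtype.val

variable {m : Measure ℝ} {h : ℝ → ℝ}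

lemma m_Ioc [IsProbabilityMeasure m] (hsupp : m (Set.Icc 0 1) = 1)
    (hm : m = volume.withDensity fun x => ENNReal.ofReal (h x)) : m (Set.Ioc 0 1) = 1 := by
  have h0 : m {(0:ℝ)} = 0 := by
    rw [hm]; exact withDensity_absolutelyContinuous _ _ (by simp)
  apply le_antisymm prob_le_one
  rw [← hsupp]
  calc m (Set.Icc 0 1) ≤ m ({(0:ℝ)} ∪ Set.Ioc 0 1) := measure_mono (by
        intro x hx
        rcases hx.1.eq_or_lt with h | h
        · left; exact h.symm
        · right; exact ⟨h, hx.2⟩)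
    _ ≤ m {(0:ℝ)} + m (Set.Ioc 0 1) := measure_union_le _ _
    _ = _ := by rw [h0, zero_add]

lemma mI_map [IsProbabilityMeasure m] (h1 : m (Set.Ioc 0 1) = 1) :
    (mI m).map Subtype.val = m := by
  rw [mI, map_comap_subtype_coe measurableSet_Ioc]
  exact Measure.restrict_eq_self_of_ae_mem ((prob_compl_eq_zero_iff measurableSet_Ioc).2 h1)

lemma mI_prob [IsProbabilityMeasure m] (h1 : m (Set.Ioc 0 1) = 1) : IsProbabilityMeasure (mI m) := by
  constructor
  rw [mI, comap_subtype_coe_apply measurableSet_Ioc]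
  rw [Set.image_univ, Subtype.range_coe]
  exact h1

lemma mI_pres [IsProbabilityMeasure m] (h1 : m (Set.Ioc 0 1) = 1) (hα : 0 < α ∧ α < 1)
    (hT : MeasurePreserving (lsv α) m m) : MeasurePreserving (Tu hα) (mI m) (mI m) := by
  refine ⟨Tu_measurable hα, ?_⟩
  have he : MeasurableEmbedding (Subtype.val : Iu → ℝ) :=
    MeasurableEmbedding.subtype_coe measurableSet_Ioc
  have h2 : ((mI m).map (Tu hα)).map Subtype.val = (mI m).map Subtype.val := by
    rw [Measure.map_map he.measurable (Tu_measurable hα)]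
    have : Subtype.val ∘ Tu hα = lsv α ∘ Subtype.val := rfl
    rw [this, ← Measure.map_map lsv_measurable he.measurable, mI_map h1, hT.map_eq]
  rw [← he.comap_map ((mI m).map (Tu hα)), h2, he.comap_map]

lemma mI_dens (hm : m = volume.withDensity fun x => ENNReal.ofReal (h x)) :
    mI m = lam.withDensity fun x : Iu => ENNReal.ofReal (h x) := by
  ext s hs
  have he : MeasurableEmbedding (Subtype.val : Iu → ℝ) :=
    MeasurableEmbedding.subtype_coe measurableSet_Ioc
  rw [mI, comap_subtype_coe_apply measurableSet_Ioc, hm,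
    withDensity_apply _ (he.measurableSet_image.2 hs), withDensity_apply _ hs, lam]
  exact (setLIntegral_subtype measurableSet_Ioc s fun x => ENNReal.ofReal (h x)).symm

/-- The density of the induced measure, the image under the right branch of the invariant
measure restricted to `(1/2,1]`. The positive part accounts for the truncation in
`ENNReal.ofReal (h x)`. -/
noncomputable def rho (h : ℝ → ℝ) (x : ℝ) : ℝ := max (h ((1 + x) / 2)) 0 / 2

lemma rho_nonneg (x : ℝ) : 0 ≤ rho h x := by unfold rho; positivity

lemma rho_cont (hh : ContinuousOn h (Set.Ioc 0 1)) : ContinuousOn (rho h) (Set.Icc 0 1) := by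
  unfold rho
  refine ContinuousOn.div_const (ContinuousOn.sup ?_ continuousOn_const) _
  refine hh.comp (by fun_prop) fun x hx => ⟨by linarith [hx.1], by linarith [hx.2]⟩

lemma mu_dens (hα : 0 < α ∧ α < 1) (hh : ContinuousOn h (Set.Ioc 0 1))
    (hm : m = volume.withDensity fun x => ENNReal.ofReal (h x)) :
    (indu hα).mu (mI m) = lam.withDensity fun x : Iu => ENNReal.ofReal (rho h x) := by
  have hhm : Measurable fun x : Iu => ENNReal.ofReal (h x) :=
    (continuousOn_iff_continuous_restrict.1 hh).measurable.ennreal_ofReal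
  have hρm : Measurable fun x : Iu => ENNReal.ofReal (rho h x) :=
    (continuousOn_iff_continuous_restrict.1
      ((rho_cont hh).mono Set.Ioc_subset_Icc_self)).measurable.ennreal_ofReal
  refine Measure.ext_of_lintegral _ fun ψ hψ => ?_
  have hTm := Tu_measurable hα
  have hNm : MeasurableSet {y : Iu | Nu hα y = 0} := Nu_measurable hα (measurableSet_singleton 0)
  have hind : Measurable ({y : Iu | Nu hα y = 0}.indicator fun y => ψ (Tu hα y)) :=
    (hψ.comp hTm).indicator hNm
  rw [Induced.mu, lintegral_map hψ (indu hα).T_meas]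
  change ∫⁻ y in {y : Iu | Nu hα y = 0}, ψ (Tu hα y) ∂mI m = _
  rw [← lintegral_indicator hNm, mI_dens hm, lintegral_withDensity_eq_lintegral_mul _ hhm hind,
    lintegral_withDensity_eq_lintegral_mul _ hρm hψ, (fb hα).dual _ (hhm.mul hind),
    tsum_eq_single 0]
  · refine lintegral_congr fun x => ?_
    change ENNReal.ofReal (Dn α 0 ((1 + (x:ℝ)) / 2) / 2) *
      (ENNReal.ofReal (h (Vb hα 0 x)) * Set.indicator _ _ (Vb hα 0 x)) = _
    have e : ((Vb hα 0 x : Iu) : ℝ) = (1 + x) / 2 := rfl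
    rw [Set.indicator_of_mem (show Vb hα 0 x ∈ {y : Iu | Nu hα y = 0} from Nu_Vb hα 0 x),
      Tu_Vb_zero, ← mul_assoc, e, Pi.mul_apply]
    congr 1
    have : Dn α 0 ((1 + (x:ℝ)) / 2) = 1 := by simp [Dn]
    rw [this, rho, ← ENNReal.ofReal_mul (by norm_num)]
    rcases le_total (h ((1 + (x:ℝ)) / 2)) 0 with h0 | h0
    · rw [max_eq_right h0, ENNReal.ofReal_of_nonpos (by linarith), zero_div, ENNReal.ofReal_zero]
    · rw [max_eq_left h0]; congr 1; ring
  · intro n hn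
    have : ∀ x : Iu, Vb hα n x ∉ {y : Iu | Nu hα y = 0} := fun x hx => hn (by
      rw [← Nu_Vb hα n x]; exact hx)
    rw [← lintegral_zero (μ := lam)]
    refine lintegral_congr fun x => ?_
    change _ * (ENNReal.ofReal (h (Vb hα n x)) * Set.indicator {y : Iu | Nu hα y = 0}
      (fun y => ψ (Tu hα y)) (Vb hα n x)) = _
    rw [Set.indicator_of_notMem (this x), mul_zero, mul_zero]

end LSV

/-! ### The renewal system of the LSV map and the induced observable -/

namespace LSV

variable {α β : ℝ} {m : Measure ℝ} {h : ℝ → ℝ}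

/-- The density of the induced measure is a fixed point of the transfer operator, and hence
log-Lipschitz. -/
lemma rho_inv [IsProbabilityMeasure m] (hα : 0 < α ∧ α < 1) (h1 : m (Set.Ioc 0 1) = 1)
    (hT : MeasurePreserving (lsv α) m m) (hh : ContinuousOn h (Set.Ioc 0 1))
    (hm : m = volume.withDensity fun x => ENNReal.ofReal (h x)) :
    (fb hα).P (fun x : Iu => rho h x) = (fun x : Iu => rho h x) ∧
      LogCone (fb hα).R (fun x : Iu => rho h x) := by
  haveI := mI_prob h1
  have hc := rho_cont hh
  have hu : UniformContinuous fun x : Iu => rho h x :=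
    uniformContinuousOn_iff_restrict.1
      ((isCompact_Icc.uniformContinuousOn_of_continuous hc).mono Set.Ioc_subset_Icc_self)
  obtain ⟨M, hM⟩ := isCompact_Icc.exists_bound_of_continuousOn hc
  have hM' : ∀ x : Iu, ‖rho h x‖ ≤ M := fun x => hM x (Set.Ioc_subset_Icc_self x.2)
  have hP : (fb hα).P (fun x : Iu => rho h x) = (fun x : Iu => rho h x) := by
    refine (fb hα).P_eq_of_inv (J := Ju hα) (Ju_Vb hα) hu.continuous hM' (fun x => rho_nonneg x) ?_
    have := (indu hα).J_preserves (mI_pres h1 hα hT)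
    rw [mu_dens hα hh hm] at this
    exact this
  exact ⟨hP, (fb hα).invariant_cone hu hM' (fun x => rho_nonneg x) hP⟩

lemma rho_mass [IsProbabilityMeasure m] (hα : 0 < α ∧ α < 1) (h1 : m (Set.Ioc 0 1) = 1)
    (hT : MeasurePreserving (lsv α) m m) (hh : ContinuousOn h (Set.Ioc 0 1))
    (hm : m = volume.withDensity fun x => ENNReal.ofReal (h x)) :
    0 < ∫ x : Iu, rho h x ∂lam := by
  haveI := mI_prob h1
  have hcone := (rho_inv hα h1 hT hh hm).2
  obtain ⟨-, hi, -⟩ := (fb hα).cone_integrable (fb hα).R_pos.le hcone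
  refine lt_of_le_of_ne (integral_nonneg fun x => rho_nonneg _) fun h0 => ?_
  have hae := (integral_eq_zero_iff_of_nonneg (fun x : Iu => rho_nonneg (h := h) (x:ℝ)) hi).1 h0.symm
  have hz : (indu hα).mu (mI m) = 0 := by
    rw [mu_dens hα hh hm, withDensity_congr_ae (g := 0), withDensity_zero]
    filter_upwards [hae] with x hx
    simp only [Pi.zero_apply] at hx ⊢
    rw [hx, ENNReal.ofReal_zero]
  have := ((indu hα).kac_phi (mI_pres h1 hα hT)).2
  rw [hz, integral_zero_measure] at this
  exact zero_ne_one this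

/-- The renewal system of the LSV map over the interval `(1/2,1]`. -/
noncomputable def sys [IsProbabilityMeasure m] (hα : 0 < α ∧ α < 1) (h1 : m (Set.Ioc 0 1) = 1)
    (hT : MeasurePreserving (lsv α) m m) (hh : ContinuousOn h (Set.Ioc 0 1))
    (hm : m = volume.withDensity fun x => ENNReal.ofReal (h x)) : RenewalSys lam (mI m) where
  S := fb hα
  D := indu hα
  JV := Ju_Vb hα
  NV := Nu_Vb hα
  inv := mI_pres h1 hα hT
  ρ := fun x => rho h x
  cone := (rho_inv hα h1 hT hh hm).2
  Pρ := (rho_inv hα h1 hT hh hm).1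
  dens := mu_dens hα hh hm
  M_pos := rho_mass hα h1 hT hh hm
  sum_N := wB_sum_N hα

/-- The observable `x ^ (-β)` on `(0,1]`. -/
noncomputable def obs (β : ℝ) (x : Iu) : ℝ := (x:ℝ) ^ (-β)

lemma obs_pos (x : Iu) : 0 < obs β x := rpow_pos_of_pos x.2.1 _

lemma obs_meas : Measurable (obs β) := by unfold obs; fun_prop

lemma ind_Vb (hα : 0 < α ∧ α < 1) (g : Iu → ℝ) (n : ℕ) (x : Iu) :
    (indu hα).ind g (Vb hα n x) = ∑ j ∈ Finset.range (n + 1), g (Vb hα j x) := by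
  have hN : (indu hα).N (Vb hα n x) = n := Nu_Vb hα n x
  rw [Induced.ind, hN, birkhoffSum, ← Finset.sum_range_reflect]
  refine Finset.sum_congr rfl fun j hj => ?_
  rw [Finset.mem_range] at hj
  have : n = j + (n + 1 - 1 - j) := by omega
  have e := Tu_iter_Vb hα j (n + 1 - 1 - j) x
  rw [← this] at e
  exact congrArg g e

lemma Vb_lower (hα : 0 < α ∧ α < 1) (n : ℕ) (x : Iu) : xs α (n + 1) ≤ (Vb hα n x : ℝ) :=
  (Un_mem hα n (half_mem x)).1

lemma Vb_upper (hα : 0 < α ∧ α < 1) (n : ℕ) (x : Iu) : (Vb hα n x : ℝ) ≤ xs α n :=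
  (Un_mem hα n (half_mem x)).2

lemma Vb_rpow (hα : 0 < α ∧ α < 1) (hβ : 0 ≤ β) {j n : ℕ} (hj : j ≤ n) (x : Iu) :
    (Vb hα j x : ℝ) ^ (-β) ≤ xs α (n + 1) ^ (-β) :=
  rpow_le_rpow_of_nonpos (xs_pos hα _)
    ((xs_antitone hα (by omega)).trans (Vb_lower hα j x)) (by linarith)

/-- The relative distortion of the branches. -/
lemma Vb_sub (hα : 0 < α ∧ α < 1) (j : ℕ) {x y : Iu} (hxy : (x:ℝ) ≤ y) :
    (Vb hα j x : ℝ) ≤ Vb hα j y ∧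
    (Vb hα j y : ℝ) - Vb hα j x ≤ exp (kap α) * 2 ^ α * Vb hα j x * (y - x) := by
  have hz := half_mem x
  refine ⟨Un_mono hα j (by linarith [hz.1]) (by linarith), ?_⟩
  have h1 := Un_sub_le hα j (z := (1 + (x:ℝ)) / 2) (z' := (1 + (y:ℝ)) / 2)
    (by linarith [hz.1]) (by linarith)
  have h2 := Dn_le hα j hz
  have h3 : xs α (j + 1) ^ (1 + α) ≤ Vb hα j x := by
    refine le_trans ?_ (Vb_lower hα j x)
    conv_rhs => rw [← rpow_one (xs α (j + 1))]
    exact rpow_le_rpow_of_exponent_ge (xs_pos hα _) (xs_le_one hα _) (by linarith [hα.1])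
  have h4 : Dn α j ((1 + (x:ℝ)) / 2) ≤ exp (kap α) * 2 * (2 ^ α * Vb hα j x) :=
    h2.trans (by gcongr)
  calc _ ≤ Dn α j ((1 + (x:ℝ)) / 2) * ((1 + (y:ℝ)) / 2 - (1 + (x:ℝ)) / 2) := h1
    _ ≤ exp (kap α) * 2 * (2 ^ α * Vb hα j x) * ((1 + (y:ℝ)) / 2 - (1 + (x:ℝ)) / 2) :=
        mul_le_mul_of_nonneg_right h4 (by linarith)
    _ = _ := by ring

lemma rpow_neg_sub_le (hβ : 0 ≤ β) (hβ1 : β ≤ 1) {a b : ℝ} (ha : 0 < a) (hab : a ≤ b) :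
    a ^ (-β) - b ^ (-β) ≤ a ^ (-β) * ((b - a) / a) := by
  have hb := ha.trans_le hab
  have hr : 1 ≤ b / a := (one_le_div ha).2 hab
  have e : b ^ (-β) = a ^ (-β) * (b / a) ^ (-β) := by
    rw [← mul_rpow ha.le (by positivity), mul_div_cancel₀ _ ha.ne']
  have h1 : (b / a) ^ (-(1:ℝ)) ≤ (b / a) ^ (-β) :=
    rpow_le_rpow_of_exponent_le hr (by linarith)
  have h2 : 2 - b / a ≤ (b / a) ^ (-(1:ℝ)) := by
    have hr0 : 0 < b / a := by linarith
    rw [rpow_neg_one, ← one_div, le_div_iff₀ hr0]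
    nlinarith [sq_nonneg (b / a - 1)]
  rw [e, sub_div, div_self ha.ne']
  have := rpow_pos_of_pos ha (-β)
  nlinarith

/-- On the `n`-th branch the induced observable is at most a constant times
`xs (n + 1) ^ (-(α + β))`, which is summable against the weights because `α + β < 1`. -/
lemma ind_obs_BL (hα : 0 < α ∧ α < 1) (hβ : 0 < β) (hαβ : α + β < 1) :
    (fb hα).BL ((indu hα).ind (obs β)) := by
  set C := exp (kap α) * 2 ^ α + 1
  have hC : 1 ≤ C := by have : 0 < exp (kap α) * 2 ^ α := by positivity
                        linarith
  have hx := fun n => rpow_pos_of_pos (xs_pos hα (n + 1)) (-β)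
  refine ⟨(indu hα).ind_meas obs_meas, fun n => C * (((n:ℝ) + 1) * xs α (n + 1) ^ (-β)),
    fun n x => ?_, fun n x y => ?_, ?_⟩
  · change |(indu hα).ind (obs β) (Vb hα n x)| ≤ _
    rw [ind_Vb, abs_of_nonneg (Finset.sum_nonneg fun j _ => (obs_pos _).le)]
    refine (Finset.sum_le_card_nsmul _ _ (xs α (n + 1) ^ (-β)) fun j hj => ?_).trans ?_
    · exact Vb_rpow hα hβ.le (by rw [Finset.mem_range] at hj; omega) x
    · rw [Finset.card_range, nsmul_eq_mul]
      push_cast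
      exact le_mul_of_one_le_left (by have := hx n; positivity) hC
  · change |(indu hα).ind (obs β) (Vb hα n x) - (indu hα).ind (obs β) (Vb hα n y)| ≤ _
    wlog hxy : (x:ℝ) ≤ y generalizing x y
    · rw [abs_sub_comm, dist_comm]; exact this y x (not_le.1 hxy).le
    have hd : dist x y = y - x := by
      rw [Subtype.dist_eq, Real.dist_eq, abs_sub_comm, abs_of_nonneg (by linarith)]
    rw [ind_Vb, ind_Vb, ← Finset.sum_sub_distrib]
    refine (Finset.abs_sum_le_sum_abs _ _).trans ?_
    refine (Finset.sum_le_card_nsmul _ _ (C * xs α (n + 1) ^ (-β) * dist x y) fun j hj => ?_).trans ?_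
    · obtain ⟨h1, h2⟩ := Vb_sub hα j hxy
      have hp := (Vb hα j x).2.1
      have h3 := rpow_neg_sub_le hβ.le (by linarith [hα.1]) hp h1
      have h4 := rpow_le_rpow_of_nonpos hp h1 (by linarith : -β ≤ 0)
      have h5 : ((Vb hα j y : ℝ) - Vb hα j x) / Vb hα j x ≤ C * (y - x) := by
        rw [div_le_iff₀ hp]
        have : 0 ≤ (Vb hα j x : ℝ) * (y - x) := mul_nonneg hp.le (by linarith)
        simp only [C]; linarith
      rw [abs_of_nonneg (by simp only [obs]; linarith), hd]
      have h6 := Vb_rpow hα hβ.le (show j ≤ n by rw [Finset.mem_range] at hj; omega) x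
      calc _ ≤ (Vb hα j x : ℝ) ^ (-β) * (((Vb hα j y : ℝ) - Vb hα j x) / Vb hα j x) := h3
        _ ≤ xs α (n + 1) ^ (-β) * (C * (y - x)) :=
            mul_le_mul h6 h5 (div_nonneg (by linarith) hp.le) (hx n).le
        _ = _ := by ring
    · rw [Finset.card_range, nsmul_eq_mul]
      push_cast
      exact le_of_eq (by ring)
  · have h1 := (wB_summable hα (r := -α + -β) (by linarith)).mul_left (C * (4 / α))
    refine Summable.of_nonneg_of_le (fun n => ?_) (fun n => ?_) h1
    · have := hx n; have := wB_nonneg hα n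
      change 0 ≤ wB α n * _
      positivity
    · change wB α n * _ ≤ _
      rw [rpow_add (xs_pos hα _)]
      have := mul_le_mul_of_nonneg_right (succ_le_xs hα n) (hx n).le
      calc _ ≤ wB α n * (C * (4 / α * xs α (n + 1) ^ (-α) * xs α (n + 1) ^ (-β))) := by
            refine mul_le_mul_of_nonneg_left ?_ (wB_nonneg hα n)
            exact mul_le_mul_of_nonneg_left this (by linarith)
        _ = _ := by ring

lemma ind_obs_add_BL (hα : 0 < α ∧ α < 1) (hβ : 0 < β) (hαβ : α + β < 1) (c : ℝ) :
    (fb hα).BL ((indu hα).ind fun x => obs β x + c) := by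
  obtain ⟨h0, Fb, h1, h2, h3⟩ := ind_obs_BL hα hβ hαβ
  have hN : ∀ n x, (indu hα).N ((fb hα).V n x) = n := Nu_Vb hα
  refine ⟨(indu hα).ind_meas (obs_meas.add_const c), fun n => Fb n + |c| * ((n:ℝ) + 1),
    fun n x => ?_, fun n x y => ?_, ?_⟩
  · rw [Induced.ind_add_const, hN]
    refine (abs_add_le _ _).trans (add_le_add (h1 n x) ?_)
    rw [abs_mul, abs_of_nonneg (by positivity : (0:ℝ) ≤ (n:ℝ) + 1)]
  · rw [Induced.ind_add_const, Induced.ind_add_const, hN, hN, add_sub_add_right_eq_sub]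
    refine (h2 n x y).trans (mul_le_mul_of_nonneg_right ?_ dist_nonneg)
    have : 0 ≤ |c| * ((n:ℝ) + 1) := by positivity
    linarith
  · refine (h3.add ((wB_sum_N hα).mul_left |c|)).congr fun n => ?_
    change _ = wB α n * _
    change wB α n * _ + _ = _
    ring

lemma N_pow_BL (hα : 0 < α ∧ α < 1) {q : ℝ} (hq : 0 ≤ q) (hqα : q * α < 1) :
    (fb hα).BL fun x => (((indu hα).N x : ℝ) + 1) ^ q := by
  have hN : ∀ n x, (indu hα).N ((fb hα).V n x) = n := Nu_Vb hα
  refine ⟨((measurable_from_top.comp (indu hα).N_meas).add_const 1).pow_const q,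
    fun n => ((n:ℝ) + 1) ^ q, fun n x => ?_, fun n x y => ?_, ?_⟩
  · simp only [hN]
    rw [abs_of_nonneg (by positivity)]
  · simp only [hN, sub_self, abs_zero]
    positivity
  · have h1 := (wB_summable hα (r := -α * q) (by linarith)).mul_left ((4 / α) ^ q)
    have hα0 := hα.1
    refine Summable.of_nonneg_of_le (fun n => ?_) (fun n => ?_) h1
    · have := wB_nonneg hα n
      change 0 ≤ wB α n * _
      positivity
    · change wB α n * _ ≤ _
      have h2 := rpow_le_rpow (by positivity) (succ_le_xs hα n) hq
      rw [mul_rpow (by positivity) (by have := xs_pos hα (n + 1); positivity),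
        ← rpow_mul (xs_pos hα _).le] at h2
      calc _ ≤ wB α n * ((4 / α) ^ q * xs α (n + 1) ^ (-α * q)) :=
            mul_le_mul_of_nonneg_left h2 (wB_nonneg hα n)
        _ = _ := by ring

end LSV

/-! ### Asymptotics of the induced observable -/

namespace LSV

variable {α β : ℝ}

lemma one_add_rpow_neg {a s : ℝ} (ha : 0 ≤ a) (ha1 : a ≤ 1) (hs : 0 < s ∧ s < 1) :
    |1 - (1 + a) ^ (-s) - s * a| ≤ 2 * a ^ 2 := by
  have h1 := rpow_one_add_le_one_add_mul_self (s := a) (p := s) (by linarith) hs.1.le hs.2.le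
  have h2 := rpow_one_add_le_one_add_mul_self (s := a) (p := 1 - s) (by linarith)
    (by linarith) (by linarith)
  have hp : 0 < (1 + a) ^ s := by positivity
  have hp' : 0 < (1 + a) ^ (1 - s) := by positivity
  have e : (1 + a) ^ (-s) * (1 + a) = (1 + a) ^ (1 - s) := by
    rw [← rpow_add_one (by positivity)]; congr 1; ring
  have e2 : (1 + a) ^ (-s) * (1 + a) ^ s = 1 := by
    rw [← rpow_add (by positivity)]; simp
  have hn : 0 < (1 + a) ^ (-s) := by positivity
  set u := (1 + a) ^ (-s)
  have h3 : 1 - s * a ≤ u := by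
    have : 1 ≤ u * (1 + s * a) := e2.symm.le.trans (mul_le_mul_of_nonneg_left h1 hn.le)
    by_contra hc
    rw [not_le] at hc
    have hsa : 0 ≤ s * a := mul_nonneg hs.1.le ha
    nlinarith
  have h4 : u ≤ 1 - s * a + s * a ^ 2 := by
    have h5 : u * (1 + a) ≤ 1 + (1 - s) * a := by rw [e]; exact h2
    by_contra hc
    rw [not_le] at hc
    have h6 : 0 ≤ s * a ^ 2 := mul_nonneg hs.1.le (sq_nonneg a)
    have h7 : 0 ≤ s * a ^ 2 * a := mul_nonneg h6 ha
    nlinarith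
  have h6 : s * a ^ 2 ≤ 2 * a ^ 2 := by nlinarith [sq_nonneg a, hs.2]
  rw [abs_le]; constructor
  · nlinarith [sq_nonneg a]
  · nlinarith [sq_nonneg a]

lemma exists_Vb (hα : 0 < α ∧ α < 1) (y : Iu) : ∃ x, Vb hα (Nu hα y) x = y := by
  have := Nu_mem hα y
  rw [← vr_image hα] at this
  obtain ⟨x, hx, he⟩ := this
  exact ⟨⟨x, hx⟩, Subtype.ext he⟩

/-- The induced observable minus its leading term. -/
noncomputable def err (hα : 0 < α ∧ α < 1) (β : ℝ) (n : ℕ) (x : Iu) : ℝ :=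
  (∑ j ∈ Finset.range (n + 1), (Vb hα j x : ℝ) ^ (-β))
    - (Vb hα n x : ℝ) ^ (-(α + β)) / (2 ^ α * (α + β))

/-- One application of the left branch changes the leading term by `x ^ (-β)` up to a
second-order error. -/
lemma err_step (hα : 0 < α ∧ α < 1) (hβ : 0 < β) (hαβ : α + β < 1) (n : ℕ) (x : Iu) :
    |err hα β (n + 1) x - err hα β n x|
      ≤ 2 * 2 ^ α / (α + β) * (Vb hα (n + 1) x : ℝ) ^ (α - β) := by
  have hα0 := hα.1
  set y : ℝ := (Vb hα (n + 1) x).1 with hy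
  have hy0 : 0 < y := (Vb hα (n + 1) x).2.1
  have hyh : y ≤ 1 / 2 := (Vb_upper hα (n + 1) x).trans (xs_le_half hα n)
  have hV : (Vb hα n x : ℝ) = y * (1 + 2 ^ α * y ^ α) := by
    have := congrArg Subtype.val (Tu_Vb_succ hα n x)
    rw [← this]
    exact lsv_left hyh
  set a := 2 ^ α * y ^ α with ha
  have ha0 : 0 ≤ a := by positivity
  have ha1 : a ≤ 1 := small_rpow hα hy0.le hyh
  have hb := one_add_rpow_neg ha0 ha1 (s := α + β) ⟨by linarith, hαβ⟩
  have hA : (0:ℝ) < 2 ^ α := by positivity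
  have e1 : (Vb hα n x : ℝ) ^ (-(α + β)) = y ^ (-(α + β)) * (1 + a) ^ (-(α + β)) := by
    rw [hV, mul_rpow hy0.le (by positivity)]
  have e2 : y ^ (-β) = y ^ (-(α + β)) * y ^ α := by rw [← rpow_add hy0]; congr 1; ring
  have e3 : y ^ (α - β) = y ^ (-(α + β)) * y ^ α * y ^ α := by
    rw [← rpow_add hy0, ← rpow_add hy0]; congr 1; ring
  have hs : 0 < α + β := by linarith
  have e4 : err hα β (n + 1) x - err hα β n x
      = -(y ^ (-(α + β)) / (2 ^ α * (α + β)) * (1 - (1 + a) ^ (-(α + β)) - (α + β) * a)) := by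
    unfold err
    rw [Finset.sum_range_succ _ (n + 1), ← hy, e1, e2, ha]
    field_simp
    ring
  rw [e4, abs_neg, abs_mul, abs_of_nonneg (by positivity)]
  calc _ ≤ y ^ (-(α + β)) / (2 ^ α * (α + β)) * (2 * a ^ 2) := by gcongr
    _ = _ := by rw [e3, ha]; field_simp

lemma err_bound (hα : 0 < α ∧ α < 1) (hβ : 0 < β) (hαβ : α + β < 1) (k : ℕ) (x : Iu) (n : ℕ)
    (hn : n ≤ k) :
    |err hα β n x| ≤ (2 + 2 / (2 ^ α * (α + β)))
      + 2 * 2 ^ α / (α + β) * (n * (1 + xs α (k + 1) ^ (α - β))) := by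
  have hα0 := hα.1
  have hs : 0 < α + β := by linarith
  have hA : (0:ℝ) < 2 ^ α := by positivity
  induction n with
  | zero =>
    have hl := Vb_lower hα 0 x
    rw [zero_add, xs_one hα] at hl
    have hb : ∀ r : ℝ, 0 < r → r < 1 → (Vb hα 0 x : ℝ) ^ (-r) ≤ 2 := by
      intro r h0 h1
      calc (Vb hα 0 x : ℝ) ^ (-r) ≤ (1 / 2 : ℝ) ^ (-r) :=
            rpow_le_rpow_of_nonpos (by norm_num) hl (by linarith)
        _ = 2 ^ r := by rw [one_div, inv_rpow (by norm_num), rpow_neg (by norm_num), inv_inv]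
        _ ≤ 2 ^ (1:ℝ) := rpow_le_rpow_of_exponent_le (by norm_num) h1.le
        _ = 2 := by norm_num
    have h1 := hb β hβ (by linarith)
    have h2 := hb (α + β) hs hαβ
    have p1 := rpow_pos_of_pos (Vb hα 0 x).2.1 (-β)
    have p2 := rpow_pos_of_pos (Vb hα 0 x).2.1 (-(α + β))
    unfold err
    simp only [zero_add, Finset.sum_range_one, Nat.cast_zero, zero_mul, mul_zero, add_zero]
    refine (abs_sub _ _).trans (add_le_add ?_ ?_)
    · rw [abs_of_pos p1]; exact h1
    · rw [abs_of_pos (by positivity)]; gcongr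
  | succ n ih =>
    have h1 := ih (by omega)
    have h2 := err_step hα hβ hαβ n x
    have h3 : (Vb hα (n + 1) x : ℝ) ^ (α - β) ≤ 1 + xs α (k + 1) ^ (α - β) := by
      have hv := (Vb hα (n + 1) x).2
      have hxp := rpow_pos_of_pos (xs_pos hα (k + 1)) (α - β)
      rcases le_total β α with hc | hc
      · have := rpow_le_one hv.1.le hv.2 (sub_nonneg.2 hc)
        linarith
      · have : (Vb hα (n + 1) x : ℝ) ^ (α - β) ≤ xs α (k + 1) ^ (α - β) :=
          rpow_le_rpow_of_nonpos (xs_pos hα _)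
            ((xs_antitone hα (by omega)).trans (Vb_lower hα _ x)) (by linarith)
        linarith
    have h4 : |err hα β (n + 1) x| ≤ |err hα β n x| + |err hα β (n + 1) x - err hα β n x| := by
      have := abs_add_le (err hα β n x) (err hα β (n + 1) x - err hα β n x)
      rwa [add_sub_cancel] at this
    have h5 : 2 * 2 ^ α / (α + β) * (Vb hα (n + 1) x : ℝ) ^ (α - β)
        ≤ 2 * 2 ^ α / (α + β) * (1 + xs α (k + 1) ^ (α - β)) := by gcongr
    push_cast
    linarith

lemma xs_rpow_le_Vb (hα : 0 < α ∧ α < 1) {r : ℝ} (h0 : 0 ≤ r) (h1 : r ≤ 1) (n : ℕ) (x : Iu) :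
    xs α (n + 1) ^ (-r) ≤ 2 * (Vb hα n x : ℝ) ^ (-r) := by
  have hv := (Vb hα n x).2.1
  have h2 := (Vb_upper hα n x).trans (xs_le_two hα n)
  calc xs α (n + 1) ^ (-r) ≤ ((Vb hα n x : ℝ) / 2) ^ (-r) :=
        rpow_le_rpow_of_nonpos (by positivity) (by linarith) (by linarith)
    _ = 2 ^ r * (Vb hα n x : ℝ) ^ (-r) := by
        rw [div_rpow hv.le (by norm_num), rpow_neg (by norm_num : (0:ℝ) ≤ 2), div_inv_eq_mul, mul_comm]
    _ ≤ 2 ^ (1:ℝ) * (Vb hα n x : ℝ) ^ (-r) := by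
        gcongr; norm_num
    _ = _ := by norm_num

/-- The induced observable is a constant multiple of `y ^ (-(α + β))` up to a less singular error. -/
theorem ind_asymp (hα : 0 < α ∧ α < 1) (hβ : 0 < β) (hαβ : α + β < 1) (c : ℝ) :
    ∃ C : ℝ, 0 ≤ C ∧ ∀ y : Iu, |(indu hα).ind (fun x => obs β x + c) y
      - 1 / (2 ^ α * (α + β)) * (y:ℝ) ^ (-(α + β))| ≤ C * (y:ℝ) ^ (-(max α β)) := by
  have hα0 := hα.1
  have hs : 0 < α + β := by linarith
  have hA : (0:ℝ) < 2 ^ α := by positivity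
  set C0 := 2 + 2 / (2 ^ α * (α + β)) with hC0
  set D := 2 * 2 ^ α / (α + β) with hD
  have hC0p : 0 ≤ C0 := by positivity
  have hDp : 0 ≤ D := by positivity
  refine ⟨2 * C0 + D * (4 / α) * 4 + |c| * (4 / α) * 2, by positivity, fun y => ?_⟩
  obtain ⟨x, hx⟩ := exists_Vb hα y
  set n := Nu hα y
  have hN : (indu hα).N y = n := rfl
  have hxp := xs_pos hα (n + 1)
  have hy := y.2
  have e : (indu hα).ind (fun x => obs β x + c) y - 1 / (2 ^ α * (α + β)) * (y:ℝ) ^ (-(α + β))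
      = err hα β n x + c * ((n:ℝ) + 1) := by
    rw [Induced.ind_add_const, hN, err, hx, ← hx, ind_Vb, hx]
    simp only [obs]; ring
  have h1 := err_bound hα hβ hαβ n x n le_rfl
  rw [← hC0, ← hD] at h1
  have h2 := succ_le_xs hα n
  have h3 : (1:ℝ) ≤ xs α (n + 1) ^ (-α) :=
    one_le_rpow_of_pos_of_le_one_of_nonpos hxp (xs_le_one hα _) (by linarith)
  have h4 : xs α (n + 1) ^ (-α) * xs α (n + 1) ^ (α - β) = xs α (n + 1) ^ (-β) := by
    rw [← rpow_add hxp]; congr 1; ring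
  have h5 := xs_rpow_le_Vb hα hα.1.le hα.2.le n x
  have h6 := xs_rpow_le_Vb hα hβ.le (by linarith) n x
  rw [hx] at h5 h6
  have h7 : (y:ℝ) ^ (-α) ≤ (y:ℝ) ^ (-(max α β)) :=
    rpow_le_rpow_of_exponent_ge hy.1 hy.2 (neg_le_neg (le_max_left _ _))
  have h8 : (y:ℝ) ^ (-β) ≤ (y:ℝ) ^ (-(max α β)) :=
    rpow_le_rpow_of_exponent_ge hy.1 hy.2 (neg_le_neg (le_max_right _ _))
  set Y := (y:ℝ) ^ (-(max α β))
  set X := xs α (n + 1) ^ (-α)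
  set W := xs α (n + 1) ^ (α - β)
  have hW : 0 < W := rpow_pos_of_pos hxp _
  have hX : X ≤ 2 * Y := by linarith
  have hXW : X * W ≤ 2 * Y := by rw [h4]; linarith
  rw [e]
  have h9 : (n:ℝ) * (1 + W) ≤ 4 / α * (4 * Y) := by
    calc (n:ℝ) * (1 + W) ≤ (4 / α * X) * (1 + W) := by gcongr; linarith
      _ = 4 / α * (X + X * W) := by ring
      _ ≤ _ := by gcongr; linarith
  calc |err hα β n x + c * ((n:ℝ) + 1)| ≤ |err hα β n x| + |c| * ((n:ℝ) + 1) := by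
        refine (abs_add_le _ _).trans (le_of_eq ?_)
        rw [abs_mul, abs_of_nonneg (by positivity : (0:ℝ) ≤ (n:ℝ) + 1)]
    _ ≤ (C0 + D * (4 / α * (4 * Y))) + |c| * (4 / α * (2 * Y)) := by
        gcongr
        · exact h1.trans (by gcongr)
        · exact h2.trans (by gcongr)
    _ ≤ (C0 * (2 * Y) + D * (4 / α * (4 * Y))) + |c| * (4 / α * (2 * Y)) := by
        gcongr
        exact le_mul_of_one_le_right hC0p (by linarith)
    _ = _ := by ring

end LSV

/-! ### Laplace transforms of powers -/

namespace LSV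

lemma exp_rpow_integrable {a : ℝ} (ha : 0 < a) {b : ℝ} (hb : 0 < b) :
    IntegrableOn (fun v : ℝ => v ^ (a - 1) * Real.exp (-b * v)) (Set.Ioi 0) := by
  have := integrableOn_rpow_mul_exp_neg_mul_rpow (p := 1) (s := a - 1) (by linarith) one_pos hb
  simpa using this

/-- The Laplace transform of `v ^ (a - 1)` on the right half-plane, by analytic continuation from
the positive half-line. -/
lemma laplace_rpow {a : ℝ} (ha : 0 < a) {r : ℂ} (hr : 0 < r.re) :
    ∫ v in Set.Ioi (0:ℝ), ((v ^ (a - 1) : ℝ) : ℂ) * Complex.exp (-(r * v)) =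
      (Real.Gamma a : ℂ) * r ^ (-(a : ℂ)) := by
  set μ : Measure ℝ := (volume.restrict (Set.Ioi (0:ℝ))).withDensity
    (fun v => ENNReal.ofReal (v ^ (a - 1))) with hμ
  have hd : Measurable (fun v : ℝ => ENNReal.ofReal (v ^ (a - 1))) := by fun_prop
  have hset : Set.Iio (0:ℝ) ⊆ ProbabilityTheory.integrableExpSet id μ := by
    intro t ht
    have ht' : t < 0 := ht
    change Integrable (fun v : ℝ => Real.exp (t * id v)) μ
    rw [hμ, integrable_withDensity_iff_integrable_smul' hd (by simp)]
    refine (exp_rpow_integrable ha (b := -t) (by linarith)).congr ?_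
    filter_upwards [ae_restrict_mem measurableSet_Ioi] with v hv
    rw [ENNReal.toReal_ofReal (Real.rpow_nonneg (le_of_lt hv) _)]
    simp
  have hintg : ∀ z : ℂ, ProbabilityTheory.complexMGF id μ z =
      ∫ v in Set.Ioi (0:ℝ), ((v ^ (a - 1) : ℝ) : ℂ) * Complex.exp (z * v) := by
    intro z
    rw [ProbabilityTheory.complexMGF, hμ, integral_withDensity_eq_integral_toReal_smul hd (by simp)]
    refine setIntegral_congr_fun measurableSet_Ioi fun v hv => ?_
    simp only [id]
    rw [ENNReal.toReal_ofReal (Real.rpow_nonneg (le_of_lt hv) _)]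
    simp
  set W : Set ℂ := {z : ℂ | z.re < 0} with hW
  have hWo : IsOpen W := isOpen_lt Complex.continuous_re continuous_const
  have hWc : IsPreconnected W := (convex_halfSpace_re_lt 0).isPreconnected
  have h1 : AnalyticOnNhd ℂ (ProbabilityTheory.complexMGF id μ) W := by
    refine (ProbabilityTheory.analyticOnNhd_complexMGF (X := id) (μ := μ)).mono ?_
    intro z hz
    exact interior_maximal hset isOpen_Iio hz
  have h2 : AnalyticOnNhd ℂ (fun z : ℂ => (Real.Gamma a : ℂ) * (-z) ^ (-(a : ℂ))) W := by
    refine DifferentiableOn.analyticOnNhd (fun z hz => ?_) hWo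
    have hz' : z.re < 0 := hz
    refine DifferentiableAt.differentiableWithinAt ?_
    refine DifferentiableAt.const_mul ?_ _
    refine DifferentiableAt.cpow_const differentiableAt_id.neg ?_
    left; simpa using hz'
  have h3 := h1.eqOn_of_preconnected_of_frequently_eq h2 hWc (z₀ := ((-1:ℝ):ℂ)) (by simp [hW]) ?_
  · have := h3 (x := -r) (by simpa [hW] using hr)
    simp only [hintg, neg_neg] at this
    rw [← this]
    simp
  · have hreal : ∀ b : ℝ, 0 < b → ProbabilityTheory.complexMGF id μ ((-b : ℝ) : ℂ) =
        (Real.Gamma a : ℂ) * (-((-b : ℝ) : ℂ)) ^ (-(a : ℂ)) := by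
      intro b hb
      rw [hintg]
      have := Complex.integral_cpow_mul_exp_neg_mul_Ioi (a := (a:ℂ)) (r := b) (by simpa using ha) hb
      rw [Complex.Gamma_ofReal] at this
      have e : (-((-b : ℝ) : ℂ)) ^ (-(a : ℂ)) = (1 / (b:ℂ)) ^ (a:ℂ) := by
        rw [one_div, Complex.inv_cpow _ _ (by
          rw [Complex.arg_ofReal_of_nonneg hb.le]; exact Real.pi_pos.ne), Complex.cpow_neg]
        simp
      rw [e, mul_comm, ← this]
      refine setIntegral_congr_fun measurableSet_Ioi fun v hv => ?_
      rw [Complex.ofReal_cpow (le_of_lt hv)]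
      simp
    have ht : Tendsto (fun n : ℕ => ((-(1 + 1 / ((n:ℝ) + 1)) : ℝ) : ℂ)) atTop (𝓝[≠] ((-1 : ℝ) : ℂ)) := by
      rw [tendsto_nhdsWithin_iff]
      constructor
      · refine (Complex.continuous_ofReal.tendsto _).comp ?_
        have := (tendsto_one_div_add_atTop_nhds_zero_nat (𝕜 := ℝ)).const_add 1
        simpa using this.neg
      · refine Eventually.of_forall fun n => ?_
        have : (0:ℝ) < 1 / ((n:ℝ) + 1) := by positivity
        simp only [Set.mem_compl_iff, Set.mem_singleton_iff, Complex.ofReal_inj]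
        linarith
    refine ht.frequently (Eventually.frequently (Eventually.of_forall fun n => ?_))
    exact hreal _ (by positivity)

end LSV

/-! ### Compensated Laplace transforms -/

namespace LSV

lemma norm_one_sub_exp_le_two {z : ℂ} (hz : 0 ≤ z.re) : ‖1 - Complex.exp (-z)‖ ≤ 2 := by
  have : ‖Complex.exp (-z)‖ ≤ 1 := by
    rw [Complex.norm_exp]; simpa using hz
  calc ‖1 - Complex.exp (-z)‖ ≤ ‖(1:ℂ)‖ + ‖Complex.exp (-z)‖ := norm_sub_le _ _
    _ ≤ 2 := by rw [norm_one]; linarith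

lemma norm_one_sub_exp_le {z : ℂ} (hz : 0 ≤ z.re) : ‖1 - Complex.exp (-z)‖ ≤ 2 * ‖z‖ := by
  rcases le_total ‖z‖ 1 with h | h
  · have := Complex.norm_exp_sub_one_le (x := -z) (by simpa using h)
    rwa [norm_neg, norm_sub_rev] at this
  · linarith [norm_one_sub_exp_le_two hz]

lemma norm_expH_le {z : ℂ} (hz : 0 ≤ z.re) : ‖Complex.exp (-z) - 1 + z‖ ≤ 3 * ‖z‖ := by
  calc ‖Complex.exp (-z) - 1 + z‖ ≤ ‖Complex.exp (-z) - 1‖ + ‖z‖ := norm_add_le _ _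
    _ ≤ 3 * ‖z‖ := by
      rw [norm_sub_rev]; linarith [norm_one_sub_exp_le hz]

lemma norm_expH_le_sq {z : ℂ} (hz : 0 ≤ z.re) :
    ‖Complex.exp (-z) - 1 + z‖ ≤ 3 * ‖z‖ ^ 2 := by
  rcases le_total ‖z‖ 1 with h | h
  · have := Complex.norm_exp_sub_one_sub_id_le (x := -z) (by simpa using h)
    rw [norm_neg, sub_neg_eq_add] at this
    nlinarith [sq_nonneg ‖z‖]
  · refine (norm_expH_le hz).trans ?_
    nlinarith [norm_nonneg z]

lemma min_rpow_integrable {p : ℝ} (hp : 1 < p) (hp2 : p < 2) :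
    IntegrableOn (fun v : ℝ => v ^ (-p - 1) * min v (v ^ 2)) (Set.Ioi 0) := by
  have hm : Measurable (fun v : ℝ => v ^ (-p - 1) * min v (v ^ 2)) := by fun_prop
  rw [← Set.Ioc_union_Ioi_eq_Ioi zero_le_one]
  refine IntegrableOn.union ?_ ?_
  · have h1 : IntegrableOn (fun v : ℝ => v ^ (1 - p)) (Set.Ioc 0 1) := by
      rw [← intervalIntegrable_iff_integrableOn_Ioc_of_le zero_le_one]
      exact intervalIntegral.intervalIntegrable_rpow' (by linarith)
    refine Integrable.mono' h1 hm.aestronglyMeasurable ?_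
    filter_upwards [ae_restrict_mem measurableSet_Ioc] with v hv
    have hv0 : 0 < v := hv.1
    rw [Real.norm_of_nonneg (by positivity)]
    have e : v ^ (1 - p) = v ^ (-p - 1) * v ^ 2 := by
      rw [← Real.rpow_natCast v 2, ← Real.rpow_add hv0]; congr 1; push_cast; ring
    rw [e]
    gcongr
    exact min_le_right _ _
  · have h1 : IntegrableOn (fun v : ℝ => v ^ (-p)) (Set.Ioi 1) :=
      integrableOn_Ioi_rpow_of_lt (by linarith) one_pos
    refine Integrable.mono' h1 hm.aestronglyMeasurable ?_
    filter_upwards [ae_restrict_mem measurableSet_Ioi] with v hv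
    have hv0 : 0 < v := lt_trans one_pos hv
    rw [Real.norm_of_nonneg (by positivity)]
    have e : v ^ (-p) = v ^ (-p - 1) * v := by
      nth_rewrite 3 [← Real.rpow_one v]
      rw [← Real.rpow_add hv0]; congr 1; ring
    rw [e]
    gcongr
    exact min_le_left _ _

lemma expH_bound {r : ℂ} (hr : 0 ≤ r.re) {v : ℝ} (hv : 0 < v) :
    ‖Complex.exp (-(r * v)) - 1 + r * v‖ ≤ 3 * (‖r‖ + ‖r‖ ^ 2) * min v (v ^ 2) := by
  have hz : 0 ≤ (r * v).re := by simp; positivity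
  have h1 := norm_expH_le hz
  have h2 := norm_expH_le_sq hz
  rw [norm_mul, Complex.norm_of_nonneg hv.le] at h1 h2
  have := norm_nonneg r
  rcases min_cases v (v ^ 2) with ⟨h, -⟩ | ⟨h, -⟩
  · rw [h]; refine h1.trans ?_
    nlinarith [mul_nonneg (sq_nonneg ‖r‖) hv.le]
  · rw [h]; refine h2.trans ?_
    nlinarith [mul_nonneg this (sq_nonneg v)]

lemma expH_integrable {p : ℝ} (hp : 1 < p) (hp2 : p < 2) {r : ℂ} (hr : 0 ≤ r.re) :
    IntegrableOn (fun v : ℝ => ((v ^ (-p - 1) : ℝ) : ℂ) *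
      (Complex.exp (-(r * v)) - 1 + r * v)) (Set.Ioi 0) := by
  have hm : Measurable (fun v : ℝ => ((v ^ (-p - 1) : ℝ) : ℂ) *
      (Complex.exp (-(r * v)) - 1 + r * v)) := by fun_prop
  refine Integrable.mono' ((min_rpow_integrable hp hp2).const_mul (3 * (‖r‖ + ‖r‖ ^ 2)))
    hm.aestronglyMeasurable ?_
  filter_upwards [ae_restrict_mem measurableSet_Ioi] with v hv
  have hv0 : 0 < v := hv
  rw [norm_mul, Complex.norm_of_nonneg (by positivity)]
  calc v ^ (-p - 1) * ‖Complex.exp (-(r * v)) - 1 + r * v‖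
      ≤ v ^ (-p - 1) * (3 * (‖r‖ + ‖r‖ ^ 2) * min v (v ^ 2)) := by
        gcongr; exact expH_bound hr hv0
    _ = _ := by ring

/-- Two integrations by parts reduce the compensated integral to the Laplace transform of
`v ^ (1 - p)`. -/
lemma integral_expH {p : ℝ} (hp : 1 < p) (hp2 : p < 2) {r : ℂ} (hr : 0 < r.re) :
    ∫ v in Set.Ioi (0:ℝ), ((v ^ (-p - 1) : ℝ) : ℂ) * (Complex.exp (-(r * v)) - 1 + r * v) =
      r ^ 2 / (p * (p - 1)) * ((Real.Gamma (2 - p) : ℂ) * r ^ (-((2 - p : ℝ) : ℂ))) := by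
  have hL := laplace_rpow (a := 2 - p) (by linarith) hr
  have hp0 : (p : ℂ) ≠ 0 := by exact_mod_cast (by linarith : p ≠ 0)
  have hp1 : (p : ℂ) - 1 ≠ 0 := by
    have : p - 1 ≠ 0 := by linarith
    exact_mod_cast this
  have hI2 : IntegrableOn (fun v : ℝ => r ^ 2 / (p * (p - 1)) *
      (((v ^ (2 - p - 1) : ℝ) : ℂ) * Complex.exp (-(r * v)))) (Set.Ioi 0) := by
    refine Integrable.const_mul ?_ _
    have hm : Measurable (fun v : ℝ =>
      (((v ^ (2 - p - 1) : ℝ) : ℂ) * Complex.exp (-(r * v)))) := by fun_prop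
    refine Integrable.mono' (exp_rpow_integrable (a := 2 - p) (by linarith) hr)
      hm.aestronglyMeasurable ?_
    filter_upwards [ae_restrict_mem measurableSet_Ioi] with v hv
    have hv0 : 0 < v := hv
    rw [norm_mul, Complex.norm_of_nonneg (by positivity), Complex.norm_exp]
    simp
  have hI1 := expH_integrable hp hp2 hr.le
  set G : ℝ → ℂ := fun v => -((Complex.exp (-(r * v)) - 1 + r * v) * ((v ^ (-p) : ℝ) : ℂ) / p)
    - r * (1 - Complex.exp (-(r * v))) * ((v ^ (1 - p) : ℝ) : ℂ) / (p * (p - 1)) with hG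
  have hG0 : G 0 = 0 := by simp [hG]
  have hder : ∀ v ∈ Set.Ioi (0:ℝ), HasDerivAt G
      (((v ^ (-p - 1) : ℝ) : ℂ) * (Complex.exp (-(r * v)) - 1 + r * v) -
        r ^ 2 / (p * (p - 1)) * (((v ^ (2 - p - 1) : ℝ) : ℂ) * Complex.exp (-(r * v)))) v := by
    intro v hv
    have hv0 : 0 < v := hv
    have d0 : HasDerivAt (fun v : ℝ => r * (v : ℂ)) r v := by
      simpa using (HasDerivAt.ofReal_comp (hasDerivAt_id v)).const_mul r
    have d1 : HasDerivAt (fun v : ℝ => Complex.exp (-(r * v)))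
        (Complex.exp (-(r * v)) * (-r)) v := d0.neg.cexp
    have d2 : HasDerivAt (fun v : ℝ => ((v ^ (-p) : ℝ) : ℂ))
        (((-p) * v ^ (-p - 1) : ℝ) : ℂ) v :=
      (Real.hasDerivAt_rpow_const (Or.inl hv0.ne')).ofReal_comp
    have d3 : HasDerivAt (fun v : ℝ => ((v ^ (1 - p) : ℝ) : ℂ))
        (((1 - p) * v ^ (1 - p - 1) : ℝ) : ℂ) v :=
      (Real.hasDerivAt_rpow_const (Or.inl hv0.ne')).ofReal_comp
    have d4 := ((((d1.sub_const 1).add d0).mul d2).div_const (p:ℂ)).neg.sub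
      ((((d1.const_sub 1).const_mul r).mul d3).div_const ((p:ℂ) * (p - 1)))
    refine d4.congr_deriv ?_
    have e1 : (1 - p - 1 : ℝ) = -p := by ring
    have e2 : (2 - p - 1 : ℝ) = 1 - p := by ring
    rw [e1, e2]
    push_cast
    simp only [Pi.add_apply]
    field_simp
    ring
  have hbd1 : ∀ v : ℝ, 0 < v → ‖G v‖ ≤ (3 * ‖r‖ / p + ‖r‖ * 2 / (p * (p - 1))) * v ^ (1 - p) := by
    intro v hv
    have hz : 0 ≤ (r * v).re := by simp; positivity
    have h1 := norm_expH_le hz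
    have h2 := norm_one_sub_exp_le_two hz
    rw [norm_mul r, Complex.norm_of_nonneg hv.le] at h1
    have e : v ^ (1 - p) = v * v ^ (-p) := by
      rw [Real.rpow_sub hv, Real.rpow_one, Real.rpow_neg hv.le]; rfl
    have hpp : 0 < p * (p - 1) := by nlinarith
    have n1 : ‖(p:ℂ)‖ = p := Complex.norm_of_nonneg (by linarith)
    have n2 : ‖(p:ℂ) * (p - 1)‖ = p * (p - 1) := by
      have := Complex.norm_of_nonneg hpp.le
      push_cast at this; exact this
    refine (norm_sub_le _ _).trans ?_
    rw [norm_neg, norm_div, norm_div, norm_mul, norm_mul, norm_mul, n1, n2,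
      Complex.norm_of_nonneg (r := v ^ (-p)) (by positivity),
      Complex.norm_of_nonneg (r := v ^ (1 - p)) (by positivity), add_mul]
    refine add_le_add ?_ ?_
    · rw [e, div_mul_eq_mul_div]
      refine div_le_div_of_nonneg_right ?_ (by linarith)
      calc _ ≤ 3 * (‖r‖ * v) * v ^ (-p) := by gcongr
        _ = _ := by ring
    · rw [div_mul_eq_mul_div]
      refine div_le_div_of_nonneg_right ?_ hpp.le
      gcongr
  have hbd2 : ∀ v : ℝ, 0 < v → ‖G v‖ ≤
      (3 * ‖r‖ ^ 2 / p + ‖r‖ * (2 * ‖r‖) / (p * (p - 1))) * v ^ (2 - p) := by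
    intro v hv
    have hz : 0 ≤ (r * v).re := by simp; positivity
    have h1 := norm_expH_le_sq hz
    have h2 := norm_one_sub_exp_le hz
    rw [norm_mul r, Complex.norm_of_nonneg hv.le] at h1 h2
    have e : v ^ (2 - p) = v ^ 2 * v ^ (-p) := by
      rw [Real.rpow_sub hv, Real.rpow_neg hv.le, Real.rpow_two]; rfl
    have e' : v ^ (2 - p) = v * v ^ (1 - p) := by
      rw [Real.rpow_sub hv, Real.rpow_sub hv, Real.rpow_one, Real.rpow_two]; ring
    have hpp : 0 < p * (p - 1) := by nlinarith
    have n1 : ‖(p:ℂ)‖ = p := Complex.norm_of_nonneg (by linarith)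
    have n2 : ‖(p:ℂ) * (p - 1)‖ = p * (p - 1) := by
      have := Complex.norm_of_nonneg hpp.le
      push_cast at this; exact this
    refine (norm_sub_le _ _).trans ?_
    rw [norm_neg, norm_div, norm_div, norm_mul, norm_mul, norm_mul, n1, n2,
      Complex.norm_of_nonneg (r := v ^ (-p)) (by positivity),
      Complex.norm_of_nonneg (r := v ^ (1 - p)) (by positivity), add_mul]
    refine add_le_add ?_ ?_
    · rw [e, div_mul_eq_mul_div]
      refine div_le_div_of_nonneg_right ?_ (by linarith)
      calc _ ≤ 3 * (‖r‖ * v) ^ 2 * v ^ (-p) := by gcongr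
        _ = _ := by ring
    · rw [div_mul_eq_mul_div, e']
      refine div_le_div_of_nonneg_right ?_ hpp.le
      calc _ ≤ ‖r‖ * (2 * (‖r‖ * v)) * v ^ (1 - p) := by gcongr
        _ = _ := by ring
  have hinf : Tendsto G atTop (𝓝 0) := by
    have h1 : Tendsto (fun v : ℝ => (3 * ‖r‖ / p + ‖r‖ * 2 / (p * (p - 1))) * v ^ (1 - p))
        atTop (𝓝 0) := by
      have := (tendsto_rpow_neg_atTop (y := p - 1) (by linarith)).const_mul
        (3 * ‖r‖ / p + ‖r‖ * 2 / (p * (p - 1)))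
      simpa using this
    refine squeeze_zero_norm' ?_ h1
    filter_upwards [eventually_gt_atTop 0] with v hv using hbd1 v hv
  have hzero : ContinuousWithinAt G (Set.Ici 0) 0 := by
    rw [ContinuousWithinAt, hG0]
    have h1 : Tendsto (fun v : ℝ => (3 * ‖r‖ ^ 2 / p + ‖r‖ * (2 * ‖r‖) / (p * (p - 1))) *
        v ^ (2 - p)) (𝓝[Set.Ici 0] 0) (𝓝 0) := by
      have : ContinuousAt (fun v : ℝ => (3 * ‖r‖ ^ 2 / p + ‖r‖ * (2 * ‖r‖) / (p * (p - 1))) *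
        v ^ (2 - p)) 0 :=
        continuousAt_const.mul (Real.continuousAt_rpow_const _ _ (Or.inr (by linarith)))
      have h2 := this.tendsto.mono_left (nhdsWithin_le_nhds (s := Set.Ici 0))
      simpa [Real.zero_rpow (by linarith : (2 - p) ≠ 0)] using h2
    refine squeeze_zero_norm' ?_ h1
    filter_upwards [self_mem_nhdsWithin] with v hv
    rcases eq_or_lt_of_le (show (0:ℝ) ≤ v from hv) with h | h
    · rw [← h, hG0]; simp [Real.zero_rpow (by linarith : (2 - p) ≠ 0)]
    · exact hbd2 v h
  have key := integral_Ioi_of_hasDerivAt_of_tendsto hzero hder (hI1.sub hI2) hinf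
  rw [hG0, sub_zero, integral_sub hI1 hI2, integral_const_mul, sub_eq_zero] at key
  rw [key, hL]

end LSV

/-! ### The stable exponent -/

namespace LSV

/-- The compensated oscillatory integral, as the boundary value of `integral_expH` at `r = -i`. -/
lemma integral_ee_comp {p : ℝ} (hp : 1 < p) (hp2 : p < 2) :
    ∫ v in Set.Ioi (0:ℝ), ((v ^ (-p - 1) : ℝ) : ℂ) * (ee v - 1 - Complex.I * v) =
      ((Real.Gamma (2 - p) / (p * (p - 1)) : ℝ) : ℂ) * Complex.exp (-(Complex.I * (p * π / 2 : ℝ))) := by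
  set r : ℕ → ℂ := fun n => ((1 / ((n:ℝ) + 1) : ℝ) : ℂ) - Complex.I with hr
  have hre : ∀ n, 0 < (r n).re := by
    intro n
    have : (0:ℝ) < 1 / ((n:ℝ) + 1) := by positivity
    simp only [hr, Complex.sub_re, Complex.ofReal_re, Complex.I_re, sub_zero]
    exact this
  have hrl : Tendsto r atTop (𝓝 (-Complex.I)) := by
    have h1 : Tendsto (fun n : ℕ => ((1 / ((n:ℝ) + 1) : ℝ) : ℂ)) atTop (𝓝 ((0:ℝ):ℂ)) :=
      (Complex.continuous_ofReal.tendsto _).comp tendsto_one_div_add_atTop_nhds_zero_nat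
    have := h1.sub_const Complex.I
    rw [Complex.ofReal_zero, zero_sub] at this
    exact this
  have hrn : ∀ n, ‖r n‖ ≤ 2 := by
    intro n
    have h1 : (1:ℝ) / ((n:ℝ) + 1) ≤ 1 := by
      rw [div_le_one (by positivity)]; linarith [(Nat.cast_nonneg n : (0:ℝ) ≤ n)]
    calc ‖r n‖ ≤ ‖((1 / ((n:ℝ) + 1) : ℝ) : ℂ)‖ + ‖Complex.I‖ := norm_sub_le _ _
      _ ≤ 2 := by
        rw [Complex.norm_of_nonneg (by positivity), Complex.norm_I]; linarith
  have hA : Tendsto (fun n => ∫ v in Set.Ioi (0:ℝ), ((v ^ (-p - 1) : ℝ) : ℂ) *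
      (Complex.exp (-(r n * v)) - 1 + r n * v)) atTop
      (𝓝 (∫ v in Set.Ioi (0:ℝ), ((v ^ (-p - 1) : ℝ) : ℂ) * (ee v - 1 - Complex.I * v))) := by
    refine tendsto_integral_of_dominated_convergence
      (fun v => 18 * (v ^ (-p - 1) * min v (v ^ 2))) ?_
      ((min_rpow_integrable hp hp2).const_mul 18) ?_ ?_
    · intro n
      exact (expH_integrable hp hp2 (hre n).le).aestronglyMeasurable
    · intro n
      filter_upwards [ae_restrict_mem measurableSet_Ioi] with v hv
      have hv0 : 0 < v := hv
      rw [norm_mul, Complex.norm_of_nonneg (by positivity)]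
      have h1 := expH_bound (hre n).le hv0
      have h2 : 3 * (‖r n‖ + ‖r n‖ ^ 2) ≤ 18 := by nlinarith [hrn n, norm_nonneg (r n)]
      have h3 : 0 ≤ min v (v ^ 2) := by positivity
      calc _ ≤ v ^ (-p - 1) * (18 * min v (v ^ 2)) := by
            gcongr; exact h1.trans (by gcongr)
        _ = _ := by ring
    · refine Eventually.of_forall fun v => ?_
      have hc : Continuous (fun z : ℂ => ((v ^ (-p - 1) : ℝ) : ℂ) *
        (Complex.exp (-(z * v)) - 1 + z * v)) := by fun_prop
      have := (hc.tendsto (-Complex.I)).comp hrl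
      have e : ((v ^ (-p - 1) : ℝ) : ℂ) * (Complex.exp (-(-Complex.I * v)) - 1 + -Complex.I * v) =
          ((v ^ (-p - 1) : ℝ) : ℂ) * (ee v - 1 - Complex.I * v) := by
        rw [ee, show -(-Complex.I * (v:ℂ)) = Complex.I * v by ring]; ring
      rw [e] at this
      exact this
  have hB : Tendsto (fun n => r n ^ 2 / (p * (p - 1)) *
      ((Real.Gamma (2 - p) : ℂ) * r n ^ (-((2 - p : ℝ) : ℂ)))) atTop
      (𝓝 ((-Complex.I) ^ 2 / (p * (p - 1)) *
      ((Real.Gamma (2 - p) : ℂ) * (-Complex.I) ^ (-((2 - p : ℝ) : ℂ))))) := by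
    have h1 : Tendsto (fun n => r n ^ (-((2 - p : ℝ) : ℂ))) atTop
        (𝓝 ((-Complex.I) ^ (-((2 - p : ℝ) : ℂ)))) := by
      have : ContinuousAt (fun z : ℂ => z ^ (-((2 - p : ℝ) : ℂ))) (-Complex.I) :=
        continuousAt_cpow_const (by right; simp)
      exact this.tendsto.comp hrl
    exact ((hrl.pow 2).div_const _).mul (h1.const_mul _)
  have hAB := tendsto_nhds_unique hA (hB.congr fun n => (integral_expH hp hp2 (hre n)).symm)
  rw [hAB, Complex.cpow_def_of_ne_zero (by simp), Complex.log_neg_I]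
  have e : Complex.exp (-(↑π / 2) * Complex.I * -((2 - p : ℝ) : ℂ)) =
      - Complex.exp (-(Complex.I * (p * π / 2 : ℝ))) := by
    have : -((π:ℂ) / 2) * Complex.I * -((2 - p : ℝ) : ℂ) =
      π * Complex.I + -(Complex.I * (p * π / 2 : ℝ)) := by push_cast; ring
    rw [this, Complex.exp_add, Complex.exp_pi_mul_I]; ring
  rw [e, neg_sq, Complex.I_sq]
  push_cast
  ring

/-- The scale constant of the limiting stable law before normalisation. -/
noncomputable def stabC (p : ℝ) : ℝ := -(Real.Gamma (2 - p) / (p - 1) * Real.cos (p * π / 2))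

lemma cos_neg_p {p : ℝ} (hp : 1 < p) (hp2 : p < 2) : Real.cos (p * π / 2) < 0 := by
  have := Real.pi_pos
  exact Real.cos_neg_of_pi_div_two_lt_of_lt (by nlinarith) (by nlinarith)

lemma stabC_pos {p : ℝ} (hp : 1 < p) (hp2 : p < 2) : 0 < stabC p := by
  have h1 := cos_neg_p hp hp2
  have h2 : 0 < Real.Gamma (2 - p) / (p - 1) :=
    div_pos (Real.Gamma_pos_of_pos (by linarith)) (by linarith)
  rw [stabC]
  nlinarith [mul_pos h2 (neg_pos.2 h1)]

/-- The substitution `v = y ^ (-σ)` turns `integral_ee_comp` with `p = 1 / σ` into this integral. -/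
lemma integral_ee_pow {σ : ℝ} (h1 : 1 / 2 < σ) (h2 : σ < 1) :
    ∫ y in Set.Ioi (0:ℝ), (ee (y ^ (-σ)) - 1 - Complex.I * ((y ^ (-σ) : ℝ) : ℂ)) =
      -(stabC (1 / σ) : ℂ) * (1 - Complex.I * ((Real.tan (1 / σ * π / 2) : ℝ) : ℂ)) := by
  have hσ : 0 < σ := by linarith
  set p : ℝ := 1 / σ with hp
  have hpσ : p * σ = 1 := by rw [hp]; field_simp
  have hp1 : 1 < p := by rw [hp, lt_div_iff₀ hσ]; linarith
  have hp2 : p < 2 := by rw [hp, div_lt_iff₀ hσ]; linarith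
  have hs := integral_comp_rpow_Ioi
    (fun y : ℝ => ee (y ^ (-σ)) - 1 - Complex.I * ((y ^ (-σ) : ℝ) : ℂ)) (p := -p) (by linarith)
  rw [← hs]
  have hJ := integral_ee_comp hp1 hp2
  have e : ∫ x in Set.Ioi (0:ℝ), (|(-p)| * x ^ (-p - 1)) •
      (ee ((x ^ (-p)) ^ (-σ)) - 1 - Complex.I * (((x ^ (-p)) ^ (-σ) : ℝ) : ℂ)) =
      ∫ v in Set.Ioi (0:ℝ), (p : ℂ) * (((v ^ (-p - 1) : ℝ) : ℂ) * (ee v - 1 - Complex.I * v)) := by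
    refine setIntegral_congr_fun measurableSet_Ioi fun v hv => ?_
    have hv0 : 0 < v := hv
    have e1 : (v ^ (-p)) ^ (-σ) = v := by
      rw [← Real.rpow_mul hv0.le, neg_mul_neg, hpσ, Real.rpow_one]
    simp only [e1, abs_neg, abs_of_pos (by linarith : 0 < p), Complex.real_smul]
    push_cast; ring
  rw [e, integral_const_mul, hJ]
  have hc := cos_neg_p hp1 hp2
  have e3 : Complex.exp (-(Complex.I * (p * π / 2 : ℝ))) =
      ((Real.cos (p * π / 2) : ℝ) : ℂ) - Complex.I * ((Real.sin (p * π / 2) : ℝ) : ℂ) := by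
    rw [show -(Complex.I * ((p * π / 2 : ℝ) : ℂ)) = ((-(p * π / 2) : ℝ) : ℂ) * Complex.I by
      push_cast; ring, Complex.exp_mul_I, ← Complex.ofReal_cos, ← Complex.ofReal_sin,
      Real.cos_neg, Real.sin_neg]
    push_cast; ring
  rw [e3, Real.tan_eq_sin_div_cos, stabC]
  have hc' : ((Real.cos (p * π / 2) : ℝ) : ℂ) ≠ 0 := by exact_mod_cast hc.ne
  have hp0 : (p : ℂ) ≠ 0 := by exact_mod_cast (by linarith : p ≠ 0)
  have hp1' : (p : ℂ) - 1 ≠ 0 := by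
    have : p - 1 ≠ 0 := by linarith
    exact_mod_cast this
  generalize Real.cos (p * π / 2) = C at hc' ⊢
  generalize Real.sin (p * π / 2) = S
  generalize Real.Gamma (2 - p) = Γ
  push_cast
  field_simp

lemma integral_ee_scaled_pos {σ : ℝ} (h1 : 1 / 2 < σ) (h2 : σ < 1) {a : ℝ} (ha : 0 < a) :
    ∫ y in Set.Ioi (0:ℝ), (ee (a * y ^ (-σ)) - 1 - Complex.I * ((a * y ^ (-σ) : ℝ) : ℂ)) =
      ((a ^ (1 / σ) : ℝ) : ℂ) *
      (-(stabC (1 / σ) : ℂ) * (1 - Complex.I * ((Real.tan (1 / σ * π / 2) : ℝ) : ℂ))) := by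
  have hσ : 0 < σ := by linarith
  have hb : 0 < a ^ (-(1 / σ)) := by positivity
  have := integral_comp_mul_left_Ioi
    (fun y : ℝ => ee (y ^ (-σ)) - 1 - Complex.I * ((y ^ (-σ) : ℝ) : ℂ)) 0 hb
  rw [mul_zero, integral_ee_pow h1 h2] at this
  rw [← Real.rpow_neg ha.le, neg_neg, Complex.real_smul] at this
  rw [← this]
  refine setIntegral_congr_fun measurableSet_Ioi fun v hv => ?_
  have hv0 : 0 < v := hv
  have e : (a ^ (-(1 / σ)) * v) ^ (-σ) = a * v ^ (-σ) := by
    rw [Real.mul_rpow hb.le hv0.le, ← Real.rpow_mul ha.le]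
    congr 1
    rw [show -(1 / σ) * -σ = 1 by field_simp, Real.rpow_one]
  simp only [e]

/-- The exponent of the stable law: the case of negative `t` follows from that of positive `t` by
complex conjugation. -/
lemma integral_ee_scaled {σ : ℝ} (h1 : 1 / 2 < σ) (h2 : σ < 1) {K : ℝ} (hK : 0 < K) (t : ℝ) :
    ∫ y in Set.Ioi (0:ℝ), (ee (t * (K * y ^ (-σ))) - 1 -
      Complex.I * ((t * (K * y ^ (-σ)) : ℝ) : ℂ)) =
      -((stabC (1 / σ) * K ^ (1 / σ) : ℝ) : ℂ) * ((|t| ^ (1 / σ) : ℝ) : ℂ) *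
        (1 - Complex.I * (1 : ℂ) * ((Real.sign t : ℝ) : ℂ) *
          ((Real.tan (1 / σ * π / 2) : ℝ) : ℂ)) := by
  have hσ : 0 < σ := by linarith
  rcases lt_trichotomy t 0 with ht | ht | ht
  · have h := integral_ee_scaled_pos h1 h2 (a := -t * K) (by nlinarith)
    have h' := congrArg (starRingEnd ℂ) h
    rw [← integral_conj] at h'
    have e : ∀ y : ℝ, (starRingEnd ℂ) (ee (-t * K * y ^ (-σ)) - 1 -
        Complex.I * ((-t * K * y ^ (-σ) : ℝ) : ℂ)) =
        ee (t * (K * y ^ (-σ))) - 1 - Complex.I * ((t * (K * y ^ (-σ)) : ℝ) : ℂ) := by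
      intro y
      simp only [ee, map_sub, map_one, map_mul, Complex.conj_I, Complex.conj_ofReal,
        ← Complex.exp_conj]
      have e1 : -Complex.I * ((-t * K * y ^ (-σ) : ℝ) : ℂ) =
          Complex.I * ((t * (K * y ^ (-σ)) : ℝ) : ℂ) := by push_cast; ring
      rw [e1]
    simp only [e] at h'
    rw [h', Real.sign_of_neg ht, abs_of_neg ht, Real.mul_rpow (by linarith) hK.le]
    simp only [map_sub, map_one, map_mul, map_neg, Complex.conj_I, Complex.conj_ofReal]
    push_cast
    ring
  · subst ht
    simp [ee_zero, Real.zero_rpow (inv_ne_zero hσ.ne')]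
  · have h := integral_ee_scaled_pos h1 h2 (a := t * K) (by positivity)
    simp only [mul_assoc t K] at h
    rw [h, Real.sign_of_pos ht, abs_of_pos ht, Real.mul_rpow ht.le hK.le]
    push_cast
    ring

end LSV

/-! ### The local contribution of the singularity -/

namespace LSV

lemma min_neg_rpow_integrable {σ : ℝ} (h1 : 1 / 2 < σ) (h2 : σ < 1) :
    IntegrableOn (fun y : ℝ => min (y ^ (-σ)) ((y ^ (-σ)) ^ 2)) (Set.Ioi 0) := by
  have hm : Measurable (fun y : ℝ => min (y ^ (-σ)) ((y ^ (-σ)) ^ 2)) := by fun_prop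
  rw [← Set.Ioc_union_Ioi_eq_Ioi zero_le_one]
  refine IntegrableOn.union ?_ ?_
  · have h1 : IntegrableOn (fun v : ℝ => v ^ (-σ)) (Set.Ioc 0 1) := by
      rw [← intervalIntegrable_iff_integrableOn_Ioc_of_le zero_le_one]
      exact intervalIntegral.intervalIntegrable_rpow' (by linarith)
    refine Integrable.mono' h1 hm.aestronglyMeasurable ?_
    filter_upwards [ae_restrict_mem measurableSet_Ioc] with v hv
    have hv0 : 0 < v := hv.1
    rw [Real.norm_of_nonneg (by positivity)]
    exact min_le_left _ _
  · have h1 : IntegrableOn (fun v : ℝ => v ^ (-(2 * σ))) (Set.Ioi 1) :=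
      integrableOn_Ioi_rpow_of_lt (by linarith) one_pos
    refine Integrable.mono' h1 hm.aestronglyMeasurable ?_
    filter_upwards [ae_restrict_mem measurableSet_Ioi] with v hv
    have hv0 : 0 < v := lt_trans one_pos hv
    rw [Real.norm_of_nonneg (by positivity)]
    have e : v ^ (-(2 * σ)) = (v ^ (-σ)) ^ 2 := by
      rw [← Real.rpow_natCast, ← Real.rpow_mul hv0.le]; congr 1; push_cast; ring
    rw [e]
    exact min_le_right _ _

/-- `ee` with its first-order Taylor polynomial removed. -/
noncomputable def eh (x : ℝ) : ℂ := ee x - 1 - Complex.I * (x : ℂ)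

lemma eh_cont : Continuous eh := by
  unfold eh
  exact (ee_cont.sub continuous_const).sub (continuous_const.mul Complex.continuous_ofReal)

lemma eh_le {x A w : ℝ} (hA : 0 ≤ A) (hw : 0 ≤ w) (h : |x| ≤ A * w) :
    ‖eh x‖ ≤ 2 * (A + A ^ 2) * min w (w ^ 2) := by
  have a1 := ee_sub_sub_le_two x
  have a2 := ee_sub_sub_le_sq x
  rcases min_cases w (w ^ 2) with ⟨e, -⟩ | ⟨e, -⟩ <;> rw [e]
  · refine a1.trans ?_
    nlinarith [mul_nonneg (sq_nonneg A) hw]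
  · refine a2.trans ?_
    have : |x| ^ 2 ≤ (A * w) ^ 2 := by gcongr
    nlinarith [mul_nonneg hA (sq_nonneg w)]

/-- Rescaling `x = y / n` turns the integral near the singularity into an integral over the
half-line, and only the value of the weight at `0` survives in the limit. -/
theorem tail_limit {σ τ K C : ℝ} (h1 : 1 / 2 < σ) (h2 : σ < 1) (hK : 0 < K) (hC : 0 ≤ C)
    (hτ : τ < σ) {F : ℝ → ℝ} (hF : Measurable F)
    (hFb : ∀ x ∈ Set.Ioc (0:ℝ) 1, |F x - K * x ^ (-σ)| ≤ C * x ^ (-τ))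
    {ρ : ℝ → ℝ} (hρ : ContinuousOn ρ (Set.Icc 0 1)) (t : ℝ) :
    Tendsto (fun n : ℕ => (n : ℂ) * ∫ x in Set.Ioc (0:ℝ) 1, (ρ x : ℂ) * eh (t / (n:ℝ) ^ σ * F x))
      atTop (𝓝 ((ρ 0 : ℂ) * ∫ y in Set.Ioi (0:ℝ), eh (t * (K * y ^ (-σ))))) := by
  obtain ⟨B, hB⟩ := isCompact_Icc.exists_bound_of_continuousOn hρ
  have hB0 : 0 ≤ B := (norm_nonneg _).trans (hB 0 ⟨le_rfl, zero_le_one⟩)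
  set A := |t| * (K + C) with hA
  have hA0 : 0 ≤ A := by positivity
  set G : ℕ → ℝ → ℂ := fun n => (Set.Ioc (0:ℝ) 1).indicator
    fun x => (ρ x : ℂ) * eh (t / (n:ℝ) ^ σ * F x) with hG
  have hGm : ∀ n, Measurable (G n) := by
    intro n
    have hρm : Measurable ((Set.Ioc (0:ℝ) 1).indicator ρ) := by
      have := (hρ.mono Set.Ioc_subset_Icc_self)
      rw [← Set.piecewise_eq_indicator]
      classical
      exact this.measurable_piecewise continuousOn_const measurableSet_Ioc
    have e : G n = fun x => (((Set.Ioc (0:ℝ) 1).indicator ρ x : ℝ) : ℂ) *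
        eh (t / (n:ℝ) ^ σ * F x) := by
      funext x
      by_cases hx : x ∈ Set.Ioc (0:ℝ) 1
      · simp only [hG, Set.indicator_of_mem hx]
      · simp only [hG, Set.indicator_of_notMem hx]; simp
    rw [e]
    exact (Complex.measurable_ofReal.comp hρm).mul
      (eh_cont.measurable.comp (hF.const_mul _))
  have hsub : ∀ n : ℕ, 1 ≤ n → (n : ℂ) * ∫ x in Set.Ioc (0:ℝ) 1,
      (ρ x : ℂ) * eh (t / (n:ℝ) ^ σ * F x) = ∫ y in Set.Ioi (0:ℝ), G n ((n:ℝ)⁻¹ * y) := by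
    intro n hn
    have hn0 : (0:ℝ) < n := by exact_mod_cast hn
    rw [integral_comp_mul_left_Ioi (G n) 0 (inv_pos.2 hn0), mul_zero, inv_inv, Complex.real_smul]
    congr 1
    rw [hG, setIntegral_indicator measurableSet_Ioc]
    congr 2
    ext x; simp
  have hscale : ∀ (n : ℕ) (y e : ℝ), 1 ≤ n → 0 < y →
      ((n:ℝ)⁻¹ * y) ^ (-e) = (n:ℝ) ^ e * y ^ (-e) := by
    intro n y e hn hy
    have hn0 : (0:ℝ) < n := by exact_mod_cast hn
    rw [Real.mul_rpow (by positivity) hy.le, Real.rpow_neg (by positivity),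
      Real.inv_rpow hn0.le, inv_inv]
  have hmem : ∀ (n : ℕ) (y : ℝ), 1 ≤ n → 0 < y → y ≤ n → (n:ℝ)⁻¹ * y ∈ Set.Ioc (0:ℝ) 1 := by
    intro n y hn hy hyn
    have hn0 : (0:ℝ) < n := by exact_mod_cast hn
    refine ⟨by positivity, ?_⟩
    rw [inv_mul_le_iff₀ hn0]; linarith
  have hmain : Tendsto (fun n : ℕ => ∫ y in Set.Ioi (0:ℝ), G n ((n:ℝ)⁻¹ * y)) atTop
      (𝓝 (∫ y in Set.Ioi (0:ℝ), (ρ 0 : ℂ) * eh (t * (K * y ^ (-σ))))) := by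
    refine tendsto_integral_filter_of_dominated_convergence
      (fun y => B * (2 * (A + A ^ 2)) * min (y ^ (-σ)) ((y ^ (-σ)) ^ 2)) ?_ ?_
      ((min_neg_rpow_integrable h1 h2).const_mul _) ?_
    · refine Eventually.of_forall fun n => ?_
      exact ((hGm n).comp (measurable_id.const_mul _)).aestronglyMeasurable
    · filter_upwards [eventually_ge_atTop 1] with n hn
      have hn0 : (0:ℝ) < n := by exact_mod_cast hn
      filter_upwards [ae_restrict_mem measurableSet_Ioi] with y hy
      have hy0 : 0 < y := hy
      by_cases hx : (n:ℝ)⁻¹ * y ∈ Set.Ioc (0:ℝ) 1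
      · simp only [hG, Set.indicator_of_mem hx]
        rw [norm_mul, Complex.norm_real, mul_assoc B]
        refine mul_le_mul (hB _ ⟨hx.1.le, hx.2⟩) ?_ (norm_nonneg _) hB0
        refine eh_le hA0 (by positivity) ?_
        set x := (n:ℝ)⁻¹ * y with hxd
        have b1 := hFb x hx
        have b2 : x ^ (-τ) ≤ x ^ (-σ) :=
          Real.rpow_le_rpow_of_exponent_ge hx.1 hx.2 (by linarith)
        have b3 : |F x| ≤ (K + C) * x ^ (-σ) := by
          have b4 : |F x| ≤ |F x - K * x ^ (-σ)| + |K * x ^ (-σ)| := by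
            simpa using abs_add_le (F x - K * x ^ (-σ)) (K * x ^ (-σ))
          have b5 : 0 < x ^ (-σ) := Real.rpow_pos_of_pos hx.1 _
          rw [abs_of_pos (by positivity : 0 < K * x ^ (-σ))] at b4
          nlinarith [mul_le_mul_of_nonneg_left b2 hC]
        have e1 : x ^ (-σ) = (n:ℝ) ^ σ * y ^ (-σ) := hscale n y σ hn hy0
        have hnσ : 0 < (n:ℝ) ^ σ := by positivity
        rw [abs_mul, abs_div, abs_of_pos hnσ]
        calc |t| / (n:ℝ) ^ σ * |F x| ≤ |t| / (n:ℝ) ^ σ * ((K + C) * x ^ (-σ)) := by gcongr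
          _ = A * y ^ (-σ) := by rw [e1, hA]; field_simp
      · simp only [hG, Set.indicator_of_notMem hx, norm_zero]
        positivity
    · filter_upwards [ae_restrict_mem measurableSet_Ioi] with y hy
      have hy0 : 0 < y := hy
      have hev : ∀ᶠ n : ℕ in atTop, 1 ≤ n ∧ y ≤ n := by
        filter_upwards [eventually_ge_atTop 1, eventually_ge_atTop ⌈y⌉₊] with n a b
        exact ⟨a, (Nat.le_ceil y).trans (by exact_mod_cast b)⟩
      have hx0 : Tendsto (fun n : ℕ => (n:ℝ)⁻¹ * y) atTop (𝓝 0) := by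
        simpa using (tendsto_inv_atTop_nhds_zero_nat (𝕜 := ℝ)).mul_const y
      have hρl : Tendsto (fun n : ℕ => ρ ((n:ℝ)⁻¹ * y)) atTop (𝓝 (ρ 0)) := by
        have := hρ 0 ⟨le_rfl, zero_le_one⟩
        refine this.tendsto.comp (tendsto_nhdsWithin_iff.2 ⟨hx0, ?_⟩)
        filter_upwards [hev] with n hn
        have := hmem n y hn.1 hy0 hn.2
        exact ⟨this.1.le, this.2⟩
      have hFl : Tendsto (fun n : ℕ => t / (n:ℝ) ^ σ * F ((n:ℝ)⁻¹ * y)) atTop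
          (𝓝 (t * (K * y ^ (-σ)))) := by
        have hz : Tendsto (fun n : ℕ => |t| * (C * y ^ (-τ)) * (n:ℝ) ^ (-(σ - τ))) atTop (𝓝 0) := by
          have := ((tendsto_rpow_neg_atTop (y := σ - τ) (by linarith)).comp
            (tendsto_natCast_atTop_atTop (R := ℝ))).const_mul (|t| * (C * y ^ (-τ)))
          simpa using this
        rw [tendsto_iff_norm_sub_tendsto_zero]
        refine squeeze_zero' (Eventually.of_forall fun n => norm_nonneg _) ?_ hz
        filter_upwards [hev] with n hn
        have hn0 : (0:ℝ) < n := by exact_mod_cast hn.1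
        have hnσ : 0 < (n:ℝ) ^ σ := by positivity
        have b1 := hFb _ (hmem n y hn.1 hy0 hn.2)
        rw [hscale n y σ hn.1 hy0, hscale n y τ hn.1 hy0] at b1
        have e1 : t / (n:ℝ) ^ σ * F ((n:ℝ)⁻¹ * y) - t * (K * y ^ (-σ)) =
            t / (n:ℝ) ^ σ * (F ((n:ℝ)⁻¹ * y) - K * ((n:ℝ) ^ σ * y ^ (-σ))) := by
          field_simp
        rw [e1, Real.norm_eq_abs, abs_mul, abs_div, abs_of_pos hnσ]
        calc _ ≤ |t| / (n:ℝ) ^ σ * (C * ((n:ℝ) ^ τ * y ^ (-τ))) := by gcongr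
          _ = _ := by
            rw [neg_sub, Real.rpow_sub hn0]; field_simp
      have := ((Complex.continuous_ofReal.tendsto _).comp hρl).mul
        ((eh_cont.tendsto _).comp hFl)
      refine this.congr' ?_
      filter_upwards [hev] with n hn
      simp only [hG, Set.indicator_of_mem (hmem n y hn.1 hy0 hn.2), Function.comp]
  rw [integral_const_mul] at hmain
  refine hmain.congr' ?_
  filter_upwards [eventually_ge_atTop 1] with n hn using (hsub n hn).symm

end LSV

/-! ### The limit theorem -/

namespace LSV

lemma one_add_pow_tendsto {k : ℕ → ℕ} {z : ℕ → ℂ} {L : ℂ} (hz : Tendsto z atTop (𝓝 0))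
    (h : Tendsto (fun n => (k n : ℂ) * z n) atTop (𝓝 L)) :
    Tendsto (fun n => (1 + z n) ^ k n) atTop (𝓝 (Complex.exp L)) := by
  have hsm : ∀ᶠ n in atTop, ‖z n‖ < 1 / 2 := by
    have := hz.norm
    rw [norm_zero] at this
    exact this.eventually_lt_const (by norm_num)
  have hd : Tendsto (fun n => (k n : ℂ) * (Complex.log (1 + z n) - z n)) atTop (𝓝 0) := by
    have hb : Tendsto (fun n => ‖(k n : ℂ) * z n‖ * ‖z n‖) atTop (𝓝 0) := by
      have := h.norm.mul hz.norm
      simpa using this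
    refine squeeze_zero_norm' ?_ hb
    filter_upwards [hsm] with n hn
    have h1 := Complex.norm_log_one_add_sub_self_le (z := z n) (by linarith)
    have h2 : (1 - ‖z n‖)⁻¹ ≤ 2 := by
      rw [inv_le_comm₀ (by linarith) (by norm_num)]; linarith
    rw [norm_mul, norm_mul, mul_assoc]
    refine mul_le_mul_of_nonneg_left (h1.trans ?_) (norm_nonneg _)
    nlinarith [mul_le_mul_of_nonneg_left h2 (sq_nonneg ‖z n‖)]
  have hl : Tendsto (fun n => (k n : ℂ) * Complex.log (1 + z n)) atTop (𝓝 L) := by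
    have := hd.add h
    rw [zero_add] at this
    refine this.congr fun n => by ring
  refine ((Complex.continuous_exp.tendsto L).comp hl).congr' ?_
  filter_upwards [hsm] with n hn
  have hne : 1 + z n ≠ 0 := by
    intro h0
    have : z n = -1 := by linear_combination h0
    rw [this, norm_neg, norm_one] at hn
    norm_num at hn
  simp only [Function.comp]
  rw [Complex.exp_nat_mul, Complex.exp_log hne]

section
variable {α β : ℝ} {m : Measure ℝ} {h : ℝ → ℝ}

/-- The value `rho h 0` is half the value of the invariant density on the right of `1/2`; it is
positive because functions in the cone are comparable to their mean. -/
lemma rho_zero_pos [IsProbabilityMeasure m] (hα : 0 < α ∧ α < 1) (h1 : m (Set.Ioc 0 1) = 1)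
    (hT : MeasurePreserving (lsv α) m m) (hh : ContinuousOn h (Set.Ioc 0 1))
    (hm : m = volume.withDensity fun x => ENNReal.ofReal (h x)) : 0 < rho h 0 := by
  have hcone := (rho_inv hα h1 hT hh hm).2
  have hmass := rho_mass hα h1 hT hh hm
  have hlow : ∀ x : Iu, Real.exp (-(fb hα).R) * ∫ y : Iu, rho h y ∂lam ≤ rho h x := by
    intro x
    have := ((fb hα).cone_le_integral (fb hα).R_pos.le hcone x).2
    calc _ ≤ Real.exp (-(fb hα).R) * (Real.exp (fb hα).R * rho h x) := by gcongr
      _ = rho h x := by rw [← mul_assoc, ← Real.exp_add]; simp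
  refine lt_of_lt_of_le (mul_pos (Real.exp_pos (-(fb hα).R)) hmass) ?_
  have hu : ∀ n : ℕ, (1:ℝ) / ((n:ℝ) + 1) ∈ Set.Ioc (0:ℝ) 1 := by
    intro n
    refine ⟨by positivity, ?_⟩
    rw [div_le_one (by positivity)]; linarith [(Nat.cast_nonneg n : (0:ℝ) ≤ n)]
  have hl : Tendsto (fun n : ℕ => rho h (1 / ((n:ℝ) + 1))) atTop (𝓝 (rho h 0)) := by
    refine (rho_cont hh 0 ⟨le_rfl, zero_le_one⟩).tendsto.comp (tendsto_nhdsWithin_iff.2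
      ⟨tendsto_one_div_add_atTop_nhds_zero_nat, Eventually.of_forall fun n => ?_⟩)
    exact ⟨(hu n).1.le, (hu n).2⟩
  exact ge_of_tendsto' hl fun n => hlow ⟨_, hu n⟩

lemma birk_coe (hα : 0 < α ∧ α < 1) (c : ℝ) (n : ℕ) (x : Iu) :
    birkhoffSum (lsv α) (fun y => y ^ (-β) + c) n x =
      birkhoffSum (Tu hα) (fun y => obs β y + c) n x := by
  have hit : ∀ k : ℕ, (lsv α)^[k] x = ((Tu hα)^[k] x : Iu) := by
    intro k
    induction k with
    | zero => rfl
    | succ k ih => rw [Function.iterate_succ_apply', Function.iterate_succ_apply', ih]; rfl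
  simp only [birkhoffSum, hit, obs]

lemma integral_mI [IsProbabilityMeasure m] (h1 : m (Set.Ioc 0 1) = 1) {E : Type*}
    [NormedAddCommGroup E] [NormedSpace ℝ E] (f : ℝ → E) :
    ∫ x, f x ∂m = ∫ x : Iu, f x ∂(mI m) := by
  conv_lhs => rw [← mI_map h1]
  exact (MeasurableEmbedding.subtype_coe measurableSet_Ioc).integral_map _

/-- The limit of the characteristic functions: `start`, `fixed_time` and `excursion` reduce them to
`lamc F (t / n ^ σ) ^ kn n`, and `tail_limit` gives `n * (lamc F (t / n ^ σ) - 1)` in the limit. -/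
theorem stable_law (hα : 0 < α ∧ α < 1) (hβ : 0 < β)
    (hαβ : 1 / 2 < α + β ∧ α + β < 1) [IsProbabilityMeasure m] (h1 : m (Set.Ioc 0 1) = 1)
    (hT : MeasurePreserving (lsv α) m m) (hh : ContinuousOn h (Set.Ioc 0 1))
    (hm : m = volume.withDensity fun x => ENNReal.ofReal (h x)) (t : ℝ) :
    Tendsto (fun n : ℕ => ∫ x : Iu, ee (t / (n:ℝ) ^ (α + β) *
        birkhoffSum (Tu hα) (fun y => obs β y + -∫ z : Iu, obs β z ∂(mI m)) n x) ∂(mI m)) atTop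
      (𝓝 (Complex.exp ((rho h 0 : ℂ) *
        ∫ y in Set.Ioi (0:ℝ), eh (t * (1 / (2 ^ α * (α + β)) * y ^ (-(α + β))))))) := by
  haveI := mI_prob h1
  set σ := α + β with hσ
  have hσ0 : 0 < σ := by linarith
  set Z := sys hα h1 hT hh hm with hZ
  set c := -∫ z : Iu, obs β z ∂(mI m) with hc
  set F : Iu → ℝ := (indu hα).ind (fun x => obs β x + c) with hF
  have hBL : Z.S.BL F := ind_obs_add_BL hα hβ hαβ.2 c
  have hBL0 : Z.S.BL ((indu hα).ind (obs β)) := ind_obs_BL hα hβ hαβ.2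
  have hg0 : ∀ x : Iu, 0 ≤ obs β x := fun x => (obs_pos x).le
  have hgi : Integrable (obs β) (mI m) := by
    refine ⟨obs_meas.aestronglyMeasurable, ?_⟩
    rw [hasFiniteIntegral_iff_ofReal (ae_of_all _ hg0),
      ← (indu hα).kac_ind (mI_pres h1 hα hT) obs_meas hg0,
      ← hasFiniteIntegral_iff_ofReal (ae_of_all _ ((indu hα).ind_nonneg hg0))]
    exact (Z.BL_integrable hBL0).2
  have hF0 : ∫ x, F x ∂Z.μ = 0 := by
    obtain ⟨a1, a2⟩ := (indu hα).kac_integrable (mI_pres h1 hα hT) obs_meas hg0 hgi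
    obtain ⟨b1, b2⟩ := (indu hα).kac_phi (mI_pres h1 hα hT)
    change ∫ x, F x ∂(indu hα).mu (mI m) = 0
    have e : ∀ x, F x = (indu hα).ind (obs β) x + c * (((indu hα).N x : ℝ) + 1) :=
      fun x => (indu hα).ind_add_const (obs β) c x
    simp only [e]
    rw [integral_add a1 (b1.const_mul c), integral_const_mul, a2, b2, hc]
    ring
  -- the moment exponent `q` lies strictly between `1/σ` and `min 2 (1/α)`
  obtain ⟨q, hq1, hq2⟩ := exists_between
    (show 1 / σ < min 2 (1 / α) from lt_min (by rw [div_lt_iff₀ hσ0]; linarith)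
      (one_div_lt_one_div_of_lt hα.1 (by linarith)))
  have hq2' : q ≤ 2 := hq2.le.trans (min_le_left _ _)
  have hqα : q * α < 1 := by
    have := hq2.trans_le (min_le_right _ _)
    rwa [lt_div_iff₀ hα.1] at this
  have hqσ : 1 < q * σ := by rwa [div_lt_iff₀ hσ0] at hq1
  have hq1' : 1 ≤ q := by
    have : 1 < 1 / σ := by rw [lt_div_iff₀ hσ0]; linarith
    linarith
  have hqi : Integrable (fun x => ((Z.D.N x : ℝ) + 1) ^ q) Z.μ :=
    Z.BL_integrable (N_pow_BL hα (by linarith) hqα)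
  have hM := Z.M_pos'
  have hkn : Tendsto (fun n : ℕ => (Z.kn n : ℝ) / n) atTop (𝓝 Z.M) := by
    have := (tendsto_nat_floor_mul_div_atTop (R := ℝ) hM.le).comp
      (tendsto_natCast_atTop_atTop (R := ℝ))
    refine this.congr fun n => ?_
    simp only [Function.comp, RenewalSys.kn, mul_comm]
  have hkn1 : Tendsto (fun n : ℕ => ((Z.kn n + 1 : ℕ) : ℝ) / n) atTop (𝓝 Z.M) := by
    have := hkn.add (tendsto_inv_atTop_nhds_zero_nat (𝕜 := ℝ))
    rw [add_zero] at this
    refine this.congr fun n => ?_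
    push_cast
    rw [add_div, one_div]
  have hrate : ∀ e : ℝ, 1 < e * σ →
      Tendsto (fun n : ℕ => ((Z.kn n + 1 : ℕ) : ℝ) / ((n:ℝ) ^ σ) ^ e) atTop (𝓝 0) := by
    intro e he
    have a1 := (tendsto_rpow_neg_atTop (y := e * σ - 1) (by linarith)).comp
      (tendsto_natCast_atTop_atTop (R := ℝ))
    have a2 := hkn1.mul a1
    rw [mul_zero] at a2
    refine a2.congr' ?_
    filter_upwards [eventually_ge_atTop 1] with n hn
    have hn0 : (0:ℝ) < n := by exact_mod_cast hn
    simp only [Function.comp]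
    rw [← Real.rpow_mul hn0.le, neg_sub, Real.rpow_sub hn0, Real.rpow_one, mul_comm σ e]
    field_simp
  have hrate2 : Tendsto (fun n : ℕ => ((Z.kn n + 1 : ℕ) : ℝ) / ((n:ℝ) ^ σ) ^ 2) atTop (𝓝 0) := by
    have := hrate 2 (by linarith)
    simpa only [Real.rpow_two] using this
  have ha : Tendsto (fun n : ℕ => (n:ℝ) ^ σ) atTop atTop :=
    (tendsto_rpow_atTop hσ0).comp tendsto_natCast_atTop_atTop
  have hs : Tendsto (fun n : ℕ => t / (n:ℝ) ^ σ) atTop (𝓝 0) := ha.const_div_atTop t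
  have hks : Tendsto (fun n : ℕ => (Z.kn n : ℝ) * (t / (n:ℝ) ^ σ) ^ 2) atTop (𝓝 0) := by
    have a1 := hrate2.const_mul (t ^ 2)
    have a2 := a1.sub (hs.pow 2)
    simp only [mul_zero, ne_eq, OfNat.ofNat_ne_zero, not_false_eq_true, zero_pow, sub_zero] at a2
    refine a2.congr fun n => ?_
    push_cast
    ring
  have s1 := Z.start (f := fun y => obs β y + c) (obs_meas.add_const c) hs
  have s2 := Z.fixed_time hq1' hq2' hqi ha (hrate q hqσ) hrate2 obs_meas hg0 hgi c t
  have s3 := Z.excursion hBL hs hks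
  obtain ⟨C, hC, hasy⟩ := ind_asymp hα hβ hαβ.2 c
  have hK : 0 < 1 / (2 ^ α * σ) := by positivity
  have hlim := tail_limit (σ := σ) (τ := max α β) hαβ.1 hαβ.2 hK hC
    (max_lt (by linarith) (by linarith [hα.1]))
    (F := ext1 F) (ext1_measurable hBL.1)
    (fun x hx => by
      have := hasy ⟨x, hx⟩
      have e := ext1_coe F ⟨x, hx⟩
      simp only at e this
      rw [e]; exact this)
    (rho_cont hh) t
  have hintg : ∀ s : ℝ, Z.lamc F s - 1 =
      (∫ x in Set.Ioc (0:ℝ) 1, (rho h x : ℂ) * eh (s * ext1 F x)) / Z.M := by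
    intro s
    rw [Z.lamc_sub_one_eq hBL hF0, Z.integral_μ]
    congr 1
    have := integral_subtype_comap (μ := (volume : Measure ℝ)) (measurableSet_Ioc (a := (0:ℝ)) (b := 1))
      (fun x : ℝ => (rho h x : ℂ) * eh (s * ext1 F x))
    rw [← this]
    refine integral_congr_ae (ae_of_all _ fun x => ?_)
    have e := ext1_coe F x
    simp only [Complex.real_smul, e]
    rfl
  set Lim : ℂ := (rho h 0 : ℂ) * ∫ y in Set.Ioi (0:ℝ), eh (t * (1 / (2 ^ α * σ) * y ^ (-σ)))
    with hLim
  have hMc : (Z.M : ℂ) ≠ 0 := by exact_mod_cast hM.ne'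
  have hnl : Tendsto (fun n : ℕ => (n:ℂ) * (Z.lamc F (t / (n:ℝ) ^ σ) - 1)) atTop
      (𝓝 (Lim / Z.M)) := by
    refine (hlim.div_const (Z.M : ℂ)).congr fun n => ?_
    rw [hintg, mul_div_assoc]
  have hkl : Tendsto (fun n : ℕ => (Z.kn n:ℂ) * (Z.lamc F (t / (n:ℝ) ^ σ) - 1)) atTop
      (𝓝 Lim) := by
    have hknc := (Complex.continuous_ofReal.tendsto _).comp hkn
    have a1 := hknc.mul hnl
    rw [mul_div_cancel₀ _ hMc] at a1
    refine a1.congr' ?_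
    filter_upwards [eventually_ge_atTop 1] with n hn
    have hn0 : (n:ℂ) ≠ 0 := by exact_mod_cast (by omega : n ≠ 0)
    simp only [Function.comp]
    push_cast
    field_simp
  have hz0 : Tendsto (fun n : ℕ => Z.lamc F (t / (n:ℝ) ^ σ) - 1) atTop (𝓝 0) := by
    have a0 : Tendsto (fun n : ℕ => ((n:ℂ))⁻¹) atTop (𝓝 0) := tendsto_inv_atTop_nhds_zero_nat
    have a1 := a0.mul hnl
    rw [zero_mul] at a1
    refine a1.congr' ?_
    filter_upwards [eventually_ge_atTop 1] with n hn
    have hn0 : (n:ℂ) ≠ 0 := by exact_mod_cast (by omega : n ≠ 0)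
    field_simp
  have hpow := one_add_pow_tendsto hz0 hkl
  have hall := ((s1.add s2).add s3).add hpow
  rw [zero_add, zero_add, zero_add] at hall
  refine hall.congr fun n => ?_
  have e1 : (1 + (Z.lamc F (t / (n:ℝ) ^ σ) - 1)) = Z.lamc F (t / (n:ℝ) ^ σ) := by ring
  rw [e1]
  have e2 : Z.D.ind (fun y => obs β y + c) = F := rfl
  rw [e2]
  have e3 : Z.D.T = Tu hα := rfl
  rw [e3]
  ring

end

end LSV

open LSV

/-- For the LSV map with `0 < α < 1`, `β > 0` and `1/2 < α + β < 1`, the centered unbounded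
observable `f(x) = x^{-β} - ∫ y^{-β} dm(y)` satisfies a stable limit theorem: there is
`c > 0` such that `S_n f / n^{α+β}` converges in distribution to the totally skewed stable
law `X_{1/(α+β), c, 1}`, stated via characteristic functions. -/
theorem lsv_unbounded_observable_stable_law (α β : ℝ) (hα : 0 < α ∧ α < 1) (hβ : 0 < β)
    (hαβ : 1 / 2 < α + β ∧ α + β < 1)
    (m : Measure ℝ) [IsProbabilityMeasure m]
    (hsupp : m (Set.Icc (0:ℝ) 1) = 1)
    (hT : MeasurePreserving (lsv α) m m)
    (h : ℝ → ℝ) (hh_cont : ContinuousOn h (Set.Ioc 0 1))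
    (hm : m = MeasureTheory.volume.withDensity fun x => ENNReal.ofReal (h x)) :
    ∃ c : ℝ, 0 < c ∧
      ∀ t : ℝ,
        Tendsto
          (fun n : ℕ => ∫ x, Complex.exp (Complex.I * (t : ℂ) *
            ((birkhoffSum (lsv α)
                (fun y => y ^ (-β) + -(∫ y, y ^ (-β) ∂m)) n x / (n : ℝ) ^ (α + β) : ℝ) : ℂ))
            ∂m) atTop
          (𝓝 (Complex.exp
            (-(c : ℂ) * ((|t| ^ (1 / (α + β)) : ℝ) : ℂ) *
              (1 - Complex.I * (1 : ℂ) * ((Real.sign t : ℝ) : ℂ) *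
                ((Real.tan ((1 / (α + β)) * π / 2) : ℝ) : ℂ))))) := by
  have h1 := m_Ioc hsupp hm
  have hσ0 : 0 < α + β := by linarith [hα.1]
  have hK : 0 < 1 / (2 ^ α * (α + β)) := by positivity
  have hρ := rho_zero_pos hα h1 hT hh_cont hm
  have hp1 : 1 < 1 / (α + β) := by rw [lt_div_iff₀ hσ0]; linarith
  have hp2 : 1 / (α + β) < 2 := by rw [div_lt_iff₀ hσ0]; linarith
  refine ⟨rho h 0 * (stabC (1 / (α + β)) * (1 / (2 ^ α * (α + β))) ^ (1 / (α + β))),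
    mul_pos hρ (mul_pos (stabC_pos hp1 hp2) (by positivity)), fun t => ?_⟩
  have key := stable_law hα hβ hαβ h1 hT hh_cont hm t
  have hL := integral_ee_scaled hαβ.1 hαβ.2 hK t
  have hobs : ∫ y, y ^ (-β) ∂m = ∫ z : Iu, obs β z ∂(mI m) := integral_mI h1 _
  simp only [eh] at key
  rw [hL] at key
  have e : ∀ a b : ℂ, (rho h 0 : ℂ) * (-((stabC (1 / (α + β)) * (1 / (2 ^ α * (α + β))) ^
      (1 / (α + β)) : ℝ) : ℂ) * a * b) = -((rho h 0 * (stabC (1 / (α + β)) *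
      (1 / (2 ^ α * (α + β))) ^ (1 / (α + β))) : ℝ) : ℂ) * a * b := by
    intro a b; push_cast; ring
  rw [e] at key
  refine key.congr fun n => ?_
  rw [hobs, integral_mI h1]
  refine integral_congr_ae (ae_of_all _ fun x => ?_)
  simp only [birk_coe hα, ee]
  congr 1
  push_cast
  ring
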